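/- Let p ∈ (1,∞) and let m be a Radon measure on ℝ^n with full support that is doubling (there is C_D > 0 with m(B_{2r}(x)) ≤ C_D·m(B_r(x)) for all x ∈ ℝ^n, r > 0) and satisfies a (1,p)-Poincaré inequality: there exist C > 0 and λ ≥ 1 such that for every Lipschitz function f : ℝ^n → ℝ, every x ∈ ℝ^n and r > 0, ⨍_{B_r(x)} |f − ⨍_{B_r(x)} f dm| dm ≤ C·r·( ⨍_{B_{λr}(x)} (lip f)^p dm )^{1/p}. Then m is absolutely continuous with respect to the Lebesgue measure on ℝ^n. -/

import Mathlib

open MeasureTheory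
open scoped ENNReal NNReal

/-- The local Lipschitz constant (slope) `lip f (x) = limsup_{y → x} |f y - f x| / d(y,x)`,
equal to `0` at isolated points. -/
noncomputable def lip {M : Type*} [PseudoMetricSpace M] (f : M → ℝ) (x : M) : ℝ :=
  Filter.limsup (fun y => |f y - f x| / dist y x) (nhdsWithin x {x}ᶜ)

/-!
By the Poincaré inequality and doubling, the gradient is closable as an operator from `L¹(m)` to
`Lᵖ(m)` on every ball, so by duality the vector fields with bounded weak divergence are dense in
`L¹`. Restricting `m` to a ball to obtain a finite measure `μ`, one finds a field of frames `V` as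
close in `L¹(μ)` as desired to a constant orthonormal frame `I`, with divergences bounded by some
multiple of `μ`. Let `u` and `w` be the heat extensions of `μ` and `V μ` to the upper half-space.
The divergence bound restricts the spatial derivatives of `(u, w)` to directions along which the
Bellman function `u (1 - (1 + u)^(-κ)) η(w / u) - c √(u² + |w|²)`, where `η` is a cutoff around
`I`, is concave up to an error of order `κ u`. Hence, up to such an error, the integral over the
slice at height `t` of the Bellman function is nondecreasing in `t`. Let `κ → 0` at a fixed small
height `T`: the first term of the integral at `T` vanishes, because `u` is bounded there. At lower
heights `u` is large near any Lebesgue null set `S`, and the first term is at least of the order of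
`μ(S) - 4 ‖V - I‖₁`. The second term hardly changes, because the total variation of the flow is
bounded, so that `T` may be chosen close to its supremum. Therefore `μ(S) ≤ 4 ‖V - I‖₁`, and
`μ(S) = 0`.
-/

open Filter Metric Module Topology
open scoped RealInnerProductSpace

section HahnBanach

variable {Z : Type*} [NormedAddCommGroup Z] [NormedSpace ℝ Z] {D : Submodule ℝ Z}

lemma exists_dual_eq_zero_of_notMem_closure {z : Z} (hz : z ∉ closure (D : Set Z)) :
    ∃ f : StrongDual ℝ Z, (∀ d ∈ D, f d = 0) ∧ f z ≠ 0 := by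
  obtain ⟨f, u, hfz, hu⟩ :=
    geometric_hahn_banach_point_closed D.convex.closure isClosed_closure hz
  have hu0 : u < 0 := by simpa using hu 0 (subset_closure D.zero_mem)
  refine ⟨f, fun d hd ↦ ?_, (hfz.trans hu0).ne⟩
  by_contra hne
  have := hu ((u / f d) • d) (subset_closure (D.smul_mem _ hd))
  rw [map_smul, smul_eq_mul, div_mul_cancel₀ _ hne] at this
  exact lt_irrefl _ this

lemma dense_of_forall_dual_eq_zero
    (h : ∀ f : StrongDual ℝ Z, (∀ d ∈ D, f d = 0) → f = 0) : Dense (D : Set Z) := by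
  intro z
  by_contra hz
  obtain ⟨f, hf, hfz⟩ := exists_dual_eq_zero_of_notMem_closure hz
  exact hfz (by simp [h f hf])

end HahnBanach

section LpDuality

variable {X E Z T : Type*} [MeasurableSpace X] {μ : Measure X} [IsFiniteMeasure μ]
  [NormedAddCommGroup E] {p : ℝ≥0∞}

lemma sum_indicatorConstLp {ι : Type*} {s : ι → Set X} (hs : ∀ i, MeasurableSet (s i))
    (hd : Pairwise (Function.onFun Disjoint s)) (c : E) (t : Finset ι) :
    ∑ i ∈ t, indicatorConstLp p (hs i) (measure_ne_top μ (s i)) c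
      = indicatorConstLp p (t.measurableSet_biUnion fun i _ ↦ hs i)
          (measure_ne_top μ (⋃ i ∈ t, s i)) c := by
  classical
  induction t using Finset.induction_on with
  | empty => simp
  | insert a t ha ih =>
    rw [Finset.sum_insert ha, ih, ← indicatorConstLp_disjoint_union]
    · simp only [Finset.set_biUnion_insert]
    · rw [Set.disjoint_iUnion₂_right]
      exact fun i hi ↦ hd fun h ↦ ha (h ▸ hi)

/-- The inclusion `L∞ ⊆ Lᵖ` over a finite measure. -/
noncomputable def lpOfTop [NormedSpace ℝ E] (p : ℝ≥0∞) (μ : Measure X) [IsFiniteMeasure μ] :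
    Lp E ∞ μ →ₗ[ℝ] Lp E p μ where
  toFun f := ⟨f, Lp.antitone le_top f.2⟩
  map_add' _ _ := rfl
  map_smul' _ _ := rfl

lemma coe_lpOfTop [NormedSpace ℝ E] (f : Lp E ∞ μ) : (lpOfTop p μ f : X → E) = f := rfl

lemma ae_norm_le_norm_lpTop {μ : Measure X} (f : Lp E ∞ μ) : ∀ᵐ x ∂μ, ‖f x‖ ≤ ‖f‖ := by
  filter_upwards [ae_le_eLpNormEssSup (f := f) (μ := μ)] with x hx
  rw [Lp.norm_def, eLpNorm_exponent_top, ← toReal_enorm]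
  exact ENNReal.toReal_mono (Lp.eLpNorm_ne_top f) hx

lemma memLp_top_of_abs_setIntegral_le {v : X → ℝ} {K : ℝ} (hv : Integrable v μ)
    (h : ∀ S, MeasurableSet S → |∫ x in S, v x ∂μ| ≤ K * μ.real S) : MemLp v ∞ μ := by
  have hupper : ∀ᵐ x ∂μ, v x ≤ K :=
    ae_le_of_forall_setIntegral_le hv (integrable_const _) fun S hS _ ↦ by
      rw [setIntegral_const, smul_eq_mul, mul_comm]
      exact (abs_le.1 (h S hS)).2
  have hlower : ∀ᵐ x ∂μ, -K ≤ v x :=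
    ae_le_of_forall_setIntegral_le (integrable_const _) hv fun S hS _ ↦ by
      rw [setIntegral_const, smul_eq_mul, mul_neg, mul_comm]
      exact (abs_le.1 (h S hS)).1
  refine memLp_top_of_bound hv.1 K ?_
  filter_upwards [hupper, hlower] with x h₁ h₂ using abs_le.2 ⟨h₂, h₁⟩

variable [Fact (1 ≤ p)]

lemma hasSum_indicatorConstLp_iUnion (hp : p ≠ ∞) {s : ℕ → Set X}
    (hs : ∀ i, MeasurableSet (s i)) (hd : Pairwise (Function.onFun Disjoint s)) (c : E) :
    HasSum (fun i ↦ indicatorConstLp p (hs i) (measure_ne_top μ (s i)) c)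
      (indicatorConstLp p (MeasurableSet.iUnion hs) (measure_ne_top μ _) c) := by
  unfold HasSum
  simp_rw [sum_indicatorConstLp hs hd]
  apply tendsto_indicatorConstLp_set hp
  have hmeas (t : Finset ℕ) : MeasurableSet ((⋃ i, s i) \ ⋃ i ∈ t, s i) :=
    (MeasurableSet.iUnion hs).diff (t.measurableSet_biUnion fun i _ ↦ hs i)
  have hempty : ⋂ t : Finset ℕ, (⋃ i, s i) \ ⋃ i ∈ t, s i = ∅ := by
    refine Set.eq_empty_of_forall_notMem fun x hx ↦ ?_
    simp only [Set.mem_iInter, Set.mem_sdiff, Set.mem_iUnion] at hx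
    obtain ⟨i, hi⟩ := (hx ∅).1
    exact (hx {i}).2 ⟨i, by simp, hi⟩
  have hlim : Tendsto (fun t : Finset ℕ ↦ μ ((⋃ i, s i) \ ⋃ i ∈ t, s i)) atTop (𝓝 0) := by
    simpa only [hempty, measure_empty, Function.comp_def] using
      tendsto_measure_iInter_atTop (μ := μ) (fun t ↦ (hmeas t).nullMeasurableSet)
        (fun a b hab ↦ Set.sdiff_subset_sdiff_right (Set.biUnion_subset_biUnion_left hab))
        ⟨∅, measure_ne_top μ _⟩
  refine hlim.congr fun t ↦ ?_
  rw [Set.symmDiff_def, Set.sdiff_eq_empty.2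
    (Set.iUnion₂_subset fun i _ ↦ Set.subset_iUnion s i), Set.empty_union]

open Classical in
/-- The signed measure `S ↦ l (1_S)` induced by a functional `l` on `Lᵖ`; the Radon-Nikodym
derivative of this measure represents `l`. -/
noncomputable def indicatorSignedMeasure (hp : p ≠ ∞) (l : StrongDual ℝ (Lp ℝ p μ)) :
    SignedMeasure X where
  measureOf' S := if hS : MeasurableSet S then
    l (indicatorConstLp p hS (measure_ne_top μ S) 1) else 0
  empty' := by simp
  not_measurable' S hS := by simp [hS]
  m_iUnion' s hs hd := by
    simpa [hs, MeasurableSet.iUnion hs] using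
      (hasSum_indicatorConstLp_iUnion hp hs hd (1 : ℝ)).mapL l

lemma indicatorSignedMeasure_apply (hp : p ≠ ∞) (l : StrongDual ℝ (Lp ℝ p μ)) {S : Set X}
    (hS : MeasurableSet S) :
    indicatorSignedMeasure hp l S = l (indicatorConstLp p hS (measure_ne_top μ S) 1) :=
  dif_pos hS

lemma indicatorSignedMeasure_absolutelyContinuous (hp : p ≠ ∞)
    (l : StrongDual ℝ (Lp ℝ p μ)) :
    indicatorSignedMeasure hp l ≪ᵥ μ.toENNRealVectorMeasure := by
  refine VectorMeasure.AbsolutelyContinuous.mk fun S hS hμS ↦ ?_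
  rw [Measure.toENNRealVectorMeasure_apply_measurable hS] at hμS
  have hzero : indicatorConstLp p hS (measure_ne_top μ S) (1 : ℝ) = 0 := by
    rw [← norm_le_zero_iff]
    refine norm_indicatorConstLp_le.trans ?_
    have hp0 : p.toReal ≠ 0 :=
      ENNReal.toReal_ne_zero.2 ⟨(one_pos.trans_le Fact.out).ne', hp⟩
    simp [measureReal_def, hμS, hp0]
  rw [indicatorSignedMeasure_apply hp l hS, hzero, map_zero]

lemma exists_integrable_setIntegral_eq_dual_indicator (hp : p ≠ ∞)
    (l : StrongDual ℝ (Lp ℝ p μ)) :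
    ∃ v : X → ℝ, Integrable v μ ∧ ∀ (S : Set X) (hS : MeasurableSet S),
      ∫ x in S, v x ∂μ = l (indicatorConstLp p hS (measure_ne_top μ S) 1) := by
  refine ⟨(indicatorSignedMeasure hp l).rnDeriv μ, SignedMeasure.integrable_rnDeriv _ μ,
    fun S hS ↦ ?_⟩
  rw [← withDensityᵥ_apply (SignedMeasure.integrable_rnDeriv _ μ) hS,
    (SignedMeasure.absolutelyContinuous_iff_withDensityᵥ_rnDeriv_eq _ μ).1
      (indicatorSignedMeasure_absolutelyContinuous hp l), indicatorSignedMeasure_apply hp l hS]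

lemma dual_simpleFunc_eq_integral {l : StrongDual ℝ (Lp ℝ p μ)} {v : X → ℝ}
    (hv : Integrable v μ) (hvl : ∀ (S : Set X) (hS : MeasurableSet S),
      ∫ x in S, v x ∂μ = l (indicatorConstLp p hS (measure_ne_top μ S) 1))
    (g : SimpleFunc X ℝ) :
    l ((g.memLp_of_isFiniteMeasure p μ).toLp g) = ∫ x, v x * g x ∂μ := by
  have hint (g : SimpleFunc X ℝ) : Integrable (fun x ↦ v x * g x) μ :=
    let ⟨_, hC⟩ := g.exists_forall_norm_le
    hv.mul_bdd g.aestronglyMeasurable (.of_forall hC)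
  induction g using SimpleFunc.induction with
  | @const c S hS =>
    have hsmul : ((SimpleFunc.piecewise S hS (.const X c) (.const X 0)).memLp_of_isFiniteMeasure
        p μ).toLp _ = c • indicatorConstLp p hS (measure_ne_top μ S) (1 : ℝ) := by
      rw [indicatorConstLp, ← MemLp.toLp_const_smul]
      refine MemLp.toLp_congr _ _ (.of_forall fun x ↦ ?_)
      by_cases hx : x ∈ S <;> simp [hx]
    rw [hsmul, map_smul, ← hvl S hS, ← integral_indicator hS, smul_eq_mul, ← integral_const_mul]
    congr 1 with x
    by_cases hx : x ∈ S <;> simp [hx, mul_comm]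
  | @add f g _ hf hg =>
    have hadd : ((f + g).memLp_of_isFiniteMeasure p μ).toLp _
        = (f.memLp_of_isFiniteMeasure p μ).toLp f + (g.memLp_of_isFiniteMeasure p μ).toLp g := by
      rw [← MemLp.toLp_add]; rfl
    rw [hadd, map_add, hf, hg, ← integral_add (hint f) (hint g)]
    simp only [SimpleFunc.coe_add, Pi.add_apply, mul_add]

lemma tendsto_toLp_approxBounded (hp : p ≠ ∞) {f : X → ℝ} (hf : StronglyMeasurable f) {c : ℝ}
    (hfc : ∀ᵐ x ∂μ, ‖f x‖ ≤ c) (hc : 0 ≤ c) :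
    Tendsto (fun n ↦ ((hf.approxBounded c n).memLp_of_isFiniteMeasure p μ).toLp _) atTop
      (𝓝 ((MemLp.of_bound hf.aestronglyMeasurable c hfc).toLp f)) := by
  rw [Lp.tendsto_Lp_iff_tendsto_eLpNorm'']
  refine tendsto_Lp_finite_of_tendsto_ae Fact.out hp
    (fun n ↦ (hf.approxBounded c n).aestronglyMeasurable)
    (MemLp.of_bound hf.aestronglyMeasurable c hfc) (fun ε hε ↦ ?_)
    (hf.tendsto_approxBounded_ae hfc)
  obtain ⟨δ, hδ, h⟩ := unifIntegrable_const (ι := ℕ) Fact.out hp (memLp_const (μ := μ) c) hε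
  refine ⟨δ, hδ, fun n S hS hμS ↦ (eLpNorm_mono fun x ↦ ?_).trans (h n S hS hμS)⟩
  by_cases hx : x ∈ S
  · simpa only [hx, Set.indicator_of_mem, Real.norm_of_nonneg hc]
      using hf.norm_approxBounded_le hc n x
  · simp [hx]

lemma exists_lpOne_dual_lpOfTop_eq_integral (hp : p ≠ ∞) (l : StrongDual ℝ (Lp ℝ p μ)) :
    ∃ v : Lp ℝ 1 μ, ∀ f : Lp ℝ ∞ μ, l (lpOfTop p μ f) = ∫ x, v x * f x ∂μ := by
  obtain ⟨v, hv, hvl⟩ := exists_integrable_setIntegral_eq_dual_indicator hp l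
  refine ⟨(memLp_one_iff_integrable.2 hv).toLp v, fun f ↦ ?_⟩
  have hf : StronglyMeasurable f := Lp.stronglyMeasurable f
  have hfc := ae_norm_le_norm_lpTop f
  have hlim : Tendsto (fun n ↦ ∫ x, v x * hf.approxBounded ‖f‖ n x ∂μ) atTop
      (𝓝 (∫ x, v x * f x ∂μ)) := by
    refine tendsto_integral_of_dominated_convergence (fun x ↦ ‖v x‖ * ‖f‖)
      (fun n ↦ hv.1.mul (hf.approxBounded ‖f‖ n).aestronglyMeasurable)
      (hv.norm.mul_const _) (fun n ↦ .of_forall fun x ↦ ?_) ?_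
    · rw [norm_mul]
      gcongr
      exact hf.norm_approxBounded_le (norm_nonneg f) n x
    · filter_upwards [hf.tendsto_approxBounded_ae hfc] with x hx using hx.const_mul _
  have hlim' := (l.continuous.tendsto _).comp
    (tendsto_toLp_approxBounded (p := p) hp hf hfc (norm_nonneg f))
  have hcoe : lpOfTop p μ f = (MemLp.of_bound hf.aestronglyMeasurable ‖f‖ hfc).toLp f :=
    Lp.ext ((MemLp.coeFn_toLp _).symm)
  rw [hcoe, tendsto_nhds_unique hlim' (hlim.congr fun n ↦
    (dual_simpleFunc_eq_integral hv hvl (hf.approxBounded ‖f‖ n)).symm)]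
  refine integral_congr_ae ?_
  filter_upwards [MemLp.coeFn_toLp (memLp_one_iff_integrable.2 hv)] with x hx
  rw [hx]

lemma exists_lpTop_dual_eq_integral (l : StrongDual ℝ (Lp ℝ 1 μ)) :
    ∃ v : Lp ℝ ∞ μ, ∀ f : Lp ℝ 1 μ, l f = ∫ x, v x * f x ∂μ := by
  obtain ⟨v, hv, hvl⟩ := exists_integrable_setIntegral_eq_dual_indicator ENNReal.one_ne_top l
  have hvtop : MemLp v ∞ μ := memLp_top_of_abs_setIntegral_le (K := ‖l‖) hv fun S hS ↦ by
    rw [hvl S hS]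
    refine (l.le_opNorm _).trans_eq ?_
    rw [norm_indicatorConstLp one_ne_zero ENNReal.one_ne_top]
    simp
  let pairing : StrongDual ℝ (Lp ℝ 1 μ) :=
    (ContinuousLinearMap.mul ℝ ℝ).lpPairing μ ∞ 1 (hvtop.toLp v)
  have hpairing (f : Lp ℝ 1 μ) : pairing f = ∫ x, hvtop.toLp v x * f x ∂μ :=
    ContinuousLinearMap.lpPairing_eq_integral _ _ _
  have hsimple (g : Lp.simpleFunc ℝ 1 μ) : l g = pairing g := by
    rw [hpairing, ← Lp.simpleFunc.toLp_toSimpleFunc g]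
    refine (dual_simpleFunc_eq_integral hv hvl (Lp.simpleFunc.toSimpleFunc g)).trans
      (integral_congr_ae ?_)
    filter_upwards [hvtop.coeFn_toLp, ((Lp.simpleFunc.toSimpleFunc g).memLp_of_isFiniteMeasure
      1 μ).coeFn_toLp] with x h₁ h₂
    rw [h₁, h₂]
  have hl : ⇑l = pairing := (Lp.simpleFunc.denseRange ENNReal.one_ne_top).equalizer
    l.continuous pairing.continuous (funext hsimple)
  exact ⟨hvtop.toLp v, fun f ↦ by rw [hl, hpairing]⟩

section InnerProductSpace

variable [InnerProductSpace ℝ E] [FiniteDimensional ℝ E]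

/-- The `i`-th coordinate of a functional on `E`-valued functions, in the standard
orthonormal basis of `E`. -/
noncomputable def dualCoord (l : StrongDual ℝ (Lp E p μ)) (i : Fin (finrank ℝ E)) :
    StrongDual ℝ (Lp ℝ p μ) :=
  l ∘L (ContinuousLinearMap.toSpanSingleton ℝ (stdOrthonormalBasis ℝ E i)).compLpL p μ

omit [IsFiniteMeasure μ] in
lemma dual_apply_eq_sum_dualCoord (l : StrongDual ℝ (Lp E p μ)) (f : Lp E p μ) :
    l f = ∑ i, dualCoord l i ((innerSL ℝ (stdOrthonormalBasis ℝ E i)).compLp f) := by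
  simp only [dualCoord, ContinuousLinearMap.comp_apply, ← map_sum]
  congr 1
  refine Lp.ext ?_
  have hcomp (i : Fin (finrank ℝ E)) := ContinuousLinearMap.coeFn_compLpL (p := p)
    (ContinuousLinearMap.toSpanSingleton ℝ (stdOrthonormalBasis ℝ E i))
    ((innerSL ℝ (stdOrthonormalBasis ℝ E i)).compLp f)
  have hinner (i : Fin (finrank ℝ E)) :=
    (innerSL ℝ (stdOrthonormalBasis ℝ E i)).coeFn_compLp f
  filter_upwards [Lp.coeFn_finsetSum Finset.univ fun i ↦ (ContinuousLinearMap.toSpanSingleton ℝ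
    (stdOrthonormalBasis ℝ E i)).compLpL p μ ((innerSL ℝ (stdOrthonormalBasis ℝ E i)).compLp f),
    ae_all_iff.2 hcomp, ae_all_iff.2 hinner] with x hsum hcomp hinner
  rw [hsum, Finset.sum_apply]
  simp_rw [hcomp, hinner]
  simp [(stdOrthonormalBasis ℝ E).sum_repr' (f x)]

omit [IsFiniteMeasure μ] [Fact (1 ≤ p)] [FiniteDimensional ℝ E] in
lemma integral_inner_sum_toSpanSingleton {ι : Type*} [Fintype ι] {q : ℝ≥0∞}
    [ENNReal.HolderConjugate p q] (b : ι → E) (v : ι → Lp ℝ p μ) (f : Lp E q μ) :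
    ∫ x, ⟪(∑ i, (ContinuousLinearMap.toSpanSingleton ℝ (b i)).compLp (v i) : Lp E p μ) x, f x⟫ ∂μ
      = ∑ i, ∫ x, v i x * (innerSL ℝ (b i)).compLp f x ∂μ := by
  have hint (i : ι) : Integrable (fun x ↦ v i x * (innerSL ℝ (b i)).compLp f x) μ :=
    (Lp.memLp (v i)).integrable_mul (Lp.memLp _)
  rw [← integral_finsetSum _ fun i _ ↦ hint i]
  refine integral_congr_ae ?_
  have hspan (i : ι) := (ContinuousLinearMap.toSpanSingleton ℝ (b i)).coeFn_compLp (v i)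
  have hinner (i : ι) := (innerSL ℝ (b i)).coeFn_compLp f
  filter_upwards [Lp.coeFn_finsetSum Finset.univ fun i ↦
    (ContinuousLinearMap.toSpanSingleton ℝ (b i)).compLp (v i),
    ae_all_iff.2 hspan, ae_all_iff.2 hinner] with x hsum hspan hinner
  rw [hsum, Finset.sum_apply, sum_inner]
  refine Finset.sum_congr rfl fun i _ ↦ ?_
  rw [hspan, hinner, ContinuousLinearMap.toSpanSingleton_apply, real_inner_smul_left,
    innerSL_apply_apply]

lemma exists_lpOne_dual_lpOfTop_eq_integral_inner (hp : p ≠ ∞) (l : StrongDual ℝ (Lp E p μ)) :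
    ∃ v : Lp E 1 μ, ∀ f : Lp E ∞ μ, l (lpOfTop p μ f) = ∫ x, ⟪v x, f x⟫ ∂μ := by
  choose v hv using fun i ↦ exists_lpOne_dual_lpOfTop_eq_integral hp (dualCoord l i)
  refine ⟨∑ i, (ContinuousLinearMap.toSpanSingleton ℝ (stdOrthonormalBasis ℝ E i)).compLp (v i),
    fun f ↦ ?_⟩
  rw [integral_inner_sum_toSpanSingleton (stdOrthonormalBasis ℝ E) v f,
    dual_apply_eq_sum_dualCoord]
  refine Finset.sum_congr rfl fun i _ ↦ ?_
  rw [← hv]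
  rfl

lemma exists_lpTop_dual_eq_integral_inner (l : StrongDual ℝ (Lp E 1 μ)) :
    ∃ v : Lp E ∞ μ, ∀ f : Lp E 1 μ, l f = ∫ x, ⟪v x, f x⟫ ∂μ := by
  choose v hv using fun i ↦ exists_lpTop_dual_eq_integral (dualCoord l i)
  refine ⟨∑ i, (ContinuousLinearMap.toSpanSingleton ℝ (stdOrthonormalBasis ℝ E i)).compLp (v i),
    fun f ↦ ?_⟩
  rw [integral_inner_sum_toSpanSingleton (stdOrthonormalBasis ℝ E) v f,
    dual_apply_eq_sum_dualCoord]
  exact Finset.sum_congr rfl fun i _ ↦ hv i _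

variable [NormedAddCommGroup Z] [NormedSpace ℝ Z] [AddCommGroup T] [Module ℝ T]

/-- The domain in `L¹` of the adjoint of a densely defined operator `A φ ↦ B φ` from `Z` to
vector fields: those fields `b` for which `φ ↦ ∫ ⟪b, B φ⟫` is a bounded functional of `A φ`. -/
noncomputable def adjointDomain (A : T →ₗ[ℝ] Z) (B : T →ₗ[ℝ] Lp E ∞ μ) :
    Submodule ℝ (Lp E 1 μ) where
  carrier := {b | ∃ l : StrongDual ℝ Z, ∀ φ,
    (innerSL ℝ).lpPairing μ 1 ∞ b (B φ) = l (A φ)}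
  zero_mem' := ⟨0, by simp⟩
  add_mem' := fun ⟨k, hk⟩ ⟨l, hl⟩ ↦ ⟨k + l, fun φ ↦ by simp [hk, hl]⟩
  smul_mem' c _ := fun ⟨l, hl⟩ ↦ ⟨c • l, fun φ ↦ by simp [hl]⟩

omit [IsFiniteMeasure μ] [Fact (1 ≤ p)] [FiniteDimensional ℝ E] in
lemma mem_adjointDomain {A : T →ₗ[ℝ] Z} {B : T →ₗ[ℝ] Lp E ∞ μ} {b : Lp E 1 μ} :
    b ∈ adjointDomain A B ↔
      ∃ l : StrongDual ℝ Z, ∀ φ, ∫ x, ⟪b x, B φ x⟫ ∂μ = l (A φ) := by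
  simp only [← innerSL_apply_apply, ← ContinuousLinearMap.lpPairing_eq_integral]
  rfl

lemma dense_adjointDomain (hp : p ≠ ∞) {A : T →ₗ[ℝ] Z} {B : T →ₗ[ℝ] Lp E ∞ μ}
    (hclosable : ∀ η : Lp E ∞ μ, (∀ ε > 0, ∃ φ, ‖A φ‖ < ε ∧
      ‖lpOfTop p μ (B φ) - lpOfTop p μ η‖ < ε) → η = 0) :
    Dense (adjointDomain A B : Set (Lp E 1 μ)) := by
  refine dense_of_forall_dual_eq_zero fun f hf ↦ ?_
  obtain ⟨η, hη⟩ := exists_lpTop_dual_eq_integral_inner f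
  suffices hη0 : η = 0 by
    ext g
    rw [hη, hη0, zero_apply]
    refine integral_eq_zero_of_ae ?_
    filter_upwards [Lp.coeFn_zero E ∞ μ] with x hx
    rw [hx, Pi.zero_apply, inner_zero_left, Pi.zero_apply]
  refine hclosable η fun ε hε ↦ ?_
  let graph : Submodule ℝ (Z × Lp E p μ) := LinearMap.range (A.prod (lpOfTop p μ ∘ₗ B))
  suffices hmem : (0, lpOfTop p μ η) ∈ closure (graph : Set (Z × Lp E p μ)) by
    obtain ⟨_, ⟨φ, rfl⟩, hφ⟩ := Metric.mem_closure_iff.1 hmem ε hε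
    rw [Prod.dist_eq, max_lt_iff, dist_zero_left, dist_eq_norm, norm_sub_rev] at hφ
    exact ⟨φ, hφ⟩
  by_contra hmem
  obtain ⟨F, hF, hFη⟩ := exists_dual_eq_zero_of_notMem_closure hmem
  obtain ⟨v, hv⟩ :=
    exists_lpOne_dual_lpOfTop_eq_integral_inner hp (F ∘L ContinuousLinearMap.inr ℝ Z (Lp E p μ))
  have hvD : v ∈ adjointDomain A B := by
    refine mem_adjointDomain.2 ⟨-(F ∘L ContinuousLinearMap.inl ℝ Z (Lp E p μ)), fun φ ↦ ?_⟩
    have hsplit : F (A φ, 0) + F (0, lpOfTop p μ (B φ)) = 0 := by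
      rw [← map_add, Prod.mk_add_mk, add_zero, zero_add]
      exact hF _ ⟨φ, rfl⟩
    rw [← hv]
    simpa using eq_neg_of_add_eq_zero_right hsplit
  apply hFη
  rw [← hf v hvD, hη]
  exact (hv η).trans (by simp_rw [real_inner_comm])

end InnerProductSpace

end LpDuality

section LocalLipschitz

variable {E : Type*} [NormedAddCommGroup E] [NormedSpace ℝ E]

omit [NormedSpace ℝ E] in
lemma abs_sub_div_dist_le {f : E → ℝ} {K : ℝ≥0} (hf : LipschitzWith K f) (x y : E) :
    |f y - f x| / dist y x ≤ K :=
  div_le_of_le_mul₀ dist_nonneg K.2 (hf.dist_le_mul y x)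

omit [NormedSpace ℝ E] in
lemma lip_eq_zero_of_subsingleton [Subsingleton E] (f : E → ℝ) (x : E) : lip f x = 0 := by
  have hx : ({x}ᶜ : Set E) = ∅ := Set.compl_empty_iff.2 (Set.subsingleton_univ.eq_singleton_of_mem
    (Set.mem_univ x)).symm
  simp [lip, hx, limsup_eq]

lemma lip_nonneg {f : E → ℝ} {K : ℝ≥0} (hf : LipschitzWith K f) (x : E) : 0 ≤ lip f x := by
  rcases subsingleton_or_nontrivial E with hE | hE
  · exact (lip_eq_zero_of_subsingleton f x).ge
  have : (𝓝[≠] x).NeBot := inferInstance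
  exact le_limsup_of_frequently_le (Frequently.of_forall fun y ↦ by positivity)
    (isBoundedUnder_of ⟨K, abs_sub_div_dist_le hf x⟩)

lemma lip_le_norm_of_hasFDerivAt {f : E → ℝ} {f' : E →L[ℝ] ℝ} {x : E} (hf : HasFDerivAt f f' x) :
    lip f x ≤ ‖f'‖ := by
  rcases subsingleton_or_nontrivial E with hE | hE
  · exact (lip_eq_zero_of_subsingleton f x).trans_le (norm_nonneg f')
  have : (𝓝[≠] x).NeBot := inferInstance
  have hcob : IsCoboundedUnder (· ≤ ·) (𝓝[≠] x) fun y ↦ |f y - f x| / dist y x :=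
    (isBoundedUnder_of ⟨0, fun y ↦ by positivity⟩ :
      IsBoundedUnder (· ≥ ·) (𝓝[≠] x) fun y ↦ |f y - f x| / dist y x).isCoboundedUnder_le
  refine le_of_forall_pos_le_add fun ε hε ↦ limsup_le_of_le hcob ?_
  filter_upwards [(hf.isLittleO.def hε).filter_mono nhdsWithin_le_nhds] with y hy
  refine div_le_of_le_mul₀ dist_nonneg (by positivity) ?_
  calc |f y - f x| = ‖f' (y - x) + (f y - f x - f' (y - x))‖ := by
        rw [add_sub_cancel, Real.norm_eq_abs]
    _ ≤ ‖f'‖ * ‖y - x‖ + ε * ‖y - x‖ := (norm_add_le _ _).trans (add_le_add (f'.le_opNorm _) hy)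
    _ = (‖f'‖ + ε) * dist y x := by rw [dist_eq_norm, add_mul]

end LocalLipschitz

/-- The `(1, p)`-Poincaré inequality for Lipschitz functions with constant `C` and dilation `Λ`. -/
def SatisfiesPoincare {M : Type*} [PseudoMetricSpace M] [MeasurableSpace M] (m : Measure M)
    (p C Λ : ℝ) : Prop :=
  ∀ f : M → ℝ, (∃ K : ℝ≥0, LipschitzWith K f) → ∀ x r, 0 < r →
    ⨍ y in ball x r, |f y - ⨍ z in ball x r, f z ∂m| ∂m ≤
      C * r * (⨍ y in ball x (Λ * r), lip f y ^ p ∂m) ^ (1 / p)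

lemma setAverage_mono_of_nonneg {X : Type*} [MeasurableSpace X] {m : Measure X} {f g : X → ℝ}
    {s : Set X} (hf : 0 ≤ f) (hg : IntegrableOn g s m) (hfg : f ≤ g) :
    ⨍ y in s, f y ∂m ≤ ⨍ y in s, g y ∂m := by
  simp only [setAverage_eq, smul_eq_mul]
  exact mul_le_mul_of_nonneg_left (integral_mono_of_nonneg (ae_of_all _ hf) hg (ae_of_all _ hfg))
    (by positivity)

section Poincare

variable {E : Type*} [NormedAddCommGroup E] [InnerProductSpace ℝ E]

lemma exists_closedBall_mul_norm_le_abs_inner_sub (c x₀ : E) (k : ℝ) {r : ℝ} (hr : 0 < r) :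
    ∃ x₁, closedBall x₁ (r / 4) ⊆ ball x₀ r ∧ ball x₀ r ⊆ closedBall x₁ (8 * (r / 4)) ∧
      ∀ y ∈ closedBall x₁ (r / 4), r * ‖c‖ / 4 ≤ |⟪c, y⟫ - k| := by
  obtain ⟨s, hs, hsk⟩ : ∃ s : ℝ, |s| = 1 ∧ 0 ≤ s * (⟪c, x₀⟫ - k) := by
    rcases le_total k ⟪c, x₀⟫ with h | h
    · exact ⟨1, by simp, by linarith⟩
    · exact ⟨-1, by simp, by linarith⟩
  set v : E := (s * (r / 2) * ‖c‖⁻¹) • c with hv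
  have hv_norm : ‖v‖ ≤ r / 2 := by
    rw [hv, norm_smul, norm_mul, norm_mul, Real.norm_eq_abs s, hs, one_mul, norm_inv, norm_norm,
      Real.norm_of_nonneg (by positivity), mul_assoc]
    exact mul_le_of_le_one_right (by positivity) (inv_mul_le_one (a := ‖c‖))
  have hv_inner : s * ⟪c, v⟫ = r / 2 * ‖c‖ := by
    have hss : s * s = 1 := by rw [← abs_mul_abs_self, hs, one_mul]
    have hc : ‖c‖⁻¹ * ‖c‖ ^ 2 = ‖c‖ := by
      rcases eq_or_ne ‖c‖ 0 with h | h
      · simp [h]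
      · field_simp
    rw [hv, inner_smul_right, real_inner_self_eq_norm_sq, mul_assoc _ ‖c‖⁻¹, hc]
    linear_combination r / 2 * ‖c‖ * hss
  refine ⟨x₀ + v, fun y hy ↦ ?_, fun y hy ↦ ?_, fun y hy ↦ ?_⟩
  · have := dist_triangle y (x₀ + v) x₀
    rw [mem_ball]
    rw [mem_closedBall] at hy
    rw [dist_self_add_left] at this
    linarith
  · have := dist_triangle y x₀ (x₀ + v)
    rw [mem_closedBall]
    rw [mem_ball] at hy
    rw [dist_self_add_right] at this
    linarith
  · rw [mem_closedBall, dist_eq_norm] at hy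
    have hy_inner : -(‖c‖ * (r / 4)) ≤ s * ⟪c, y - (x₀ + v)⟫ := by
      refine neg_le_of_abs_le ?_
      rw [abs_mul, hs, one_mul]
      exact (abs_real_inner_le_norm _ _).trans (by gcongr)
    calc r * ‖c‖ / 4 ≤ s * (⟪c, x₀⟫ - k) + s * ⟪c, v⟫ + s * ⟪c, y - (x₀ + v)⟫ := by linarith
      _ = s * (⟪c, y⟫ - k) := by rw [inner_sub_right, inner_add_right]; ring
      _ ≤ |⟪c, y⟫ - k| := by
        rw [← one_mul |⟪c, y⟫ - k|, ← hs, ← abs_mul]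
        exact le_abs_self _

variable [FiniteDimensional ℝ E] [MeasurableSpace E] [BorelSpace E] {m : Measure E}
  [IsFiniteMeasureOnCompacts m]

omit [InnerProductSpace ℝ E] [FiniteDimensional ℝ E] [BorelSpace E] in
lemma measureReal_closedBall_mul_le [ProperSpace E] [IsUnifLocDoublingMeasure m] (x : E)
    {K t r : ℝ} (ht : t ∈ Set.Ioc 0 K) (hr_le : r ≤ IsUnifLocDoublingMeasure.scalingScaleOf m K) :
    m.real (closedBall x (t * r)) ≤
      IsUnifLocDoublingMeasure.scalingConstantOf m K * m.real (closedBall x r) := by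
  rw [← ENNReal.coe_toReal, measureReal_def, measureReal_def, ← ENNReal.toReal_mul]
  exact ENNReal.toReal_mono (ENNReal.mul_ne_top ENNReal.coe_ne_top measure_closedBall_lt_top.ne)
    (IsUnifLocDoublingMeasure.measure_mul_le_scalingConstantOf_mul m ht hr_le)

lemma integrableOn_ball_of_continuous {f : E → ℝ} (hf : Continuous f) (x : E) (r : ℝ) :
    IntegrableOn f (ball x r) m :=
  (hf.continuousOn.integrableOn_compact (isCompact_closedBall x r)).mono_set ball_subset_closedBall

/-- The space of `C¹` Lipschitz functions, used as test functions. -/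
def testFunctions (E : Type*) [NormedAddCommGroup E] [NormedSpace ℝ E] : Submodule ℝ (E → ℝ) where
  carrier := {φ | ContDiff ℝ 1 φ ∧ ∃ K : ℝ≥0, LipschitzWith K φ}
  add_mem' := fun ⟨hφ, K, hK⟩ ⟨hψ, L, hL⟩ ↦ ⟨hφ.add hψ, K + L, hK.add hL⟩
  zero_mem' := ⟨contDiff_const, 0, LipschitzWith.const 0⟩
  smul_mem' := fun c _ ⟨hφ, _, hK⟩ ↦ ⟨contDiff_const.smul hφ, _, (lipschitzWith_smul c).comp hK⟩

omit [MeasurableSpace E] [BorelSpace E] in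
lemma continuous_gradient_of_mem_testFunctions {φ : E → ℝ} (hφ : φ ∈ testFunctions E) :
    Continuous (gradient φ) :=
  (InnerProductSpace.toDual ℝ E).symm.continuous.comp (hφ.1.continuous_fderiv one_ne_zero)

omit [MeasurableSpace E] [BorelSpace E] in
lemma exists_norm_gradient_le_of_mem_testFunctions {φ : E → ℝ} (hφ : φ ∈ testFunctions E) :
    ∃ K : ℝ, ∀ x, ‖gradient φ x‖ ≤ K := by
  obtain ⟨-, K, hK⟩ := hφ
  refine ⟨K, fun x ↦ ?_⟩
  rw [gradient, LinearIsometryEquiv.norm_map]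
  exact norm_fderiv_le_of_lipschitz ℝ hK

lemma norm_sub_rpow_le {F : Type*} [SeminormedAddCommGroup F] {p : ℝ} (hp : 1 ≤ p) (a b c : F) :
    ‖a - c‖ ^ p ≤ 2 ^ (p - 1) * (‖a - b‖ ^ p + ‖b - c‖ ^ p) := by
  refine (Real.rpow_le_rpow (norm_nonneg _) (norm_sub_le_norm_sub_add_norm_sub a b c)
    (by linarith)).trans ?_
  exact_mod_cast NNReal.rpow_add_le_mul_rpow_add_rpow ‖a - b‖₊ ‖b - c‖₊ hp

omit [BorelSpace E] in
lemma integrableOn_ball_norm_rpow {F : Type*} [NormedAddCommGroup F] {p B : ℝ} (hp : 0 ≤ p)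
    {f : E → F} (hf : StronglyMeasurable f) (hB : ∀ y, ‖f y‖ ≤ B) (x : E) (r : ℝ) :
    IntegrableOn (fun y ↦ ‖f y‖ ^ p) (ball x r) m := by
  refine Measure.integrableOn_of_bounded measure_ball_lt_top.ne (M := B ^ p)
    (hf.norm.measurable.pow_const p).aestronglyMeasurable (ae_of_all _ fun y ↦ ?_)
  rw [Real.norm_of_nonneg (by positivity)]
  exact Real.rpow_le_rpow (norm_nonneg _) (hB y) hp

lemma integrableOn_ball_norm_sub_gradient_rpow {p K : ℝ} (hp : 0 ≤ p) {η : E → E}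
    (hη : StronglyMeasurable η) (hK : ∀ x, ‖η x‖ ≤ K) {φ : E → ℝ} (hφ : φ ∈ testFunctions E)
    (x : E) (r : ℝ) : IntegrableOn (fun y ↦ ‖η y - gradient φ y‖ ^ p) (ball x r) m := by
  obtain ⟨L, hL⟩ := exists_norm_gradient_le_of_mem_testFunctions hφ
  exact integrableOn_ball_norm_rpow hp
    (hη.sub (continuous_gradient_of_mem_testFunctions hφ).stronglyMeasurable)
    (fun y ↦ (norm_sub_le _ _).trans (add_le_add (hK y) (hL y))) x r

lemma setAverage_norm_sub_gradient_rpow_le {p K : ℝ} (hp : 1 ≤ p) {η : E → E}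
    (hη : StronglyMeasurable η) (hK : ∀ x, ‖η x‖ ≤ K) {φ : E → ℝ} (hφ : φ ∈ testFunctions E)
    (c x : E) (r : ℝ) :
    ⨍ y in ball x r, ‖c - gradient φ y‖ ^ p ∂m ≤ 2 ^ (p - 1) *
      (⨍ y in ball x r, ‖c - η y‖ ^ p ∂m + ⨍ y in ball x r, ‖η y - gradient φ y‖ ^ p ∂m) := by
  have hp₀ : 0 ≤ p := by linarith
  have hconst : IntegrableOn (fun y ↦ ‖c - η y‖ ^ p) (ball x r) m :=
    integrableOn_ball_norm_rpow hp₀ (stronglyMeasurable_const.sub hη)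
      (fun y ↦ (norm_sub_le c (η y)).trans (add_le_add_right (hK y) ‖c‖)) x r
  have hgrad : IntegrableOn (fun y ↦ ‖η y - gradient φ y‖ ^ p) (ball x r) m :=
    integrableOn_ball_norm_sub_gradient_rpow hp₀ hη hK hφ x r
  refine (setAverage_mono_of_nonneg (fun y ↦ by positivity) ((hconst.add hgrad).const_mul _)
    fun y ↦ norm_sub_rpow_le hp c (η y) (gradient φ y)).trans_eq ?_
  simp only [setAverage_eq, integral_const_mul, Pi.add_apply, integral_add hconst hgrad,
    smul_eq_mul]
  ring

lemma setAverage_le_of_setIntegral_le {X : Type*} [MeasurableSpace X] {m : Measure X} {f : X → ℝ}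
    {s t : Set X} {ε : ℝ} (hf : 0 ≤ f) (hint : IntegrableOn f t m) (hst : s ⊆ t)
    (hε : ∫ y in t, f y ∂m ≤ ε) : ⨍ y in s, f y ∂m ≤ (m.real s)⁻¹ * ε := by
  rw [setAverage_eq, smul_eq_mul]
  gcongr
  exact (setIntegral_mono_set hint (ae_of_all _ hf) hst.eventuallyLE).trans hε

variable [m.IsOpenPosMeasure]

omit [BorelSpace E] in
lemma measureReal_ball_pos (x : E) {r : ℝ} (hr : 0 < r) : 0 < m.real (ball x r) :=
  ENNReal.toReal_pos (measure_ball_pos m x hr).ne' measure_ball_lt_top.ne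

variable [IsUnifLocDoublingMeasure m]

lemma mul_norm_le_setAverage_abs_inner_sub (c x₀ : E) (k : ℝ) {r : ℝ} (hr : 0 < r)
    (hr_le : r ≤ IsUnifLocDoublingMeasure.scalingScaleOf m 8) :
    r * ‖c‖ ≤ 4 * IsUnifLocDoublingMeasure.scalingConstantOf m 8 *
      ⨍ y in ball x₀ r, |⟪c, y⟫ - k| ∂m := by
  obtain ⟨x₁, hsub, hsup, hlow⟩ := exists_closedBall_mul_norm_le_abs_inner_sub c x₀ k hr
  have hint : IntegrableOn (fun y ↦ |⟪c, y⟫ - k|) (ball x₀ r) m :=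
    integrableOn_ball_of_continuous (by fun_prop) x₀ r
  set D := IsUnifLocDoublingMeasure.scalingConstantOf m 8
  have hfin : m (closedBall x₁ (r / 4)) ≠ ∞ := measure_closedBall_lt_top.ne
  have hdoubling : m.real (ball x₀ r) ≤ D * m.real (closedBall x₁ (r / 4)) :=
    (measureReal_mono hsup measure_closedBall_lt_top.ne).trans
      (measureReal_closedBall_mul_le x₁ (by norm_num) (by linarith))
  have hintegral : r * ‖c‖ / 4 * m.real (closedBall x₁ (r / 4)) ≤
      ∫ y in ball x₀ r, |⟪c, y⟫ - k| ∂m :=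
    calc r * ‖c‖ / 4 * m.real (closedBall x₁ (r / 4))
        = ∫ _ in closedBall x₁ (r / 4), r * ‖c‖ / 4 ∂m := by
          rw [setIntegral_const, smul_eq_mul, mul_comm]
      _ ≤ ∫ y in closedBall x₁ (r / 4), |⟪c, y⟫ - k| ∂m :=
          setIntegral_mono_on (integrableOn_const hfin) (hint.mono_set hsub)
            measurableSet_closedBall hlow
      _ ≤ ∫ y in ball x₀ r, |⟪c, y⟫ - k| ∂m :=
          setIntegral_mono_set hint (ae_of_all _ fun _ ↦ abs_nonneg _) hsub.eventuallyLE
  rw [setAverage_eq, smul_eq_mul, ← div_eq_inv_mul, mul_div_assoc',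
    le_div_iff₀ (measureReal_ball_pos x₀ hr)]
  calc r * ‖c‖ * m.real (ball x₀ r)
      ≤ r * ‖c‖ * (D * m.real (closedBall x₁ (r / 4))) := by gcongr
    _ = 4 * D * (r * ‖c‖ / 4 * m.real (closedBall x₁ (r / 4))) := by ring
    _ ≤ 4 * D * ∫ y in ball x₀ r, |⟪c, y⟫ - k| ∂m := by gcongr

lemma SatisfiesPoincare.mul_norm_le {p C Λ : ℝ} (hm : SatisfiesPoincare m p C Λ) (hp : 0 < p)
    (hC : 0 ≤ C) {φ : E → ℝ} (hφ : ContDiff ℝ 1 φ) {K : ℝ≥0} (hK : LipschitzWith K φ) (c x₀ : E)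
    {r : ℝ} (hr : 0 < r) (hr_le : r ≤ IsUnifLocDoublingMeasure.scalingScaleOf m 8) :
    r * ‖c‖ ≤ 4 * IsUnifLocDoublingMeasure.scalingConstantOf m 8 *
      (C * r * (⨍ y in ball x₀ (Λ * r), ‖c - gradient φ y‖ ^ p ∂m) ^ (1 / p) +
        ⨍ y in ball x₀ r, |φ y| ∂m) := by
  let f : E → ℝ := fun y ↦ ⟪c, y⟫ - φ y
  have hφ_cont : Continuous φ := hφ.continuous
  have hf_lip : LipschitzWith (‖innerSL ℝ c‖₊ + K) f := (innerSL ℝ c).lipschitz.sub hK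
  have hf_deriv (y : E) : HasFDerivAt f (InnerProductSpace.toDual ℝ E (c - gradient φ y)) y := by
    rw [map_sub, toDual_gradient]
    exact (innerSL ℝ c).hasFDerivAt.sub (hφ.differentiable one_ne_zero y).hasFDerivAt
  have hlip (y : E) : lip f y ≤ ‖c - gradient φ y‖ := by
    simpa only [LinearIsometryEquiv.norm_map] using lip_le_norm_of_hasFDerivAt (hf_deriv y)
  have hgrad_cont : Continuous (gradient φ) :=
    (InnerProductSpace.toDual ℝ E).symm.continuous.comp (hφ.continuous_fderiv one_ne_zero)
  have hlip_avg : ⨍ y in ball x₀ (Λ * r), lip f y ^ p ∂m ≤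
      ⨍ y in ball x₀ (Λ * r), ‖c - gradient φ y‖ ^ p ∂m :=
    setAverage_mono_of_nonneg (fun y ↦ Real.rpow_nonneg (lip_nonneg hf_lip y) p)
      (integrableOn_ball_of_continuous
        ((continuous_const.sub hgrad_cont).norm.rpow_const fun _ ↦ Or.inr hp.le) _ _)
      fun y ↦ Real.rpow_le_rpow (lip_nonneg hf_lip y) (hlip y) hp.le
  have hlip_avg_nonneg : 0 ≤ ⨍ y in ball x₀ (Λ * r), lip f y ^ p ∂m :=
    integral_nonneg fun y ↦ Real.rpow_nonneg (lip_nonneg hf_lip y) p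
  refine (mul_norm_le_setAverage_abs_inner_sub c x₀ (⨍ z in ball x₀ r, f z ∂m) hr hr_le).trans ?_
  gcongr
  set k := ⨍ z in ball x₀ r, f z ∂m
  have hf_int : IntegrableOn (fun y ↦ |f y - k|) (ball x₀ r) m :=
    integrableOn_ball_of_continuous (by fun_prop) _ _
  have hφ_int : IntegrableOn (fun y ↦ |φ y|) (ball x₀ r) m :=
    integrableOn_ball_of_continuous (by fun_prop) _ _
  calc ⨍ y in ball x₀ r, |⟪c, y⟫ - k| ∂m ≤ ⨍ y in ball x₀ r, (|f y - k| + |φ y|) ∂m :=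
        setAverage_mono_of_nonneg (fun _ ↦ abs_nonneg _) (hf_int.add hφ_int) fun y ↦ by
          simpa only [f, sub_right_comm _ (φ y), sub_add_cancel] using abs_add_le (f y - k) (φ y)
    _ = ⨍ y in ball x₀ r, |f y - k| ∂m + ⨍ y in ball x₀ r, |φ y| ∂m := by
        simp only [setAverage_eq, integral_add hf_int hφ_int, smul_add]
    _ ≤ _ := by
        gcongr
        exact (hm f ⟨_, hf_lip⟩ x₀ r hr).trans (by gcongr)

omit [BorelSpace E] in
lemma setAverage_ball_le_mul_setAverage_closedBall {f : E → ℝ} (hf : 0 ≤ f) {x : E} {r : ℝ}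
    (hint : IntegrableOn f (closedBall x r) m) (hr : 0 < r)
    (hr_le : r ≤ IsUnifLocDoublingMeasure.scalingScaleOf m 2) :
    ⨍ y in ball x r, f y ∂m ≤
      IsUnifLocDoublingMeasure.scalingConstantOf m 2 * ⨍ y in closedBall x r, f y ∂m := by
  set D := IsUnifLocDoublingMeasure.scalingConstantOf m 2
  have hball := measureReal_ball_pos (m := m) x hr
  have hclosedBall : 0 < m.real (closedBall x r) :=
    hball.trans_le (measureReal_mono ball_subset_closedBall measure_closedBall_lt_top.ne)
  have hdoubling : m.real (closedBall x r) ≤ D * m.real (ball x r) :=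
    calc m.real (closedBall x r) = m.real (closedBall x (2 * (r / 2))) := by congr 2; ring
      _ ≤ D * m.real (closedBall x (r / 2)) :=
          measureReal_closedBall_mul_le x (by norm_num) (by linarith)
      _ ≤ D * m.real (ball x r) := by
          gcongr
          · exact measure_ball_lt_top.ne
          · exact closedBall_subset_ball (by linarith)
  have hinv : (m.real (ball x r))⁻¹ ≤ D * (m.real (closedBall x r))⁻¹ := by
    rw [← div_eq_mul_inv, le_div_iff₀ hclosedBall, inv_mul_le_iff₀ hball, mul_comm]
    exact hdoubling
  rw [setAverage_eq, setAverage_eq, smul_eq_mul, smul_eq_mul, ← mul_assoc]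
  exact mul_le_mul hinv
    (setIntegral_mono_set hint (ae_of_all _ hf) ball_subset_closedBall.eventuallyLE)
    (integral_nonneg hf) (by positivity)

lemma ae_tendsto_setAverage_norm_sub_rpow {F : Type*} [NormedAddCommGroup F] {p K : ℝ}
    (hp : 1 ≤ p) {η : E → F} (hη : StronglyMeasurable η) (hK : ∀ x, ‖η x‖ ≤ K) :
    ∀ᵐ x ∂m, Tendsto (fun r ↦ ⨍ y in ball x r, ‖η x - η y‖ ^ p ∂m) (𝓝[>] 0) (𝓝 0) := by
  have hloc : LocallyIntegrable η m := (locallyIntegrable_const K).mono hη.aestronglyMeasurable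
    (ae_of_all _ fun x ↦ (hK x).trans (le_abs_self K))
  filter_upwards [IsUnifLocDoublingMeasure.ae_tendsto_average_norm_sub m hloc 1] with x hx
  set D := IsUnifLocDoublingMeasure.scalingConstantOf m 2
  have hdist (y : E) : ‖η y - η x‖ ≤ 2 * K :=
    (norm_sub_le _ _).trans (by linarith [hK x, hK y])
  have hint (r : ℝ) : IntegrableOn (fun y ↦ ‖η y - η x‖) (closedBall x r) m :=
    Measure.integrableOn_of_bounded measure_closedBall_lt_top.ne (M := 2 * K)
      (hη.sub stronglyMeasurable_const).norm.aestronglyMeasurable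
      (ae_of_all _ fun y ↦ by simpa using hdist y)
  have hpow (y : E) : ‖η x - η y‖ ^ p ≤ (2 * K) ^ (p - 1) * ‖η y - η x‖ := by
    rw [norm_sub_rev, show p = p - 1 + 1 by ring,
      Real.rpow_add_one' (norm_nonneg _) (by linarith), add_sub_cancel_right]
    gcongr
    exact hdist y
  have hlim := ((hx (fun _ ↦ x) id tendsto_id (eventually_nhdsWithin_of_forall fun r hr ↦
    mem_closedBall_self (by simpa using (Set.mem_Ioi.1 hr).le))).const_mul (D : ℝ)).const_mul
      ((2 * K) ^ (p - 1))
  rw [mul_zero, mul_zero] at hlim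
  refine squeeze_zero'
    (Eventually.of_forall fun r ↦ integral_nonneg fun y ↦ by positivity) ?_ hlim
  filter_upwards [Ioc_mem_nhdsGT (IsUnifLocDoublingMeasure.scalingScaleOf_pos m 2)] with r hr
  calc ⨍ y in ball x r, ‖η x - η y‖ ^ p ∂m
      ≤ ⨍ y in ball x r, (2 * K) ^ (p - 1) * ‖η y - η x‖ ∂m :=
        setAverage_mono_of_nonneg (fun y ↦ by positivity)
          (((hint r).mono_set ball_subset_closedBall).const_mul _) hpow
    _ = (2 * K) ^ (p - 1) * ⨍ y in ball x r, ‖η y - η x‖ ∂m := integral_const_mul _ _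
    _ ≤ _ := by
        gcongr
        · exact Real.rpow_nonneg ((norm_nonneg _).trans (hdist x)) _
        · exact setAverage_ball_le_mul_setAverage_closedBall (fun y ↦ norm_nonneg _) (hint r)
            hr.1 hr.2

/-- On `s`, test functions converging to `0` in `L¹(m)` have gradients converging to `η` in
`Lᵖ(m)`. -/
def IsVanishingGradientLimit (m : Measure E) (p : ℝ) (s : Set E) (η : E → E) : Prop :=
  ∀ ε > 0, ∃ φ ∈ testFunctions E,
    ∫ y in s, |φ y| ∂m ≤ ε ∧ ∫ y in s, ‖η y - gradient φ y‖ ^ p ∂m ≤ ε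

variable {p C Λ : ℝ} (hm : SatisfiesPoincare m p C Λ) (hp : 1 ≤ p) (hC : 0 ≤ C) (hΛ : 1 ≤ Λ)
  {η : E → E} {K R : ℝ} {z : E}
include hm hp hC hΛ

lemma SatisfiesPoincare.norm_le_of_isVanishingGradientLimit (hη : StronglyMeasurable η)
    (hK : ∀ x, ‖η x‖ ≤ K) (hlimit : IsVanishingGradientLimit m p (ball z R) η) (c x : E) {r : ℝ}
    (hr : 0 < r) (hr_le : r ≤ IsUnifLocDoublingMeasure.scalingScaleOf m 8)
    (hsub : ball x (Λ * r) ⊆ ball z R) :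
    ‖c‖ ≤ 4 * IsUnifLocDoublingMeasure.scalingConstantOf m 8 *
      (C * (2 ^ (p - 1) * ⨍ y in ball x (Λ * r), ‖c - η y‖ ^ p ∂m) ^ (1 / p)) := by
  have hp₀ : 0 < p := by linarith
  set D := IsUnifLocDoublingMeasure.scalingConstantOf m 8
  set A := ⨍ y in ball x (Λ * r), ‖c - η y‖ ^ p ∂m
  let bound : ℝ → ℝ := fun ε ↦ 4 * D * (C * r * (2 ^ (p - 1) *
    (A + (m.real (ball x (Λ * r)))⁻¹ * ε)) ^ (1 / p) + (m.real (ball x r))⁻¹ * ε)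
  have hbound : ∀ ε > 0, r * ‖c‖ ≤ bound ε := by
    intro ε hε
    obtain ⟨φ, hφ, hφ_int, hφ_grad⟩ := hlimit ε hε
    obtain ⟨hφ_diff, L, hL⟩ := id hφ
    refine (hm.mul_norm_le hp₀ hC hφ_diff hL c x hr hr_le).trans ?_
    simp only [bound]
    gcongr
    · exact integral_nonneg fun y ↦ by positivity
    · refine (setAverage_norm_sub_gradient_rpow_le hp hη hK hφ c x (Λ * r)).trans ?_
      gcongr
      exact setAverage_le_of_setIntegral_le (fun y ↦ by positivity)
        (integrableOn_ball_norm_sub_gradient_rpow hp₀.le hη hK hφ z R) hsub hφ_grad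
    · refine setAverage_le_of_setIntegral_le (fun y ↦ abs_nonneg _)
        (integrableOn_ball_of_continuous hφ_diff.continuous.abs z R) ?_ hφ_int
      exact (ball_subset_ball (le_mul_of_one_le_left hr.le hΛ)).trans hsub
  have hcont : Continuous bound := by
    refine continuous_const.mul (.add (continuous_const.mul ?_) (by fun_prop))
    exact Continuous.rpow_const (by fun_prop) fun _ ↦ Or.inr (by positivity)
  refine le_of_mul_le_mul_left ?_ hr
  calc r * ‖c‖ ≤ bound 0 := ge_of_tendsto (hcont.tendsto 0 |>.mono_left nhdsWithin_le_nhds)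
        (eventually_nhdsWithin_of_forall (s := Set.Ioi 0) hbound)
    _ = _ := by simp only [bound, mul_zero, add_zero]; ring

lemma SatisfiesPoincare.ae_eq_zero_of_isVanishingGradientLimit (hη : StronglyMeasurable η)
    (hK : ∀ x, ‖η x‖ ≤ K) (hlimit : IsVanishingGradientLimit m p (ball z R) η) :
    ∀ᵐ x ∂m.restrict (ball z R), η x = 0 := by
  have : 0 < p := by linarith
  have hΛ₀ : 0 < Λ := by linarith
  rw [ae_restrict_iff' measurableSet_ball]
  filter_upwards [ae_tendsto_setAverage_norm_sub_rpow hp hη hK] with x hx hxR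
  have hdilate : Tendsto (fun r ↦ Λ * r) (𝓝[>] 0) (𝓝[>] 0) := by
    rw [tendsto_iff_comap, comap_mulLeft_nhdsGT_zero hΛ₀]
  have hlim := (((hx.comp hdilate).const_mul (2 ^ (p - 1))).rpow_const (p := 1 / p)
    (Or.inr (by positivity))).const_mul C |>.const_mul
      (4 * (IsUnifLocDoublingMeasure.scalingConstantOf m 8 : ℝ))
  rw [mul_zero, Real.zero_rpow (by positivity), mul_zero, mul_zero] at hlim
  refine norm_le_zero_iff.1 (ge_of_tendsto hlim ?_)
  obtain ⟨δ, hδ, hδ_sub⟩ := Metric.isOpen_iff.1 isOpen_ball x hxR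
  filter_upwards [Ioc_mem_nhdsGT (IsUnifLocDoublingMeasure.scalingScaleOf_pos m 8),
    Ioc_mem_nhdsGT (div_pos hδ hΛ₀)] with r hr hrδ
  exact hm.norm_le_of_isVanishingGradientLimit hp hC hΛ hη hK hlimit (η x) x hr.1 hr.2
    ((ball_subset_ball ((le_div_iff₀' hΛ₀).1 hrδ.2)).trans hδ_sub)

end Poincare

section WeakDivergence

variable {E : Type*} [NormedAddCommGroup E] [InnerProductSpace ℝ E] [FiniteDimensional ℝ E]
  [MeasurableSpace E] [BorelSpace E] {μ : Measure E}

/-- The vector field `X` has divergence `a` with respect to `μ`, in the sense of integration by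
parts against `C¹` Lipschitz functions: `div (X μ) = a μ`. -/
def HasWeakDivergence (μ : Measure E) (X : E → E) (a : E → ℝ) : Prop :=
  ∀ φ ∈ testFunctions E, ∫ x, fderiv ℝ φ x (X x) ∂μ = -∫ x, a x * φ x ∂μ

/-- Test functions as elements of `L¹(μ)`. -/
noncomputable def testFunctionsToL1 (hμ : ∀ φ ∈ testFunctions E, Integrable φ μ) :
    testFunctions E →ₗ[ℝ] Lp ℝ 1 μ where
  toFun φ := (hμ φ φ.2).toL1 φ.1
  map_add' φ ψ := Integrable.toL1_add φ.1 ψ.1 (hμ φ φ.2) (hμ ψ ψ.2)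
  map_smul' c φ := Integrable.toL1_smul φ.1 (hμ φ φ.2) c

omit [FiniteDimensional ℝ E] [BorelSpace E] in
lemma norm_testFunctionsToL1 (hμ : ∀ φ ∈ testFunctions E, Integrable φ μ) (φ : testFunctions E) :
    ‖testFunctionsToL1 hμ φ‖ = ∫ x, |φ.1 x| ∂μ :=
  L1.norm_of_fun_eq_integral_norm (hμ φ φ.2)

lemma memLp_top_gradient (μ : Measure E) {φ : E → ℝ} (hφ : φ ∈ testFunctions E) :
    MemLp (gradient φ) ∞ μ :=
  let ⟨K, hK⟩ := exists_norm_gradient_le_of_mem_testFunctions hφ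
  memLp_top_of_bound (continuous_gradient_of_mem_testFunctions hφ).aestronglyMeasurable K
    (ae_of_all _ hK)

omit [MeasurableSpace E] [BorelSpace E] in
lemma gradient_coe_add (φ ψ : testFunctions E) :
    gradient (φ + ψ : testFunctions E).1 = gradient φ.1 + gradient ψ.1 := by
  ext1 x
  rw [Pi.add_apply, gradient, gradient, gradient, ← map_add]
  exact congrArg _ (fderiv_add (φ.2.1.differentiable one_ne_zero x)
    (ψ.2.1.differentiable one_ne_zero x))

omit [MeasurableSpace E] [BorelSpace E] in
lemma gradient_coe_smul (c : ℝ) (φ : testFunctions E) :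
    gradient (c • φ : testFunctions E).1 = c • gradient φ.1 := by
  ext1 x
  rw [Pi.smul_apply, gradient, gradient, ← map_smul]
  exact congrArg _ (fderiv_const_smul (φ.2.1.differentiable one_ne_zero x) c)

/-- Gradients of test functions as elements of `L∞(μ)`. -/
noncomputable def gradientToLpTop (μ : Measure E) : testFunctions E →ₗ[ℝ] Lp E ∞ μ where
  toFun φ := (memLp_top_gradient μ φ.2).toLp (gradient φ.1)
  map_add' φ ψ := by
    simp only [gradient_coe_add]
    exact MemLp.toLp_add (memLp_top_gradient μ φ.2) (memLp_top_gradient μ ψ.2)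
  map_smul' c φ := by
    simp only [gradient_coe_smul]
    exact MemLp.toLp_const_smul c (memLp_top_gradient μ φ.2)

lemma exists_hasWeakDivergence_of_mem_adjointDomain [IsFiniteMeasure μ]
    (hμ : ∀ φ ∈ testFunctions E, Integrable φ μ) {X : Lp E 1 μ}
    (hX : X ∈ adjointDomain (testFunctionsToL1 hμ) (gradientToLpTop μ)) :
    ∃ a : Lp ℝ ∞ μ, HasWeakDivergence μ X a := by
  obtain ⟨l, hl⟩ := mem_adjointDomain.1 hX
  obtain ⟨v, hv⟩ := exists_lpTop_dual_eq_integral l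
  refine ⟨-v, fun φ hφ ↦ ?_⟩
  calc ∫ x, fderiv ℝ φ x (X x) ∂μ = ∫ x, ⟪X x, gradientToLpTop μ ⟨φ, hφ⟩ x⟫ ∂μ := by
        refine integral_congr_ae ?_
        filter_upwards [(memLp_top_gradient μ hφ).coeFn_toLp] with x hx
        rw [← inner_gradient_left, real_inner_comm]
        exact congrArg _ hx.symm
    _ = ∫ x, v x * testFunctionsToL1 hμ ⟨φ, hφ⟩ x ∂μ := by rw [hl, hv]
    _ = -∫ x, (-v : Lp ℝ ∞ μ) x * φ x ∂μ := by
        rw [← integral_neg]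
        refine integral_congr_ae ?_
        filter_upwards [(hμ φ hφ).coeFn_toL1, Lp.coeFn_neg v] with x hx hvx
        rw [hvx, Pi.neg_apply, neg_mul, neg_neg]
        exact congrArg _ hx

lemma integral_norm_rpow_le_of_norm_toLp_le {X F : Type*} [MeasurableSpace X] {μ : Measure X}
    [NormedAddCommGroup F] {f : X → F} {p ε : ℝ} (hp : 0 < p) (hε : 0 ≤ ε)
    (hf : MemLp f (ENNReal.ofReal p) μ) (hfε : ‖hf.toLp f‖ ≤ ε ^ (1 / p)) :
    ∫ x, ‖f x‖ ^ p ∂μ ≤ ε := by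
  rw [Lp.norm_toLp, hf.eLpNorm_eq_integral_rpow_norm (by simpa using hp) ENNReal.ofReal_ne_top,
    ENNReal.toReal_ofReal (by positivity), ENNReal.toReal_ofReal hp.le, ← one_div,
    Real.rpow_le_rpow_iff (integral_nonneg fun x ↦ by positivity) hε (by positivity)] at hfε
  exact hfε

lemma exists_stronglyMeasurable_norm_le_lpTop {X F : Type*} [MeasurableSpace X] {μ : Measure X}
    [NormedAddCommGroup F] (η : Lp F ∞ μ) :
    ∃ g : X → F, StronglyMeasurable g ∧ (∀ x, ‖g x‖ ≤ ‖η‖) ∧ η =ᵐ[μ] g := by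
  have hη : StronglyMeasurable η := Lp.stronglyMeasurable η
  refine ⟨{x : X | ‖η x‖ ≤ ‖η‖}.indicator (η : X → F),
    hη.indicator (hη.norm.measurableSet_le stronglyMeasurable_const), fun x ↦ ?_, ?_⟩
  · rw [Set.indicator_apply]
    split_ifs with hx
    · exact hx
    · exact norm_zero.trans_le (norm_nonneg _)
  · filter_upwards [ae_norm_le_norm_lpTop η] with x hx
    exact (Set.indicator_of_mem (s := {x | ‖η x‖ ≤ ‖η‖}) hx η).symm

variable {m : Measure E} {z : E} {R : ℝ}

lemma isVanishingGradientLimit_of_forall_norm_sub_lt {p : ℝ} (hp : 1 ≤ p)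
    [IsFiniteMeasure (m.restrict (ball z R))]
    (hμ : ∀ φ ∈ testFunctions E, Integrable φ (m.restrict (ball z R)))
    {η : Lp E ∞ (m.restrict (ball z R))} {g : E → E} (hηg : η =ᵐ[m.restrict (ball z R)] g)
    (h : ∀ ε > 0, ∃ φ, ‖testFunctionsToL1 hμ φ‖ < ε ∧
      ‖lpOfTop (ENNReal.ofReal p) (m.restrict (ball z R)) (gradientToLpTop _ φ) -
        lpOfTop _ _ η‖ < ε) :
    IsVanishingGradientLimit m p (ball z R) g := by
  intro ε hε
  obtain ⟨φ, hφ, hφ_grad⟩ := h (min ε (ε ^ (1 / p))) (lt_min hε (by positivity))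
  have hfact : Fact (1 ≤ ENNReal.ofReal p) := ⟨ENNReal.one_le_ofReal.2 hp⟩
  refine ⟨φ, φ.2, ?_, ?_⟩
  · rw [norm_testFunctionsToL1] at hφ
    exact hφ.le.trans (min_le_left _ _)
  · rw [norm_sub_rev] at hφ_grad
    set X := lpOfTop (ENNReal.ofReal p) (m.restrict (ball z R)) η -
      lpOfTop _ _ (gradientToLpTop _ φ)
    have hX : X =ᵐ[m.restrict (ball z R)] fun y ↦ g y - gradient φ.1 y := by
      filter_upwards [Lp.coeFn_sub (lpOfTop (ENNReal.ofReal p) _ η)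
        (lpOfTop _ _ (gradientToLpTop _ φ)), hηg, (memLp_top_gradient _ φ.2).coeFn_toLp]
        with y hy hηy hφy
      rw [hy, Pi.sub_apply, coe_lpOfTop, coe_lpOfTop, hηy]
      exact congrArg _ hφy
    refine (integral_congr_ae (hX.fun_comp fun v ↦ ‖v‖ ^ p)).symm.trans_le ?_
    refine integral_norm_rpow_le_of_norm_toLp_le (by linarith) hε.le (Lp.memLp X) ?_
    rw [Lp.toLp_coeFn]
    exact hφ_grad.le.trans (min_le_right _ _)

variable [IsFiniteMeasureOnCompacts m] [m.IsOpenPosMeasure] [IsUnifLocDoublingMeasure m]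

theorem SatisfiesPoincare.dense_setOf_hasWeakDivergence {p C Λ : ℝ} (hm : SatisfiesPoincare m p C Λ)
    (hp : 1 ≤ p) (hC : 0 ≤ C) (hΛ : 1 ≤ Λ) (z : E) (R : ℝ) :
    Dense {X : Lp E 1 (m.restrict (ball z R)) |
      ∃ a : Lp ℝ ∞ (m.restrict (ball z R)), HasWeakDivergence (m.restrict (ball z R)) X a} := by
  set μ := m.restrict (ball z R)
  have hfinite : IsFiniteMeasure μ := isFiniteMeasure_restrict.2 measure_ball_lt_top.ne
  have hfact : Fact (1 ≤ ENNReal.ofReal p) := ⟨ENNReal.one_le_ofReal.2 hp⟩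
  have hμ (φ) (hφ : φ ∈ testFunctions E) : Integrable φ μ :=
    integrableOn_ball_of_continuous hφ.1.continuous z R
  refine (dense_adjointDomain (p := ENNReal.ofReal p) (A := testFunctionsToL1 hμ)
    (B := gradientToLpTop μ) ENNReal.ofReal_ne_top fun η h ↦ ?_).mono
    fun X hX ↦ exists_hasWeakDivergence_of_mem_adjointDomain hμ hX
  obtain ⟨g, hg, hgη, hηg⟩ := exists_stronglyMeasurable_norm_le_lpTop η
  have hg₀ := hm.ae_eq_zero_of_isVanishingGradientLimit hp hC hΛ hg hgη
    (isVanishingGradientLimit_of_forall_norm_sub_lt hp hμ hηg h)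
  exact (Lp.eq_zero_iff_ae_eq_zero (f := η)).2 (hηg.trans hg₀)

end WeakDivergence

section SpatialConvolution

/-- The open half space `t > 0` in the space-time `ℝ × E`. -/
def upperHalfSpace (E : Type*) : Set (ℝ × E) := {z | 0 < z.1}

lemma isOpen_upperHalfSpace (E : Type*) [TopologicalSpace E] : IsOpen (upperHalfSpace E) :=
  isOpen_lt continuous_const continuous_fst

lemma sub_mem_upperHalfSpace {E : Type*} [AddGroup E] {z : ℝ × E} (hz : z ∈ upperHalfSpace E)
    (y : E) : z - (0, y) ∈ upperHalfSpace E := by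
  simpa [upperHalfSpace] using hz

/-- The convolution, in the space variable only, of the space-time kernel `k` with the vector
measure `f μ`. -/
noncomputable def spatialConv {E F : Type*} [AddGroup E] [MeasurableSpace E]
    [NormedAddCommGroup F] [NormedSpace ℝ F] (k : ℝ × E → ℝ) (μ : Measure E) (f : E → F)
    (z : ℝ × E) : F :=
  ∫ y, k (z - (0, y)) • f y ∂μ

variable {E F : Type*} [NormedAddCommGroup E] [NormedSpace ℝ E] [FiniteDimensional ℝ E]
  [NormedAddCommGroup F] {k : ℝ × E → ℝ} {z : ℝ × E}

lemma exists_norm_sub_le_of_continuousOn {k : ℝ × E → F}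
    (hk : ContinuousOn k (upperHalfSpace E)) (R : ℝ) (hz : z ∈ upperHalfSpace E) :
    ∃ ε > 0, ball z ε ⊆ upperHalfSpace E ∧
      ∃ B, ∀ x ∈ ball z ε, ∀ y : E, ‖y‖ ≤ R → ‖k (x - (0, y))‖ ≤ B := by
  obtain ⟨ε, hε, hsub⟩ := Metric.isOpen_iff.1 (isOpen_upperHalfSpace E) z hz
  set K : Set (ℝ × E) := (fun q : (ℝ × E) × E ↦ q.1 - (0, q.2)) ''
    (closedBall z (ε / 2) ×ˢ closedBall 0 R)
  have hK : IsCompact K :=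
    ((isCompact_closedBall _ _).prod (isCompact_closedBall _ _)).image (by fun_prop)
  have hKsub : K ⊆ upperHalfSpace E := by
    rintro _ ⟨⟨x, y⟩, ⟨hx, -⟩, rfl⟩
    exact sub_mem_upperHalfSpace (hsub (closedBall_subset_ball (by linarith) hx)) y
  obtain ⟨B, hB⟩ := hK.exists_bound_of_continuousOn (hk.mono hKsub)
  refine ⟨ε / 2, by positivity, (ball_subset_ball (by linarith)).trans hsub, B, fun x hx y hy ↦ ?_⟩
  exact hB _ ⟨(x, y), ⟨ball_subset_closedBall hx, by simpa using hy⟩, rfl⟩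

variable [NormedSpace ℝ F] [MeasurableSpace E] [BorelSpace E]
  {μ : Measure E} {R : ℝ} (hR : ∀ᵐ y ∂μ, ‖y‖ ≤ R) {f : E → F} (hf : Integrable f μ)
include hR hf

lemma integrable_spatialConv (hk : ContinuousOn k (upperHalfSpace E))
    (hz : z ∈ upperHalfSpace E) : Integrable (fun y ↦ k (z - (0, y)) • f y) μ := by
  obtain ⟨ε, hε, -, B, hB⟩ := exists_norm_sub_le_of_continuousOn hk R hz
  have hcont : Continuous fun y : E ↦ k (z - (0, y)) :=
    hk.comp_continuous (by fun_prop) (sub_mem_upperHalfSpace hz)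
  refine hf.bdd_smul B hcont.aestronglyMeasurable ?_
  filter_upwards [hR] with y hy using hB z (mem_ball_self hε) y hy

lemma integrable_smulRight_fderiv (hk : ContDiffOn ℝ 1 k (upperHalfSpace E))
    (hz : z ∈ upperHalfSpace E) :
    Integrable (fun y ↦ (fderiv ℝ k (z - (0, y))).smulRight (f y)) μ := by
  have hk' := hk.continuousOn_fderiv_of_isOpen (isOpen_upperHalfSpace E) le_rfl
  obtain ⟨ε, hε, -, B, hB⟩ := exists_norm_sub_le_of_continuousOn hk' R hz
  have hcont : Continuous fun y : E ↦ fderiv ℝ k (z - (0, y)) :=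
    hk'.comp_continuous (by fun_prop) (sub_mem_upperHalfSpace hz)
  refine (hf.norm.const_mul B).mono'
    ((ContinuousLinearMap.smulRightL ℝ (ℝ × E) F).continuous₂.comp_aestronglyMeasurable₂
      hcont.aestronglyMeasurable hf.aestronglyMeasurable) ?_
  filter_upwards [hR] with y hy
  rw [ContinuousLinearMap.norm_smulRight_apply]
  exact mul_le_mul_of_nonneg_right (hB z (mem_ball_self hε) y hy) (norm_nonneg _)

lemma hasFDerivAt_spatialConv (hk : ContDiffOn ℝ 1 k (upperHalfSpace E))
    (hz : z ∈ upperHalfSpace E) :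
    HasFDerivAt (spatialConv k μ f)
      (∫ y, (fderiv ℝ k (z - (0, y))).smulRight (f y) ∂μ) z := by
  have hH := isOpen_upperHalfSpace E
  have hk' : ContinuousOn (fderiv ℝ k) (upperHalfSpace E) :=
    hk.continuousOn_fderiv_of_isOpen hH le_rfl
  obtain ⟨ε, hε, hsub, B, hB⟩ := exists_norm_sub_le_of_continuousOn hk' R hz
  refine hasFDerivAt_integral_of_dominated_of_fderiv_le
    (F' := fun x y ↦ (fderiv ℝ k (x - (0, y))).smulRight (f y)) (bound := fun y ↦ B * ‖f y‖)
    (ball_mem_nhds z hε) ?_ (integrable_spatialConv hR hf hk.continuousOn hz)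
    (integrable_smulRight_fderiv hR hf hk hz).aestronglyMeasurable ?_ (hf.norm.const_mul B) ?_
  · filter_upwards [hH.mem_nhds hz] with x hx
    exact (integrable_spatialConv hR hf hk.continuousOn hx).aestronglyMeasurable
  · filter_upwards [hR] with y hy x hx
    rw [ContinuousLinearMap.norm_smulRight_apply]
    exact mul_le_mul_of_nonneg_right (hB x hx y hy) (norm_nonneg _)
  · refine .of_forall fun y x hx ↦ ?_
    have hkx := (hk.differentiableOn one_ne_zero).differentiableAt
      (hH.mem_nhds (sub_mem_upperHalfSpace (hsub hx) y))
    exact (hkx.hasFDerivAt.comp x ((hasFDerivAt_id x).sub_const (0, y))).smul_const (f y)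

lemma fderiv_spatialConv_apply (hk : ContDiffOn ℝ 1 k (upperHalfSpace E))
    (hz : z ∈ upperHalfSpace E) (v : ℝ × E) :
    fderiv ℝ (spatialConv k μ f) z v = spatialConv (fun x ↦ fderiv ℝ k x v) μ f z := by
  rw [(hasFDerivAt_spatialConv hR hf hk hz).fderiv,
    ContinuousLinearMap.integral_apply (integrable_smulRight_fderiv hR hf hk hz)]
  rfl

lemma contDiffOn_spatialConv (N : ℕ) (hk : ContDiffOn ℝ (N + 1) k (upperHalfSpace E)) :
    ContDiffOn ℝ N (spatialConv k μ f) (upperHalfSpace E) := by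
  have hH := isOpen_upperHalfSpace E
  induction N generalizing k with
  | zero =>
    refine contDiffOn_zero.2 fun z hz ↦ ?_
    exact (hasFDerivAt_spatialConv hR hf (by simpa using hk) hz).continuousAt.continuousWithinAt
  | succ N ih =>
    have hk1 : ContDiffOn ℝ 1 k (upperHalfSpace E) := hk.of_le (by norm_cast; lia)
    have hk' : ContDiffOn ℝ (N + 1) (fderiv ℝ k) (upperHalfSpace E) :=
      hk.fderiv_of_isOpen hH (by norm_cast)
    push_cast
    rw [contDiffOn_succ_iff_fderiv_of_isOpen hH]
    refine ⟨fun z hz ↦ ?_, by simp, contDiffOn_clm_apply.2 fun v ↦ ?_⟩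
    · exact (hasFDerivAt_spatialConv hR hf hk1 hz).differentiableAt.differentiableWithinAt
    · exact (ih (hk'.clm_apply contDiffOn_const)).congr fun z hz ↦
        fderiv_spatialConv_apply hR hf hk1 hz v

end SpatialConvolution

section SecondDerivative

variable {E F : Type*} [NormedAddCommGroup E] [NormedSpace ℝ E] [NormedAddCommGroup F]
  [NormedSpace ℝ F] {f : E → F} {x : E}

lemma fderiv_fderiv_apply_eq_fderiv (hf : ContDiffAt ℝ 2 f x) (v w : E) :
    fderiv ℝ (fderiv ℝ f) x v w = fderiv ℝ (fun y ↦ fderiv ℝ f y w) x v := by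
  have hf' : DifferentiableAt ℝ (fderiv ℝ f) x :=
    (hf.fderiv_right (m := 1) (by norm_num)).differentiableAt one_ne_zero
  simp [fderiv_clm_apply hf' (differentiableAt_const w)]

lemma hasDerivAt_add_smul (x v : E) (s : ℝ) : HasDerivAt (fun s : ℝ ↦ x + s • v) v s := by
  simpa using ((hasDerivAt_id s).smul_const v).const_add x

lemma fderiv_fderiv_apply_self_eq_of_hasDerivAt_line (hf : ContDiffAt ℝ 2 f x) {v : E} {f' : ℝ → F}
    {f'' : F} (h' : ∀ᶠ s in 𝓝 0, HasDerivAt (fun s : ℝ ↦ f (x + s • v)) (f' s) s)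
    (h'' : HasDerivAt f' f'' 0) : fderiv ℝ (fderiv ℝ f) x v v = f'' := by
  have hline : Tendsto (fun s : ℝ ↦ x + s • v) (𝓝 0) (𝓝 x) := by
    simpa using (hasDerivAt_add_smul x v 0).continuousAt.tendsto
  have hdiff : ∀ᶠ y in 𝓝 x, DifferentiableAt ℝ f y :=
    (hf.eventually (by simp)).mono fun y hy ↦ hy.differentiableAt two_ne_zero
  have hf'_eq : f' =ᶠ[𝓝 0] fun s ↦ fderiv ℝ f (x + s • v) v := by
    filter_upwards [h', hline.eventually hdiff] with s hs hd
    exact hs.unique (hd.hasFDerivAt.comp_hasDerivAt s (hasDerivAt_add_smul x v s))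
  have hd2 : HasFDerivAt (fderiv ℝ f) (fderiv ℝ (fderiv ℝ f) x) (x + (0 : ℝ) • v) := by
    rw [zero_smul, add_zero]
    exact ((hf.fderiv_right (m := 1) (by norm_num)).differentiableAt one_ne_zero).hasFDerivAt
  have hd : HasDerivAt (fun s : ℝ ↦ fderiv ℝ f (x + s • v) v) (fderiv ℝ (fderiv ℝ f) x v v) 0 := by
    have hcomp := hd2.comp_hasDerivAt (0 : ℝ) (hasDerivAt_add_smul x v 0)
    simpa using hcomp.clm_apply (hasDerivAt_const (0 : ℝ) v)
  exact (hd.congr_of_eventuallyEq hf'_eq).unique h''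

end SecondDerivative

section HeatKernel

variable {E : Type*} [NormedAddCommGroup E] [InnerProductSpace ℝ E] {z : ℝ × E}

/-- The heat kernel `(4πt)^(-d/2) exp(-‖x‖²/(4t))` of the `d`-dimensional Euclidean space `E`. -/
noncomputable def heatKernel (z : ℝ × E) : ℝ :=
  (4 * Real.pi * z.1) ^ (-(finrank ℝ E : ℝ) / 2) * Real.exp (-‖z.2‖ ^ 2 / (4 * z.1))

lemma heatKernel_pos (hz : z ∈ upperHalfSpace E) : 0 < heatKernel z := by
  have : 0 < z.1 := hz
  unfold heatKernel
  positivity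

lemma contDiffOn_heatKernel {N : WithTop ℕ∞} :
    ContDiffOn ℝ N (heatKernel (E := E)) (upperHalfSpace E) := by
  have hpos : ∀ z ∈ upperHalfSpace E, 0 < z.1 := fun z hz ↦ hz
  refine ContDiffOn.mul (ContDiffOn.rpow_const_of_ne (by fun_prop) fun z hz ↦ ?_)
    (ContDiffOn.exp (ContDiffOn.div (contDiff_snd.norm_sq ℝ).neg.contDiffOn (by fun_prop)
      fun z hz ↦ ?_)) <;>
  · have := hpos z hz
    positivity

lemma hasFDerivAt_heatKernel (hz : z ∈ upperHalfSpace E) :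
    HasFDerivAt heatKernel (heatKernel z •
      ((-(finrank ℝ E / 2) / z.1 + ‖z.2‖ ^ 2 / (4 * z.1 ^ 2)) • ContinuousLinearMap.fst ℝ ℝ E -
        (1 / (2 * z.1)) • (innerSL ℝ z.2).comp (ContinuousLinearMap.snd ℝ ℝ E))) z := by
  have hz1 : 0 < z.1 := hz
  have hfst : HasFDerivAt Prod.fst (ContinuousLinearMap.fst ℝ ℝ E) z := hasFDerivAt_fst
  have hpow := (hfst.const_mul (4 * Real.pi)).rpow_const
    (p := -(finrank ℝ E : ℝ) / 2) (.inl (by positivity))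
  have hinv : HasFDerivAt (fun z : ℝ × E ↦ (4 * z.1)⁻¹) _ z :=
    (hasDerivAt_inv (by positivity)).comp_hasFDerivAt z (hfst.const_mul 4)
  have hsq : HasFDerivAt (fun z : ℝ × E ↦ -‖z.2‖ ^ 2) _ z := hasFDerivAt_snd.norm_sq.neg
  refine (hpow.mul (hsq.mul hinv).exp).congr_fderiv ?_
  rw [heatKernel, Real.rpow_sub_one (by positivity), Pi.mul_apply, ← div_eq_mul_inv]
  generalize (4 * Real.pi * z.1) ^ (-(finrank ℝ E : ℝ) / 2) = a
  generalize Real.exp (-‖z.2‖ ^ 2 / (4 * z.1)) = b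
  ext v
  · simp
    field_simp
    ring
  · simp
    ring

lemma fderiv_heatKernel_space (hz : z ∈ upperHalfSpace E) (e : E) :
    fderiv ℝ heatKernel z (0, e) = -(1 / (2 * z.1)) * (heatKernel z * ⟪z.2, e⟫) := by
  simp [(hasFDerivAt_heatKernel hz).fderiv]
  ring

lemma fderiv_fderiv_heatKernel_space (hz : z ∈ upperHalfSpace E) (e : E) :
    fderiv ℝ (fderiv ℝ heatKernel) z (0, e) (0, e) =
      heatKernel z * (⟪z.2, e⟫ ^ 2 / (4 * z.1 ^ 2) - ‖e‖ ^ 2 / (2 * z.1)) := by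
  have hz1 : 0 < z.1 := hz
  have hfirst (s : ℝ) : HasDerivAt (fun s : ℝ ↦ heatKernel (z + s • ((0 : ℝ), e)))
      (-(1 / (2 * z.1)) *
        (heatKernel (z + s • ((0 : ℝ), e)) * (⟪z.2, e⟫ + s * ‖e‖ ^ 2))) s := by
    have hzs : z + s • ((0 : ℝ), e) ∈ upperHalfSpace E := by simpa [upperHalfSpace] using hz
    convert! (hasFDerivAt_heatKernel hzs).differentiableAt.hasFDerivAt.comp_hasDerivAt s
      (hasDerivAt_add_smul z (0, e) s) using 1
    rw [fderiv_heatKernel_space hzs]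
    simp [inner_add_left, inner_smul_left]
  have hlin : HasDerivAt (fun s : ℝ ↦ ⟪z.2, e⟫ + s * ‖e‖ ^ 2) (1 * ‖e‖ ^ 2) 0 :=
    ((hasDerivAt_id (0 : ℝ)).mul_const _).const_add _
  refine fderiv_fderiv_apply_self_eq_of_hasDerivAt_line
    (contDiffOn_heatKernel.contDiffAt ((isOpen_upperHalfSpace E).mem_nhds hz))
    (.of_forall hfirst) ((((hfirst 0).mul hlin).const_mul (-(1 / (2 * z.1)))).congr_deriv ?_)
  simp
  field_simp
  ring

lemma contDiffOn_fderiv_heatKernel_apply (v : ℝ × E) :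
    ContDiffOn ℝ 1 (fun x ↦ fderiv ℝ heatKernel x v) (upperHalfSpace E) :=
  (contDiffOn_heatKernel.fderiv_of_isOpen (n := 2) (isOpen_upperHalfSpace E)
    (by norm_num)).clm_apply contDiffOn_const

lemma continuousOn_fderiv_fderiv_heatKernel_apply (v w : ℝ × E) :
    ContinuousOn (fun x ↦ fderiv ℝ (fderiv ℝ heatKernel) x v w) (upperHalfSpace E) :=
  (((contDiffOn_heatKernel.fderiv_of_isOpen (n := 2) (m := 1) (isOpen_upperHalfSpace E)
    (by norm_num)).continuousOn_fderiv_of_isOpen (isOpen_upperHalfSpace E) le_rfl).clm_apply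
      continuousOn_const).clm_apply continuousOn_const

lemma hasFDerivAt_heatKernel_sub {t : ℝ} (ht : 0 < t) (x y : E) :
    HasFDerivAt (fun y ↦ heatKernel (t, x - y))
      (-(fderiv ℝ heatKernel (t, x - y)).comp (ContinuousLinearMap.inr ℝ ℝ E)) y := by
  have hsub : HasFDerivAt (fun y ↦ (t, x - y)) (-ContinuousLinearMap.inr ℝ ℝ E) y := by
    refine ((hasFDerivAt_const t y).prodMk ((hasFDerivAt_id y).const_sub x)).congr_fderiv ?_
    ext v <;> simp
  have hK := (hasFDerivAt_heatKernel (z := (t, x - y)) ht).differentiableAt.hasFDerivAt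
  exact (hK.comp y hsub).congr_fderiv (ContinuousLinearMap.comp_neg _ _)

lemma exp_neg_sq_div_mul_le {t : ℝ} (ht : 0 < t) (r : ℝ) :
    Real.exp (-r ^ 2 / (4 * t)) * r ≤ 1 + 4 * t := by
  have hexp := Real.add_one_le_exp (r ^ 2 / (4 * t))
  have hr : r ^ 2 / (4 * t) * (4 * t) = r ^ 2 := by field_simp
  have hnonneg : 0 ≤ r ^ 2 / (4 * t) := by positivity
  rw [neg_div, Real.exp_neg, inv_mul_le_iff₀ (Real.exp_pos _)]
  nlinarith [sq_nonneg (r - 1)]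

lemma norm_fderiv_heatKernel_comp_inr_le {t : ℝ} (ht : 0 < t) (x : E) :
    ‖(fderiv ℝ heatKernel (t, x)).comp (ContinuousLinearMap.inr ℝ ℝ E)‖ ≤
      1 / (2 * t) * ((4 * Real.pi * t) ^ (-(finrank ℝ E : ℝ) / 2) * (1 + 4 * t)) := by
  refine ContinuousLinearMap.opNorm_le_bound _ (by positivity) fun e ↦ ?_
  have hK := heatKernel_pos (z := (t, x)) ht
  calc ‖fderiv ℝ heatKernel (t, x) (0, e)‖
      = 1 / (2 * t) * (heatKernel (t, x) * |⟪x, e⟫|) := by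
        rw [fderiv_heatKernel_space (z := (t, x)) ht]
        simp [abs_of_pos hK, abs_of_pos ht]
    _ ≤ 1 / (2 * t) * (heatKernel (t, x) * (‖x‖ * ‖e‖)) := by
        gcongr
        exact abs_real_inner_le_norm x e
    _ = 1 / (2 * t) * ((4 * Real.pi * t) ^ (-(finrank ℝ E : ℝ) / 2) *
          (Real.exp (-‖x‖ ^ 2 / (4 * t)) * ‖x‖)) * ‖e‖ := by
        simp only [heatKernel]
        ring
    _ ≤ _ := by
        gcongr
        exact exp_neg_sq_div_mul_le ht ‖x‖

lemma heatKernel_sub_mem_testFunctions {t : ℝ} (ht : 0 < t) (x : E) :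
    (fun y ↦ heatKernel (t, x - y)) ∈ testFunctions E := by
  refine ⟨contDiffOn_univ.1 (contDiffOn_heatKernel.comp (by fun_prop) fun y _ ↦ ht), Real.toNNReal
    (1 / (2 * t) * ((4 * Real.pi * t) ^ (-(finrank ℝ E : ℝ) / 2) * (1 + 4 * t))),
    lipschitzWith_of_nnnorm_fderiv_le
      (fun y ↦ (hasFDerivAt_heatKernel_sub ht x y).differentiableAt) fun y ↦ ?_⟩
  rw [(hasFDerivAt_heatKernel_sub ht x y).fderiv, nnnorm_neg]
  exact NNReal.le_toNNReal_of_coe_le (norm_fderiv_heatKernel_comp_inr_le ht (x - y))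

variable [FiniteDimensional ℝ E]

/-- The Laplacian in the space variable of a function on the space-time `ℝ × E`. -/
noncomputable def spaceLaplacian {F : Type*} [NormedAddCommGroup F] [NormedSpace ℝ F]
    (Q : ℝ × E → F) (z : ℝ × E) : F :=
  ∑ i, fderiv ℝ (fderiv ℝ Q) z (0, stdOrthonormalBasis ℝ E i) (0, stdOrthonormalBasis ℝ E i)

lemma fderiv_heatKernel_time (hz : z ∈ upperHalfSpace E) :
    fderiv ℝ heatKernel z (1, 0) = spaceLaplacian heatKernel z := by
  have hz1 : 0 < z.1 := hz
  have hsum : ∑ i, ⟪z.2, stdOrthonormalBasis ℝ E i⟫ ^ 2 = ‖z.2‖ ^ 2 := by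
    simpa [sq, real_inner_comm, real_inner_self_eq_norm_sq] using
      (stdOrthonormalBasis ℝ E).sum_inner_mul_inner z.2 z.2
  simp_rw [spaceLaplacian, fderiv_fderiv_heatKernel_space hz]
  rw [← Finset.mul_sum, Finset.sum_sub_distrib, ← Finset.sum_div, hsum,
    (hasFDerivAt_heatKernel hz).fderiv]
  simp only [smul_apply, sub_apply, ContinuousLinearMap.coe_fst',
    ContinuousLinearMap.comp_apply, ContinuousLinearMap.coe_snd', coe_innerSL_apply,
    inner_zero_right, mul_zero, sub_zero, OrthonormalBasis.norm_eq_one, Finset.sum_const,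
    Finset.card_univ, Fintype.card_fin, nsmul_eq_mul, smul_eq_mul]
  field_simp
  ring

end HeatKernel

section HeatExtension

variable {E F : Type*} [NormedAddCommGroup E] [InnerProductSpace ℝ E] [FiniteDimensional ℝ E]
  [MeasurableSpace E] [NormedAddCommGroup F] [NormedSpace ℝ F] {z : ℝ × E}

/-- The solution of the heat equation on the upper half space with initial data the vector
measure `f μ`. -/
noncomputable def heatExtension (μ : Measure E) (f : E → F) : ℝ × E → F :=
  spatialConv heatKernel μ f

variable [BorelSpace E] {μ : Measure E}

section

variable {R : ℝ} (hR : ∀ᵐ y ∂μ, ‖y‖ ≤ R) {f : E → F} (hf : Integrable f μ)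
include hR hf

lemma contDiffOn_heatExtension (N : ℕ) :
    ContDiffOn ℝ N (heatExtension μ f) (upperHalfSpace E) :=
  contDiffOn_spatialConv hR hf N contDiffOn_heatKernel

lemma fderiv_heatExtension_apply (hz : z ∈ upperHalfSpace E) (v : ℝ × E) :
    fderiv ℝ (heatExtension μ f) z v = ∫ y, fderiv ℝ heatKernel (z - (0, y)) v • f y ∂μ :=
  fderiv_spatialConv_apply hR hf contDiffOn_heatKernel hz v

lemma fderiv_fderiv_heatExtension_apply (hz : z ∈ upperHalfSpace E) (v w : ℝ × E) :
    fderiv ℝ (fderiv ℝ (heatExtension μ f)) z v w =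
      ∫ y, fderiv ℝ (fderiv ℝ heatKernel) (z - (0, y)) v w • f y ∂μ := by
  have hH := isOpen_upperHalfSpace E
  have hfirst : (fun x ↦ fderiv ℝ (heatExtension μ f) x w) =ᶠ[𝓝 z]
      spatialConv (fun x ↦ fderiv ℝ heatKernel x w) μ f := by
    filter_upwards [hH.mem_nhds hz] with x hx using fderiv_heatExtension_apply hR hf hx w
  rw [fderiv_fderiv_apply_eq_fderiv
      ((contDiffOn_heatExtension hR hf 2).contDiffAt (hH.mem_nhds hz)), hfirst.fderiv_eq,
    fderiv_spatialConv_apply hR hf (contDiffOn_fderiv_heatKernel_apply w) hz, spatialConv]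
  congr! 3 with y
  exact (fderiv_fderiv_apply_eq_fderiv
    (contDiffOn_heatKernel.contDiffAt (hH.mem_nhds (sub_mem_upperHalfSpace hz y))) v w).symm

lemma fderiv_heatExtension_time (hz : z ∈ upperHalfSpace E) :
    fderiv ℝ (heatExtension μ f) z (1, 0) = spaceLaplacian (heatExtension μ f) z := by
  rw [fderiv_heatExtension_apply hR hf hz, spaceLaplacian]
  simp_rw [fderiv_fderiv_heatExtension_apply hR hf hz]
  rw [← integral_finsetSum _ fun i _ ↦ integrable_spatialConv hR hf
    (continuousOn_fderiv_fderiv_heatKernel_apply _ _) hz]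
  simp_rw [fderiv_heatKernel_time (sub_mem_upperHalfSpace hz _), spaceLaplacian, Finset.sum_smul]

end

lemma sum_inner_fderiv_heatExtension {R : ℝ} (hR : ∀ᵐ y ∂μ, ‖y‖ ≤ R) {V : E → E} {a : E → ℝ}
    (hV : Integrable V μ) (hdiv : HasWeakDivergence μ V a) (hz : z ∈ upperHalfSpace E) :
    ∑ i, ⟪fderiv ℝ (heatExtension μ V) z (0, stdOrthonormalBasis ℝ E i),
      stdOrthonormalBasis ℝ E i⟫ = heatExtension μ a z := by
  set b := stdOrthonormalBasis ℝ E
  have hint (i) : Integrable (fun y ↦ fderiv ℝ heatKernel (z - (0, y)) (0, b i) • V y) μ :=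
    integrable_spatialConv hR hV (contDiffOn_fderiv_heatKernel_apply _).continuousOn hz
  have hsum (y : E) : ∑ i, ⟪fderiv ℝ heatKernel (z - (0, y)) (0, b i) • V y, b i⟫ =
      fderiv ℝ heatKernel (z - (0, y)) (0, V y) := by
    have hV : ((0 : ℝ), V y) = ∑ i, ⟪V y, b i⟫ • ((0 : ℝ), b i) := by
      conv_lhs => rw [← b.sum_repr' (V y)]
      simp [Prod.ext_iff, Prod.fst_sum, Prod.snd_sum, real_inner_comm]
    rw [hV, map_sum]
    simp_rw [map_smul, real_inner_smul_left, smul_eq_mul, mul_comm]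
  have htest := hdiv _ (heatKernel_sub_mem_testFunctions hz z.2)
  simp_rw [(hasFDerivAt_heatKernel_sub hz z.2 _).fderiv] at htest
  calc ∑ i, ⟪fderiv ℝ (heatExtension μ V) z (0, b i), b i⟫
      = ∑ i, ∫ y, ⟪fderiv ℝ heatKernel (z - (0, y)) (0, b i) • V y, b i⟫ ∂μ := by
        congr! with i
        rw [fderiv_heatExtension_apply hR hV hz, real_inner_comm, ← integral_inner (hint i)]
        simp_rw [real_inner_comm (b i)]
    _ = ∫ y, fderiv ℝ heatKernel (z - (0, y)) (0, V y) ∂μ := by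
        rw [← integral_finsetSum _ fun i _ ↦ (hint i).inner_const (b i)]
        simp_rw [hsum]
    _ = heatExtension μ a z := by
        have hsub (y : E) : z - (0, y) = (z.1, z.2 - y) := by ext <;> simp
        simp only [neg_apply, ContinuousLinearMap.comp_apply, ContinuousLinearMap.inr_apply,
          integral_neg, neg_inj] at htest
        simpa only [heatExtension, spatialConv, hsub, smul_eq_mul, mul_comm] using htest

end HeatExtension

section Laplacian

open scoped Laplacian

variable {E : Type*} [NormedAddCommGroup E] [InnerProductSpace ℝ E] {f g : E → ℝ}

lemma continuous_fderiv_apply_of_contDiff (hf : ContDiff ℝ 1 f) (v : E) :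
    Continuous fun x ↦ fderiv ℝ f x v :=
  (hf.continuous_fderiv one_ne_zero).clm_apply continuous_const

lemma contDiff_fderiv_apply (hf : ContDiff ℝ 2 f) (v : E) :
    ContDiff ℝ 1 fun x ↦ fderiv ℝ f x v :=
  (hf.fderiv_right (m := 1) (by norm_num)).clm_apply contDiff_const

lemma continuous_fderiv_fderiv_apply (hf : ContDiff ℝ 2 f) (v : E) :
    Continuous fun x ↦ fderiv ℝ (fderiv ℝ f) x v v := by
  simp_rw [fderiv_fderiv_apply_eq_fderiv hf.contDiffAt]
  exact continuous_fderiv_apply_of_contDiff (contDiff_fderiv_apply hf v) v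

variable [FiniteDimensional ℝ E]

lemma laplacian_eq_sum_fderiv_fderiv (f : E → ℝ) (x : E) : Δ f x =
    ∑ i, fderiv ℝ (fderiv ℝ f) x (stdOrthonormalBasis ℝ E i) (stdOrthonormalBasis ℝ E i) := by
  simp [InnerProductSpace.laplacian_eq_iteratedFDeriv_stdOrthonormalBasis,
    iteratedFDeriv_two_apply]

lemma continuous_laplacian (hf : ContDiff ℝ 2 f) : Continuous (Δ f) := by
  rw [funext (laplacian_eq_sum_fderiv_fderiv f)]
  exact continuous_finsetSum _ fun i _ ↦ continuous_fderiv_fderiv_apply hf _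

lemma exists_abs_laplacian_le (hf : ContDiff ℝ 2 f) (hs : HasCompactSupport f) :
    ∃ M, ∀ x, |Δ f x| ≤ M := by
  refine HasCompactSupport.exists_bound_of_continuous (f := Δ f)
    (hs.mono' fun x hx ↦ ?_) (continuous_laplacian hf)
  by_contra hx'
  have : f =ᶠ[𝓝 x] fun _ ↦ (0 : ℝ) := notMem_tsupport_iff_eventuallyEq.1 hx'
  exact hx (by simp [(InnerProductSpace.laplacian_congr_nhds this).eq_of_nhds])

lemma laplacian_comp_smul (hf : ContDiff ℝ 2 f) (ρ : ℝ) (x : E) :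
    Δ (fun y ↦ f (ρ • y)) x = ρ ^ 2 * Δ f (ρ • x) := by
  simp [InnerProductSpace.laplacian_eq_iteratedFDeriv_stdOrthonormalBasis,
    iteratedFDeriv_comp_const_smul ρ hf, Finset.mul_sum]

variable [MeasurableSpace E] [BorelSpace E] (ν : Measure E) [ν.IsAddHaarMeasure]

lemma integral_mul_fderiv_apply_of_hasCompactSupport (hf : ContDiff ℝ 1 f) (hg : ContDiff ℝ 1 g)
    (hs : HasCompactSupport f) (v : E) :
    ∫ x, f x * fderiv ℝ g x v ∂ν = -∫ x, fderiv ℝ f x v * g x ∂ν := by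
  have hf' := continuous_fderiv_apply_of_contDiff hf v
  have hg' := continuous_fderiv_apply_of_contDiff hg v
  exact integral_mul_fderiv_eq_neg_fderiv_mul_of_integrable
    ((hf'.mul hg.continuous).integrable_of_hasCompactSupport (hs.fderiv_apply ℝ v).mul_right)
    ((hf.continuous.mul hg').integrable_of_hasCompactSupport hs.mul_right)
    ((hf.continuous.mul hg.continuous).integrable_of_hasCompactSupport hs.mul_right)
    (fun x _ ↦ (hf.differentiable one_ne_zero) x) (fun x _ ↦ (hg.differentiable one_ne_zero) x)

lemma integral_mul_fderiv_fderiv_apply (hf : ContDiff ℝ 2 f) (hg : ContDiff ℝ 2 g)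
    (hs : HasCompactSupport f) (v : E) :
    ∫ x, f x * fderiv ℝ (fderiv ℝ g) x v v ∂ν = ∫ x, fderiv ℝ (fderiv ℝ f) x v v * g x ∂ν := by
  simp_rw [fderiv_fderiv_apply_eq_fderiv hf.contDiffAt, fderiv_fderiv_apply_eq_fderiv hg.contDiffAt]
  rw [integral_mul_fderiv_apply_of_hasCompactSupport ν (hf.of_le one_le_two)
      (contDiff_fderiv_apply hg v) hs,
    integral_mul_fderiv_apply_of_hasCompactSupport ν (contDiff_fderiv_apply hf v)
      (hg.of_le one_le_two) (hs.fderiv_apply ℝ v), neg_neg]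

lemma integral_mul_laplacian_eq (hf : ContDiff ℝ 2 f) (hg : ContDiff ℝ 2 g)
    (hs : HasCompactSupport f) : ∫ x, f x * Δ g x ∂ν = ∫ x, Δ f x * g x ∂ν := by
  simp_rw [laplacian_eq_sum_fderiv_fderiv, Finset.mul_sum, Finset.sum_mul]
  rw [integral_finsetSum _ fun i _ ↦ ?_, integral_finsetSum _ fun i _ ↦ ?_]
  · simp_rw [integral_mul_fderiv_fderiv_apply ν hf hg hs]
  · exact ((continuous_fderiv_fderiv_apply hf _).mul hg.continuous).integrable_of_hasCompactSupport
      (((hs.fderiv ℝ).fderiv ℝ).comp_left (g := fun B : E →L[ℝ] E →L[ℝ] ℝ ↦ B _ _) rfl).mul_right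
  · exact (hf.continuous.mul (continuous_fderiv_fderiv_apply hg _)).integrable_of_hasCompactSupport
      hs.mul_right

end Laplacian

section Subsolution

open scoped Laplacian

variable {E : Type*} [NormedAddCommGroup E] [InnerProductSpace ℝ E] {Q : ℝ × E → ℝ} {t : ℝ}

lemma contDiff_slice (hQ : ContDiffOn ℝ 2 Q (upperHalfSpace E)) (ht : 0 < t) :
    ContDiff ℝ 2 fun x ↦ Q (t, x) :=
  contDiffOn_univ.1 (hQ.comp (by fun_prop) fun _ _ ↦ ht)

lemma continuous_slice_fderiv_time (hQ : ContDiffOn ℝ 2 Q (upperHalfSpace E)) (ht : 0 < t) :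
    Continuous fun x ↦ fderiv ℝ Q (t, x) (1, 0) :=
  ((hQ.continuousOn_fderiv_of_isOpen (isOpen_upperHalfSpace E) one_le_two).clm_apply
    continuousOn_const).comp_continuous (by fun_prop) fun _ ↦ ht

lemma fderiv_slice_apply {x : E} (hQ : DifferentiableAt ℝ Q (t, x)) (v : E) :
    fderiv ℝ (fun x ↦ Q (t, x)) x v = fderiv ℝ Q (t, x) (0, v) := by
  have hslice := hQ.hasFDerivAt.comp x (hasFDerivAt_prodMk_right t x)
  rw [show fderiv ℝ (fun x ↦ Q (t, x)) x = _ from hslice.fderiv]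
  simp

lemma hasDerivAt_integral_mul_slice [MeasurableSpace E] [BorelSpace E] {ν : Measure E}
    [IsFiniteMeasureOnCompacts ν] (hQ : ContDiffOn ℝ 2 Q (upperHalfSpace E))
    {χ : E → ℝ} (hχ : Continuous χ)
    (hs : HasCompactSupport χ) (ht : 0 < t) :
    HasDerivAt (fun t ↦ ∫ x, χ x * Q (t, x) ∂ν) (∫ x, χ x * fderiv ℝ Q (t, x) (1, 0) ∂ν) t := by
  have hpos : ∀ s ∈ Set.Icc (t / 2) (2 * t), 0 < s := fun s hs ↦ (half_pos ht).trans_le hs.1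
  have hQt : ContinuousOn (fun z ↦ fderiv ℝ Q z (1, 0)) (upperHalfSpace E) :=
    (hQ.continuousOn_fderiv_of_isOpen (isOpen_upperHalfSpace E) one_le_two).clm_apply
      continuousOn_const
  obtain ⟨B, hB⟩ := (isCompact_Icc.prod hs).exists_bound_of_continuousOn
    (hQt.mono fun z hz ↦ hpos _ hz.1)
  have hnhds : Set.Icc (t / 2) (2 * t) ∈ 𝓝 t := Icc_mem_nhds (by linarith) (by linarith)
  refine (hasDerivAt_integral_of_dominated_loc_of_deriv_le (F := fun t x ↦ χ x * Q (t, x))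
    (F' := fun t x ↦ χ x * fderiv ℝ Q (t, x) (1, 0)) (bound := fun x ↦ ‖χ x‖ * B)
    hnhds ?_ ?_ ?_ ?_ ?_ ?_).2
  · filter_upwards [hnhds] with s hs
    exact (hχ.mul (contDiff_slice hQ (hpos s hs)).continuous).aestronglyMeasurable
  · exact (hχ.mul (contDiff_slice hQ ht).continuous).integrable_of_hasCompactSupport hs.mul_right
  · exact (hχ.mul (continuous_slice_fderiv_time hQ ht)).aestronglyMeasurable
  · refine .of_forall fun x s hs' ↦ ?_
    by_cases hx : x ∈ tsupport χ
    · rw [norm_mul]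
      exact mul_le_mul_of_nonneg_left (hB (s, x) ⟨hs', hx⟩) (norm_nonneg _)
    · simp [image_eq_zero_of_notMem_tsupport hx]
  · exact (hχ.norm.integrable_of_hasCompactSupport hs.norm).mul_const B
  · refine .of_forall fun x s hs' ↦ HasDerivAt.const_mul (χ x) ?_
    have hQs : DifferentiableAt ℝ Q (s, x) := (hQ.differentiableOn two_ne_zero).differentiableAt
      ((isOpen_upperHalfSpace E).mem_nhds (hpos s hs'))
    exact hQs.hasFDerivAt.comp_hasDerivAt s ((hasDerivAt_id s).prodMk (hasDerivAt_const s x))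

lemma tendsto_integral_comp_smul_mul [MeasurableSpace E] [BorelSpace E] {ν : Measure E}
    {χ q : E → ℝ} (hχ : Continuous χ) (hχ_le : ∀ x, |χ x| ≤ 1) (hq : Integrable q ν) :
    Tendsto (fun k : ℕ ↦ ∫ x, χ ((1 / ((k : ℝ) + 1)) • x) * q x ∂ν) atTop
      (𝓝 (∫ x, χ 0 * q x ∂ν)) := by
  refine tendsto_integral_of_dominated_convergence (fun x ↦ |q x|) (fun k ↦ ?_) hq.abs
    (fun k ↦ .of_forall fun x ↦ ?_) (.of_forall fun x ↦ ?_)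
  · exact (hχ.comp (continuous_const_smul (T := E) _)).aestronglyMeasurable.mul
      hq.aestronglyMeasurable
  · rw [Real.norm_eq_abs, abs_mul]
    exact mul_le_of_le_one_left (abs_nonneg _) (hχ_le _)
  · have hscale : Tendsto (fun k : ℕ ↦ (1 / ((k : ℝ) + 1)) • x) atTop (𝓝 0) := by
      simpa using (tendsto_one_div_add_atTop_nhds_zero_nat (𝕜 := ℝ)).smul_const x
    exact ((hχ.tendsto 0).comp hscale).mul_const (q x)

variable [FiniteDimensional ℝ E]

/-- A `C²` subsolution `ΔQ ≤ ∂ₜQ` of the heat equation on the upper half space. -/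
structure IsHeatSubsolution (Q : ℝ × E → ℝ) : Prop where
  contDiffOn : ContDiffOn ℝ 2 Q (upperHalfSpace E)
  spaceLaplacian_le : ∀ z ∈ upperHalfSpace E, spaceLaplacian Q z ≤ fderiv ℝ Q z (1, 0)

lemma laplacian_slice (hQ : ContDiffOn ℝ 2 Q (upperHalfSpace E)) (ht : 0 < t) (x : E) :
    Δ (fun x ↦ Q (t, x)) x = spaceLaplacian Q (t, x) := by
  have hQ' (y : E) : ContDiffAt ℝ 2 Q (t, y) :=
    hQ.contDiffAt ((isOpen_upperHalfSpace E).mem_nhds ht)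
  rw [laplacian_eq_sum_fderiv_fderiv, spaceLaplacian]
  congr! with i
  set e := stdOrthonormalBasis ℝ E i
  have hfirst : (fun y ↦ fderiv ℝ (fun x ↦ Q (t, x)) y e) = fun y ↦ fderiv ℝ Q (t, y) (0, e) :=
    funext fun y ↦ fderiv_slice_apply ((hQ' y).differentiableAt two_ne_zero) e
  have hdiff : DifferentiableAt ℝ (fun z ↦ fderiv ℝ Q z (0, e)) (t, x) :=
    (((hQ' x).fderiv_right (m := 1) (by norm_num)).differentiableAt one_ne_zero).clm_apply
      (differentiableAt_const _)
  rw [fderiv_fderiv_apply_eq_fderiv (contDiff_slice hQ ht).contDiffAt, hfirst,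
    fderiv_slice_apply hdiff, fderiv_fderiv_apply_eq_fderiv (hQ' x)]

variable [MeasurableSpace E] [BorelSpace E]

lemma IsHeatSubsolution.neg_le_integral_mul_fderiv_time (hQ : IsHeatSubsolution Q) (ht : 0 < t)
    {ν : Measure E} [ν.IsAddHaarMeasure] (hint : Integrable (fun x ↦ Q (t, x)) ν) {B : ℝ}
    (hB : ∫ x, |Q (t, x)| ∂ν ≤ B) {χ : E → ℝ} (hχ : ContDiff ℝ 2 χ) (hs : HasCompactSupport χ)
    (h0 : ∀ x, 0 ≤ χ x) {M : ℝ} (hM : ∀ x, |Δ χ x| ≤ M) :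
    -(M * B) ≤ ∫ x, χ x * fderiv ℝ Q (t, x) (1, 0) ∂ν := by
  have hslice := contDiff_slice hQ.contDiffOn ht
  have hM0 : 0 ≤ M := (abs_nonneg _).trans (hM 0)
  have habs : |∫ x, Δ χ x * Q (t, x) ∂ν| ≤ M * B := by
    rw [← Real.norm_eq_abs]
    refine (norm_integral_le_of_norm_le (hint.abs.const_mul M) (.of_forall fun x ↦ ?_)).trans ?_
    · rw [Real.norm_eq_abs, abs_mul]
      exact mul_le_mul_of_nonneg_right (hM x) (abs_nonneg _)
    · rw [integral_const_mul]
      exact mul_le_mul_of_nonneg_left hB hM0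
  calc -(M * B) ≤ ∫ x, Δ χ x * Q (t, x) ∂ν := (abs_le.1 habs).1
    _ = ∫ x, χ x * Δ (fun x ↦ Q (t, x)) x ∂ν := (integral_mul_laplacian_eq ν hχ hslice hs).symm
    _ ≤ ∫ x, χ x * fderiv ℝ Q (t, x) (1, 0) ∂ν := by
      refine integral_mono
        ((hχ.continuous.mul (continuous_laplacian hslice)).integrable_of_hasCompactSupport
          hs.mul_right)
        ((hχ.continuous.mul (continuous_slice_fderiv_time hQ.contDiffOn
          ht)).integrable_of_hasCompactSupport hs.mul_right)
        fun x ↦ mul_le_mul_of_nonneg_left ?_ (h0 x)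
      rw [laplacian_slice hQ.contDiffOn ht]
      exact hQ.spaceLaplacian_le (t, x) ht

section

variable {ν : Measure E} [ν.IsAddHaarMeasure] {δ T B : ℝ} (hQ : IsHeatSubsolution Q) (hδ : 0 < δ)
  (hδT : δ ≤ T) (hint : ∀ t ∈ Set.Icc δ T, Integrable (fun x ↦ Q (t, x)) ν)
  (hB : ∀ t ∈ Set.Icc δ T, ∫ x, |Q (t, x)| ∂ν ≤ B)
include hQ hδ hδT hint hB

lemma IsHeatSubsolution.integral_mul_slice_le {χ : E → ℝ} (hχ : ContDiff ℝ 2 χ)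
    (hs : HasCompactSupport χ) (h0 : ∀ x, 0 ≤ χ x) {M : ℝ} (hM : ∀ x, |Δ χ x| ≤ M) :
    ∫ x, χ x * Q (δ, x) ∂ν ≤ ∫ x, χ x * Q (T, x) ∂ν + M * B * (T - δ) := by
  have hderiv (t) (ht : t ∈ Set.Icc δ T) : HasDerivAt
      (fun t ↦ ∫ x, χ x * Q (t, x) ∂ν + M * B * t)
      (∫ x, χ x * fderiv ℝ Q (t, x) (1, 0) ∂ν + M * B * 1) t :=
    (hasDerivAt_integral_mul_slice hQ.contDiffOn hχ.continuous hs (hδ.trans_le ht.1)).add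
      ((hasDerivAt_id t).const_mul _)
  have hmono : MonotoneOn (fun t ↦ ∫ x, χ x * Q (t, x) ∂ν + M * B * t) (Set.Icc δ T) := by
    refine monotoneOn_of_deriv_nonneg (convex_Icc _ _)
      (fun t ht ↦ (hderiv t ht).continuousAt.continuousWithinAt)
      (fun t ht ↦ (hderiv t (interior_subset ht)).differentiableAt.differentiableWithinAt)
      fun t ht ↦ ?_
    have ht := interior_subset ht
    rw [(hderiv t ht).deriv]
    linarith [hQ.neg_le_integral_mul_fderiv_time (hδ.trans_le ht.1) (hint t ht) (hB t ht) hχ hs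
      h0 hM]
  have := hmono (Set.left_mem_Icc.2 hδT) (Set.right_mem_Icc.2 hδT) hδT
  dsimp only at this
  linarith

lemma IsHeatSubsolution.integral_slice_le : ∫ x, Q (δ, x) ∂ν ≤ ∫ x, Q (T, x) ∂ν := by
  let χ : ContDiffBump (0 : E) := ⟨1, 2, one_pos, one_lt_two⟩
  have hχ_le (x) : |χ x| ≤ 1 := abs_le.2 ⟨by linarith [χ.nonneg' x], χ.le_one⟩
  have hχ0 : χ 0 = 1 := χ.one_of_mem_closedBall (mem_closedBall_self zero_le_one)
  obtain ⟨M, hM⟩ := exists_abs_laplacian_le χ.contDiff χ.hasCompactSupport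
  have hcut (k : ℕ) : ∫ x, χ ((1 / ((k : ℝ) + 1)) • x) * Q (δ, x) ∂ν ≤
      ∫ x, χ ((1 / ((k : ℝ) + 1)) • x) * Q (T, x) ∂ν +
        (1 / ((k : ℝ) + 1)) ^ 2 * M * B * (T - δ) := by
    refine hQ.integral_mul_slice_le hδ hδT hint hB (χ := fun x ↦ χ ((1 / ((k : ℝ) + 1)) • x))
      (χ.contDiff.comp (contDiff_const_smul _))
      (χ.hasCompactSupport.comp_smul (by positivity)) (fun x ↦ χ.nonneg' _) fun x ↦ ?_
    rw [laplacian_comp_smul χ.contDiff, abs_mul, abs_of_nonneg (sq_nonneg _)]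
    exact mul_le_mul_of_nonneg_left (hM _) (sq_nonneg _)
  have hδ_lim := tendsto_integral_comp_smul_mul χ.continuous hχ_le
    (hint δ (Set.left_mem_Icc.2 hδT))
  have hT_lim := (tendsto_integral_comp_smul_mul χ.continuous hχ_le
    (hint T (Set.right_mem_Icc.2 hδT))).add
      ((((tendsto_one_div_add_atTop_nhds_zero_nat.pow 2).mul_const M).mul_const B).mul_const
        (T - δ))
  simpa [hχ0] using le_of_tendsto_of_tendsto' hδ_lim hT_lim hcut

end

end Subsolution

section Gauge

variable {κ u : ℝ}

/-- The gauge `u (1 - (1 + u)^(-κ))`: it is negligible against `u` on bounded sets as `κ → 0`, is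
comparable to `u` as `u → ∞`, and is affine up to errors of relative size `κ`. -/
noncomputable def bellmanGauge (κ u : ℝ) : ℝ := u * (1 - (1 + u) ^ (-κ))

lemma one_add_rpow_neg_le_one (hκ : 0 ≤ κ) (hu : 0 ≤ u) : (1 + u) ^ (-κ) ≤ 1 :=
  Real.rpow_le_one_of_one_le_of_nonpos (by linarith) (by linarith)

lemma bellmanGauge_nonneg (hκ : 0 ≤ κ) (hu : 0 ≤ u) : 0 ≤ bellmanGauge κ u :=
  mul_nonneg hu (sub_nonneg.2 (one_add_rpow_neg_le_one hκ hu))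

lemma bellmanGauge_le (hu : 0 ≤ u) : bellmanGauge κ u ≤ u :=
  mul_le_of_le_one_right hu (sub_le_self _ (by positivity))

lemma contDiffAt_bellmanGauge (hu : 0 < u) : ContDiffAt ℝ 2 (bellmanGauge κ) u :=
  contDiffAt_id.mul (contDiffAt_const.sub
    ((contDiffAt_const.add contDiffAt_id).rpow_const_of_ne (by
      simp only [id_eq, ne_eq]
      positivity)))

lemma hasDerivAt_one_add_rpow (r : ℝ) (hu : 0 < u) :
    HasDerivAt (fun u ↦ (1 + u) ^ r) (r * (1 + u) ^ (r - 1)) u := by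
  convert! ((hasDerivAt_id u).const_add 1).rpow_const (p := r)
    (Or.inl (by simp only [id_eq, ne_eq]; positivity)) using 1
  simp

lemma deriv_bellmanGauge (hu : 0 < u) :
    deriv (bellmanGauge κ) u = 1 - (1 + u) ^ (-κ) + κ * (u * (1 + u) ^ (-κ - 1)) := by
  convert! ((hasDerivAt_id u).mul ((hasDerivAt_one_add_rpow (-κ) hu).const_sub 1)).deriv using 1
  simp
  ring

lemma deriv_deriv_bellmanGauge (hu : 0 < u) : deriv (deriv (bellmanGauge κ)) u =
    2 * κ * (1 + u) ^ (-κ - 1) - κ * (κ + 1) * (u * (1 + u) ^ (-κ - 2)) := by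
  have heq : deriv (bellmanGauge κ) =ᶠ[𝓝 u]
      fun u ↦ 1 - (1 + u) ^ (-κ) + κ * (u * (1 + u) ^ (-κ - 1)) :=
    (lt_mem_nhds hu).mono fun v hv ↦ deriv_bellmanGauge hv
  rw [heq.deriv_eq]
  convert! (((hasDerivAt_one_add_rpow (-κ) hu).const_sub 1).add (((hasDerivAt_id u).mul
    (hasDerivAt_one_add_rpow (-κ - 1) hu)).const_mul κ)).deriv using 1
  rw [show -κ - 1 - 1 = -κ - 2 by ring]
  simp
  ring

lemma mul_one_add_rpow_le_one (hκ : 0 ≤ κ) (hu : 0 < u) : u * (1 + u) ^ (-κ - 1) ≤ 1 := by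
  rw [Real.rpow_sub_one (by positivity)]
  have h : u / (1 + u) ≤ 1 := (div_le_one (by positivity)).2 (by linarith)
  calc u * ((1 + u) ^ (-κ) / (1 + u)) = (1 + u) ^ (-κ) * (u / (1 + u)) := by ring
    _ ≤ 1 := mul_le_one₀ (one_add_rpow_neg_le_one hκ hu.le) (by positivity) h

lemma abs_deriv_bellmanGauge_sub_div_le (hκ : 0 ≤ κ) (hu : 0 < u) :
    |deriv (bellmanGauge κ) u - bellmanGauge κ u / u| ≤ κ := by
  have h : deriv (bellmanGauge κ) u - bellmanGauge κ u / u = κ * (u * (1 + u) ^ (-κ - 1)) := by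
    rw [deriv_bellmanGauge hu, bellmanGauge]
    field_simp
    ring
  rw [h, abs_of_nonneg (by positivity)]
  exact mul_le_of_le_one_right hκ (mul_one_add_rpow_le_one hκ hu)

lemma mul_deriv_deriv_bellmanGauge_le (hκ : 0 ≤ κ) (hu : 0 < u) :
    u * deriv (deriv (bellmanGauge κ)) u ≤ 2 * κ := by
  have hneg : 0 ≤ κ * (κ + 1) * (u ^ 2 * (1 + u) ^ (-κ - 2)) := by positivity
  calc u * deriv (deriv (bellmanGauge κ)) u
      = 2 * κ * (u * (1 + u) ^ (-κ - 1)) - κ * (κ + 1) * (u ^ 2 * (1 + u) ^ (-κ - 2)) := by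
        rw [deriv_deriv_bellmanGauge hu]
        ring
    _ ≤ 2 * κ * (u * (1 + u) ^ (-κ - 1)) := sub_le_self _ hneg
    _ ≤ 2 * κ := mul_le_of_le_one_right (by positivity) (mul_one_add_rpow_le_one hκ hu)

end Gauge

section Hessians

variable {E F : Type*} [NormedAddCommGroup E] [NormedSpace ℝ E] [NormedAddCommGroup F]
  [NormedSpace ℝ F]

lemma fderiv_fderiv_add_const_mul {f g : E → ℝ} {x : E} (hf : ContDiffAt ℝ 2 f x)
    (hg : ContDiffAt ℝ 2 g x) (c : ℝ) (v w : E) :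
    fderiv ℝ (fderiv ℝ fun y ↦ f y + c * g y) x v w =
      fderiv ℝ (fderiv ℝ f) x v w + c * fderiv ℝ (fderiv ℝ g) x v w := by
  have h := congr($(fun_iteratedFDeriv_add_apply (i := 2) hf (hg.const_smul c)) ![v, w])
  rw [iteratedFDeriv_const_smul_apply' hg] at h
  simpa [iteratedFDeriv_two_apply] using h

lemma fderiv_fderiv_comp_apply_self {g : F → ℝ} {f : E → F} {x : E}
    (hg : ContDiffAt ℝ 2 g (f x)) (hf : ContDiffAt ℝ 2 f x) (v : E) :
    fderiv ℝ (fderiv ℝ fun y ↦ g (f y)) x v v =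
      fderiv ℝ (fderiv ℝ g) (f x) (fderiv ℝ f x v) (fderiv ℝ f x v) +
        fderiv ℝ g (f x) (fderiv ℝ (fderiv ℝ f) x v v) := by
  have hdf : ∀ᶠ y in 𝓝 x, DifferentiableAt ℝ f y :=
    (hf.eventually (by simp)).mono fun y hy ↦ hy.differentiableAt two_ne_zero
  have hdg : ∀ᶠ y in 𝓝 x, DifferentiableAt ℝ g (f y) := hf.continuousAt.eventually
    ((hg.eventually (by simp)).mono fun y hy ↦ hy.differentiableAt two_ne_zero)
  have hchain : fderiv ℝ (fun y ↦ g (f y)) =ᶠ[𝓝 x]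
      fun y ↦ (fderiv ℝ g (f y)).comp (fderiv ℝ f y) := by
    filter_upwards [hdf, hdg] with y h₁ h₂ using fderiv_comp y h₂ h₁
  have hf' := ((hf.fderiv_right (m := 1) le_rfl).differentiableAt one_ne_zero).hasFDerivAt
  have hg' := ((hg.fderiv_right (m := 1) le_rfl).differentiableAt one_ne_zero).hasFDerivAt
  have hgf := hg'.comp x (hf.differentiableAt two_ne_zero).hasFDerivAt
  have hgf' : HasFDerivAt (fun y ↦ (fderiv ℝ g (f y)).comp (fderiv ℝ f y)) _ x := hgf.clm_comp hf'
  rw [hchain.fderiv_eq, hgf'.fderiv]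
  simp [add_comm]

lemma fderiv_fderiv_norm_apply_self {H : Type*} [NormedAddCommGroup H] [InnerProductSpace ℝ H]
    {x : H} (hx : x ≠ 0) (v : H) : fderiv ℝ (fderiv ℝ fun y : H ↦ ‖y‖) x v v =
      (‖x‖ ^ 2 * ‖v‖ ^ 2 - ⟪x, v⟫ ^ 2) / ‖x‖ ^ 3 := by
  have hx' : ‖x‖ ≠ 0 := norm_ne_zero_iff.2 hx
  have hfirst (s : ℝ) (hs : x + s • v ≠ 0) :
      HasDerivAt (fun s ↦ ‖x + s • v‖) (⟪x + s • v, v⟫ / ‖x + s • v‖) s := by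
    have hsq := (hasDerivAt_add_smul x v s).norm_sq.sqrt (pow_ne_zero 2 (norm_ne_zero_iff.2 hs))
    simp only [Real.sqrt_sq (norm_nonneg _)] at hsq
    exact hsq.congr_deriv (mul_div_mul_left _ _ two_ne_zero)
  have hinner : HasDerivAt (fun s : ℝ ↦ ⟪x + s • v, v⟫) (‖v‖ ^ 2) 0 := by
    simpa using (hasDerivAt_add_smul x v 0).inner ℝ (hasDerivAt_const 0 v)
  have hne : ∀ᶠ s : ℝ in 𝓝 0, x + s • v ≠ 0 :=
    (hasDerivAt_add_smul x v 0).continuousAt.eventually_ne (by simpa using hx)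
  refine fderiv_fderiv_apply_self_eq_of_hasDerivAt_line (contDiffAt_norm ℝ hx)
    (hne.mono hfirst) ((hinner.div (hfirst 0 hne.self_of_nhds) (by simpa)).congr_deriv ?_)
  simp only [zero_smul, add_zero]
  field_simp

end Hessians

section Perspective

variable {W : Type*} [NormedAddCommGroup W] [NormedSpace ℝ W] {u a : ℝ}

lemma hasDerivAt_inv_smul_line {s : ℝ} (hs : u + s * a ≠ 0) (w b : W) :
    HasDerivAt (fun s : ℝ ↦ (u + s * a)⁻¹ • (w + s • b))
      ((u + s * a)⁻¹ • (b - a • (u + s * a)⁻¹ • (w + s • b))) s := by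
  convert! ((hasDerivAt_add_smul u a s).inv hs).smul (hasDerivAt_add_smul w b s) using 1
  simp only [smul_eq_mul, Pi.inv_apply]
  match_scalars <;> field_simp
  ring

lemma hasDerivAt_inv_smul_sub_smul_line (hu : u ≠ 0) (w b : W) :
    HasDerivAt (fun s : ℝ ↦ (u + s * a)⁻¹ • (b - a • (u + s * a)⁻¹ • (w + s • b)))
      ((-2 * a / u) • u⁻¹ • (b - a • u⁻¹ • w)) 0 := by
  have hu' : u + 0 * a ≠ 0 := by simpa
  convert! ((hasDerivAt_add_smul u a 0).inv hu').smul
    (((hasDerivAt_inv_smul_line hu' w b).const_smul a).const_sub b) using 1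
  simp only [smul_eq_mul, Pi.inv_apply, Pi.smul_apply, zero_mul, add_zero, zero_smul]
  match_scalars <;> field_simp <;> ring

lemma contDiffAt_perspective {g : ℝ → ℝ} {η : W → ℝ} (hg : ContDiffAt ℝ 2 g u)
    (hη : ContDiff ℝ 2 η) (hu : u ≠ 0) (w : W) :
    ContDiffAt ℝ 2 (fun z : ℝ × W ↦ g z.1 * η (z.1⁻¹ • z.2)) (u, w) :=
  (hg.comp (u, w) contDiffAt_fst).mul
    (hη.contDiffAt.comp (u, w) ((contDiffAt_fst.inv hu).smul contDiffAt_snd))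

lemma fderiv_fderiv_perspective_apply_self {g : ℝ → ℝ} {η : W → ℝ} (hg : ContDiffAt ℝ 2 g u)
    (hη : ContDiff ℝ 2 η) (hu : u ≠ 0) (w b : W) :
    fderiv ℝ (fderiv ℝ fun z : ℝ × W ↦ g z.1 * η (z.1⁻¹ • z.2)) (u, w) (a, b) (a, b) =
      deriv (deriv g) u * a ^ 2 * η (u⁻¹ • w) +
        2 * a * (deriv g u - g u / u) * fderiv ℝ η (u⁻¹ • w) (u⁻¹ • (b - a • u⁻¹ • w)) +
        g u * fderiv ℝ (fderiv ℝ η) (u⁻¹ • w) (u⁻¹ • (b - a • u⁻¹ • w))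
          (u⁻¹ • (b - a • u⁻¹ • w)) := by
  have hline (s : ℝ) : HasDerivAt (fun s ↦ u + s * a) a s := hasDerivAt_add_smul u a s
  have hratio {s} (hs : u + s * a ≠ 0) := hasDerivAt_inv_smul_line hs w b
  have hη' : ContDiff ℝ 1 (fderiv ℝ η) := hη.fderiv_right le_rfl
  have hfirst : ∀ᶠ s in 𝓝 0, HasDerivAt
      (fun s ↦ g (u + s * a) * η ((u + s * a)⁻¹ • (w + s • b)))
      (deriv g (u + s * a) * a * η ((u + s * a)⁻¹ • (w + s • b)) + g (u + s * a) *
        fderiv ℝ η ((u + s * a)⁻¹ • (w + s • b))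
          ((u + s * a)⁻¹ • (b - a • (u + s * a)⁻¹ • (w + s • b)))) s := by
    have hcont : Tendsto (fun s ↦ u + s * a) (𝓝 0) (𝓝 u) := by
      simpa using (hline 0).continuousAt.tendsto
    filter_upwards [hcont.eventually (hg.eventually (by simp)), hcont.eventually_ne hu]
      with s hgs hs
    exact ((hgs.differentiableAt two_ne_zero).hasDerivAt.comp s (hline s)).mul
      ((hη.differentiable two_ne_zero _).hasFDerivAt.comp_hasDerivAt s (hratio hs))
  have hu' : u + 0 * a ≠ 0 := by simpa
  have hg0 : ContDiffAt ℝ 2 g (u + 0 * a) := by simpa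
  have hdg := (hg0.differentiableAt two_ne_zero).hasDerivAt.comp 0 (hline 0)
  have hg' : ContDiffAt ℝ 1 (deriv g) (u + 0 * a) :=
      (hg0.fderiv_right le_rfl).clm_apply contDiffAt_const
  have hdg' := (hg'.differentiableAt one_ne_zero).hasDerivAt.comp 0 (hline 0)
  have hdη := (hη.differentiable two_ne_zero _).hasFDerivAt.comp_hasDerivAt 0 (hratio hu')
  have hdη' := (hη'.differentiable one_ne_zero _).hasFDerivAt.comp_hasDerivAt 0 (hratio hu')
  refine fderiv_fderiv_apply_self_eq_of_hasDerivAt_line (contDiffAt_perspective hg hη hu w)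
    hfirst ((((hdg'.mul_const a).mul hdη).add
      (hdg.mul (hdη'.clm_apply (hasDerivAt_inv_smul_sub_smul_line hu w b)))).congr_deriv ?_)
  simp only [Function.comp_apply, zero_mul, add_zero, zero_smul, map_smul, smul_eq_mul]
  field_simp
  ring

end Perspective

section BellmanFunction

variable {W : Type*} [NormedAddCommGroup W] [InnerProductSpace ℝ W]

lemma exists_norm_fderiv_le_of_hasCompactSupport {F : Type*} [NormedAddCommGroup F]
    [NormedSpace ℝ F] {g : W → F} (hg : ContDiff ℝ 1 g) (hsupp : HasCompactSupport g) :
    ∃ M, ∀ x, ‖fderiv ℝ g x‖ ≤ M :=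
  (hsupp.fderiv ℝ).exists_bound_of_continuous (hg.continuous_fderiv one_ne_zero)

/-- `η` is a `C²` cutoff between the balls of radii `1 / 4` and `1 / 2` around `c₀`, with first and
second derivatives bounded by `M`. -/
structure IsCutoff (η : W → ℝ) (c₀ : W) (M : ℝ) : Prop where
  contDiff : ContDiff ℝ 2 η
  bound_nonneg : 0 ≤ M
  nonneg : ∀ x, 0 ≤ η x
  le_one : ∀ x, η x ≤ 1
  eq_one : ∀ x, ‖x - c₀‖ ≤ 1 / 4 → η x = 1
  eq_zero : ∀ x, 1 / 2 ≤ ‖x - c₀‖ → η x = 0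
  abs_fderiv_le : ∀ x v, |fderiv ℝ η x v| ≤ M * ‖v‖
  abs_fderiv_fderiv_le : ∀ x v, |fderiv ℝ (fderiv ℝ η) x v v| ≤ M * ‖v‖ ^ 2

lemma exists_isCutoff [FiniteDimensional ℝ W] (c₀ : W) :
    ∃ η : W → ℝ, ∃ M, IsCutoff η c₀ M := by
  obtain ⟨η, hIn, hOut⟩ : ∃ η : ContDiffBump c₀, η.rIn = 1 / 4 ∧ η.rOut = 1 / 2 :=
    ⟨⟨1 / 4, 1 / 2, by norm_num, by norm_num⟩, rfl, rfl⟩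
  have hη : ContDiff ℝ 2 η := η.contDiff
  obtain ⟨M₁, hM₁⟩ :=
    exists_norm_fderiv_le_of_hasCompactSupport (hη.of_le one_le_two) η.hasCompactSupport
  obtain ⟨M₂, hM₂⟩ := exists_norm_fderiv_le_of_hasCompactSupport
    (hη.fderiv_right le_rfl) (η.hasCompactSupport.fderiv ℝ)
  have hM : 0 ≤ M₁ := (norm_nonneg _).trans (hM₁ c₀)
  refine ⟨η, max M₁ M₂, hη, le_max_of_le_left hM, fun x ↦ η.nonneg, fun x ↦ η.le_one,
    fun x hx ↦ η.one_of_mem_closedBall (by rwa [hIn, mem_closedBall, dist_eq_norm]),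
    fun x hx ↦ η.zero_of_le_dist (by rwa [hOut, dist_eq_norm]), fun x v ↦ ?_, fun x v ↦ ?_⟩
  · rw [← Real.norm_eq_abs]
    exact (fderiv ℝ η x).le_of_opNorm_le ((hM₁ x).trans (le_max_left _ _)) v
  · rw [← Real.norm_eq_abs, sq, ← mul_assoc]
    refine ((fderiv ℝ (fderiv ℝ η) x).le_opNorm₂ v v).trans ?_
    gcongr
    exact (hM₂ x).trans (le_max_right _ _)

/-- The gauge `bellmanGauge κ u` of a point `(u, w)`, cut off to the cone where `w / u` lies in the
support of `η`. -/
noncomputable def cutoffGauge (η : W → ℝ) (κ : ℝ) (z : ℝ × W) : ℝ :=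
  bellmanGauge κ z.1 * η (z.1⁻¹ • z.2)

/-- The Bellman function `cutoffGauge η κ (u, w) - c (u² + ‖w‖²)^(1/2)` at `(u, w)`. -/
noncomputable def bellmanFunction (η : W → ℝ) (κ c : ℝ) (z : ℝ × W) : ℝ :=
  cutoffGauge η κ z - c * ‖WithLp.toLp 2 z‖

variable {η : W → ℝ} {κ c u a : ℝ}

lemma contDiffAt_norm_toLp (hu : 0 < u) (w : W) :
    ContDiffAt ℝ 2 (fun z : ℝ × W ↦ ‖WithLp.toLp 2 z‖) (u, w) :=
  ((WithLp.prodContinuousLinearEquiv 2 ℝ ℝ W).symm.contDiff.contDiffAt).norm ℝ fun h ↦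
    hu.ne' congr((WithLp.ofLp $h).1)

lemma fderiv_fderiv_norm_toLp (hu : 0 < u) (w b : W) :
    fderiv ℝ (fderiv ℝ fun z : ℝ × W ↦ ‖WithLp.toLp 2 z‖) (u, w) (a, b) (a, b) =
      ((u ^ 2 + ‖w‖ ^ 2) * (a ^ 2 + ‖b‖ ^ 2) - (u * a + ⟪w, b⟫) ^ 2) /
        ‖WithLp.toLp 2 (u, w)‖ ^ 3 := by
  let L : ℝ × W →L[ℝ] WithLp 2 (ℝ × W) := (WithLp.prodContinuousLinearEquiv 2 ℝ ℝ W).symm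
  have hne : L (u, w) ≠ 0 := fun h ↦ hu.ne' congr((WithLp.ofLp $h).1)
  have hL : fderiv ℝ L = fun _ ↦ L := funext fun _ ↦ L.fderiv
  have hnorm (z : ℝ × W) : ‖L z‖ ^ 2 = z.1 ^ 2 + ‖z.2‖ ^ 2 := by
    simp [L, WithLp.prod_norm_sq_eq_of_L2]
  have hinner : ⟪L (u, w), L (a, b)⟫ = u * a + ⟪w, b⟫ := by
    simp [L, WithLp.prod_inner_apply, mul_comm]
  have h := fderiv_fderiv_comp_apply_self (contDiffAt_norm ℝ hne) L.contDiff.contDiffAt (a, b)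
  rw [hL, fderiv_fderiv_norm_apply_self hne] at h
  simp only [hnorm, hinner, fderiv_fun_const, Pi.zero_apply, zero_apply, map_zero, add_zero] at h
  exact h

lemma norm_smul_sub_smul_sq_le (w b : W) : ‖u • b - a • w‖ ^ 2 ≤
    (u ^ 2 + ‖w‖ ^ 2) * (a ^ 2 + ‖b‖ ^ 2) - (u * a + ⟪w, b⟫) ^ 2 := by
  have hcs : ⟪w, b⟫ ^ 2 ≤ ‖w‖ ^ 2 * ‖b‖ ^ 2 := by
    rw [← mul_pow]
    exact sq_le_sq.2 ((abs_real_inner_le_norm w b).trans (le_abs_self _))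
  rw [norm_sub_sq_real, norm_smul, norm_smul, real_inner_smul_left, real_inner_smul_right,
    mul_pow, mul_pow, Real.norm_eq_abs, Real.norm_eq_abs, sq_abs, sq_abs, real_inner_comm w b]
  linarith

lemma norm_toLp_le_of_norm_sub_le {c₀ w : W} (hu : 0 < u) (hw : ‖u⁻¹ • w - c₀‖ ≤ 1 / 2) :
    ‖WithLp.toLp 2 (u, w)‖ ≤ u * (‖c₀‖ + 3 / 2) := by
  have hratio : ‖w‖ ≤ u * (‖c₀‖ + 1 / 2) := by
    rw [← inv_mul_le_iff₀ hu, ← abs_of_pos (inv_pos.2 hu), ← Real.norm_eq_abs, ← norm_smul]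
    linarith [norm_le_norm_add_norm_sub c₀ (u⁻¹ • w), norm_sub_rev c₀ (u⁻¹ • w)]
  have hadd : ‖WithLp.toLp 2 (u, w)‖ ≤ u + ‖w‖ := by
    refine le_of_sq_le_sq ?_ (by positivity)
    rw [WithLp.prod_norm_sq_eq_of_L2]
    change ‖u‖ ^ 2 + ‖w‖ ^ 2 ≤ (u + ‖w‖) ^ 2
    rw [Real.norm_of_nonneg hu.le]
    nlinarith [norm_nonneg w]
  linarith

lemma le_fderiv_fderiv_norm_toLp {c₀ w : W} (hu : 0 < u) (hw : ‖u⁻¹ • w - c₀‖ ≤ 1 / 2) (b : W) :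
    u * ‖u⁻¹ • (b - a • u⁻¹ • w)‖ ^ 2 ≤ (‖c₀‖ + 3 / 2) ^ 3 *
      fderiv ℝ (fderiv ℝ fun z : ℝ × W ↦ ‖WithLp.toLp 2 z‖) (u, w) (a, b) (a, b) := by
  have hpos : 0 < ‖WithLp.toLp 2 (u, w)‖ := norm_pos_iff.2 fun h ↦ hu.ne' congr((WithLp.ofLp $h).1)
  have hom : ‖u • b - a • w‖ ^ 2 = u ^ 4 * ‖u⁻¹ • (b - a • u⁻¹ • w)‖ ^ 2 := by
    have h : u • b - a • w = u ^ 2 • u⁻¹ • (b - a • u⁻¹ • w) := by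
      match_scalars <;> field_simp
    rw [h, norm_smul, norm_pow, Real.norm_eq_abs, sq_abs]
    ring
  rw [fderiv_fderiv_norm_toLp hu, ← mul_div_assoc, le_div_iff₀ (by positivity)]
  calc u * ‖u⁻¹ • (b - a • u⁻¹ • w)‖ ^ 2 * ‖WithLp.toLp 2 (u, w)‖ ^ 3
      ≤ u * ‖u⁻¹ • (b - a • u⁻¹ • w)‖ ^ 2 * (u * (‖c₀‖ + 3 / 2)) ^ 3 := by
        gcongr
        exact norm_toLp_le_of_norm_sub_le hu hw
    _ = (‖c₀‖ + 3 / 2) ^ 3 * ‖u • b - a • w‖ ^ 2 := by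
        rw [hom]
        ring
    _ ≤ _ := by
        gcongr
        exact norm_smul_sub_smul_sq_le w b

lemma fderiv_fderiv_norm_toLp_nonneg (hu : 0 < u) (w b : W) :
    0 ≤ fderiv ℝ (fderiv ℝ fun z : ℝ × W ↦ ‖WithLp.toLp 2 z‖) (u, w) (a, b) (a, b) := by
  rw [fderiv_fderiv_norm_toLp hu]
  exact div_nonneg ((sq_nonneg _).trans (norm_smul_sub_smul_sq_le w b)) (by positivity)

lemma contDiffAt_cutoffGauge (hη : ContDiff ℝ 2 η) (hu : 0 < u) (w : W) :
    ContDiffAt ℝ 2 (cutoffGauge η κ) (u, w) :=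
  contDiffAt_perspective (contDiffAt_bellmanGauge hu) hη hu.ne' w

lemma contDiffAt_bellmanFunction (hη : ContDiff ℝ 2 η) (hu : 0 < u) (w : W) :
    ContDiffAt ℝ 2 (bellmanFunction η κ c) (u, w) :=
  (contDiffAt_cutoffGauge hη hu w).sub (contDiffAt_const.mul (contDiffAt_norm_toLp hu w))

lemma fderiv_fderiv_bellmanFunction (hη : ContDiff ℝ 2 η) (hu : 0 < u) (w b : W) :
    fderiv ℝ (fderiv ℝ (bellmanFunction η κ c)) (u, w) (a, b) (a, b) =
      fderiv ℝ (fderiv ℝ (cutoffGauge η κ)) (u, w) (a, b) (a, b) -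
        c * fderiv ℝ (fderiv ℝ fun z : ℝ × W ↦ ‖WithLp.toLp 2 z‖) (u, w) (a, b) (a, b) := by
  have h := fderiv_fderiv_add_const_mul (contDiffAt_cutoffGauge (κ := κ) hη hu w)
    (contDiffAt_norm_toLp hu w) (-c) (a, b) (a, b)
  simp only [neg_mul, ← sub_eq_add_neg] at h
  exact h

variable {c₀ w : W} {M : ℝ}

lemma IsCutoff.cutoffGauge_nonneg (hη : IsCutoff η c₀ M) (hκ : 0 ≤ κ) (hu : 0 ≤ u) (w : W) :
    0 ≤ cutoffGauge η κ (u, w) :=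
  mul_nonneg (bellmanGauge_nonneg hκ hu) (hη.nonneg _)

lemma IsCutoff.cutoffGauge_le (hη : IsCutoff η c₀ M) (hκ : 0 ≤ κ) (hu : 0 ≤ u) (w : W) :
    cutoffGauge η κ (u, w) ≤ bellmanGauge κ u :=
  mul_le_of_le_one_right (bellmanGauge_nonneg hκ hu) (hη.le_one _)

lemma IsCutoff.le_cutoffGauge (hη : IsCutoff η c₀ M) (hκ : 0 ≤ κ) {N : ℝ} (hN : 0 ≤ N)
    (hu : 0 < u) (w : W) :
    (1 - (1 + N) ^ (-κ)) * (u - N - 4 * ‖w - u • c₀‖) ≤ cutoffGauge η κ (u, w) := by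
  have hfactor : 0 ≤ 1 - (1 + N) ^ (-κ) := sub_nonneg.2 (one_add_rpow_neg_le_one hκ hN)
  obtain hneg | hpos := le_or_gt (u - N - 4 * ‖w - u • c₀‖) 0
  · exact (mul_nonpos_of_nonneg_of_nonpos hfactor hneg).trans (hη.cutoffGauge_nonneg hκ hu.le w)
  have hnear : ‖u⁻¹ • w - c₀‖ ≤ 1 / 4 := by
    rw [← inv_smul_smul₀ hu.ne' c₀, ← smul_sub, norm_smul, Real.norm_of_nonneg (by positivity),
      inv_mul_le_iff₀ hu]
    linarith
  have hmono : (1 + u) ^ (-κ) ≤ (1 + N) ^ (-κ) :=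
    Real.rpow_le_rpow_of_nonpos (by linarith) (by linarith [norm_nonneg (w - u • c₀)])
      (by linarith)
  calc (1 - (1 + N) ^ (-κ)) * (u - N - 4 * ‖w - u • c₀‖)
      ≤ (1 - (1 + u) ^ (-κ)) * u := by
        refine mul_le_mul (by linarith) ?_ hpos.le (by linarith)
        linarith [norm_nonneg (w - u • c₀)]
    _ = cutoffGauge η κ (u, w) := by
        rw [cutoffGauge, hη.eq_one _ hnear, bellmanGauge]
        ring

lemma IsCutoff.mul_deriv_bellmanGauge_sub_div_mul_fderiv_le (hη : IsCutoff η c₀ M) (hκ : 0 ≤ κ)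
    (hκ1 : κ ≤ 1) (hu : 0 < u) (l : ℝ) (x v : W) :
    2 * (l * u) * (deriv (bellmanGauge κ) u - bellmanGauge κ u / u) * fderiv ℝ η x v ≤
      u * (κ * l ^ 2 + M ^ 2 * ‖v‖ ^ 2) := by
  calc 2 * (l * u) * (deriv (bellmanGauge κ) u - bellmanGauge κ u / u) * fderiv ℝ η x v
      ≤ 2 * (|l| * u) * κ * (M * ‖v‖) := by
        refine (le_abs_self _).trans ?_
        rw [abs_mul, abs_mul, abs_mul, abs_mul, abs_of_pos hu, abs_two]
        gcongr
        · exact abs_deriv_bellmanGauge_sub_div_le hκ hu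
        · exact hη.abs_fderiv_le x v
    _ = u * (κ * (2 * |l| * (M * ‖v‖))) := by ring
    _ ≤ u * (κ * (|l| ^ 2 + (M * ‖v‖) ^ 2)) := by
        gcongr
        exact two_mul_le_add_sq _ _
    _ ≤ u * (κ * l ^ 2 + 1 * (M * ‖v‖) ^ 2) := by
        rw [sq_abs, mul_add κ]
        gcongr
    _ = u * (κ * l ^ 2 + M ^ 2 * ‖v‖ ^ 2) := by ring

lemma IsCutoff.fderiv_fderiv_cutoffGauge_le (hη : IsCutoff η c₀ M) (hκ : 0 ≤ κ) (hκ1 : κ ≤ 1)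
    (hu : 0 < u) (w b : W) :
    fderiv ℝ (fderiv ℝ (cutoffGauge η κ)) (u, w) (a, b) (a, b) ≤
      u * (3 * κ * (a / u) ^ 2 + (M ^ 2 + M) * ‖u⁻¹ • (b - a • u⁻¹ • w)‖ ^ 2) := by
  unfold cutoffGauge
  rw [fderiv_fderiv_perspective_apply_self (contDiffAt_bellmanGauge hu) hη.contDiff hu.ne']
  obtain ⟨l, rfl⟩ : ∃ l, a = l * u := ⟨a / u, (div_mul_cancel₀ a hu.ne').symm⟩
  rw [mul_div_cancel_right₀ l hu.ne']
  set x := u⁻¹ • w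
  set ω := u⁻¹ • (b - (l * u) • x)
  have hsecond : deriv (deriv (bellmanGauge κ)) u * (l * u) ^ 2 * η x ≤ u * (2 * κ * l ^ 2) := by
    calc deriv (deriv (bellmanGauge κ)) u * (l * u) ^ 2 * η x
        = u * l ^ 2 * η x * (u * deriv (deriv (bellmanGauge κ)) u) := by ring
      _ ≤ u * l ^ 2 * η x * (2 * κ) := by
        have := hη.nonneg x
        exact mul_le_mul_of_nonneg_left (mul_deriv_deriv_bellmanGauge_le hκ hu) (by positivity)
      _ ≤ u * l ^ 2 * 1 * (2 * κ) := by
        gcongr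
        exact hη.le_one x
      _ = u * (2 * κ * l ^ 2) := by ring
  have hmixed := hη.mul_deriv_bellmanGauge_sub_div_mul_fderiv_le hκ hκ1 hu l x ω
  have hthird : bellmanGauge κ u * fderiv ℝ (fderiv ℝ η) x ω ω ≤ u * (M * ‖ω‖ ^ 2) := by
    have := hη.bound_nonneg
    calc bellmanGauge κ u * fderiv ℝ (fderiv ℝ η) x ω ω
        ≤ bellmanGauge κ u * (M * ‖ω‖ ^ 2) := by
          have := bellmanGauge_nonneg hκ hu.le
          gcongr
          exact (le_abs_self _).trans (hη.abs_fderiv_fderiv_le x ω)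
      _ ≤ u * (M * ‖ω‖ ^ 2) := by
          gcongr
          exact bellmanGauge_le hu.le
  linarith

lemma IsCutoff.fderiv_fderiv_bellmanFunction_le (hη : IsCutoff η c₀ M) (hκ : 0 ≤ κ) (hκ1 : κ ≤ 1)
    {A : ℝ} (hA : 0 ≤ A) (hc : (‖c₀‖ + 3 / 2) ^ 3 * (A + M ^ 2 + M) ≤ c) (hu : 0 < u)
    (hw : ‖u⁻¹ • w - c₀‖ ≤ 1 / 2) (b : W) :
    fderiv ℝ (fderiv ℝ (bellmanFunction η κ c)) (u, w) (a, b) (a, b) ≤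
      u * (3 * κ * (a / u) ^ 2 - A * ‖u⁻¹ • (b - a • u⁻¹ • w)‖ ^ 2) := by
  have hnorm : (A + M ^ 2 + M) * (u * ‖u⁻¹ • (b - a • u⁻¹ • w)‖ ^ 2) ≤
      c * fderiv ℝ (fderiv ℝ fun z : ℝ × W ↦ ‖WithLp.toLp 2 z‖) (u, w) (a, b) (a, b) := by
    have := hη.bound_nonneg
    refine (mul_le_mul_of_nonneg_left (le_fderiv_fderiv_norm_toLp hu hw b)
      (by positivity)).trans ?_
    rw [← mul_assoc, mul_comm (A + M ^ 2 + M)]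
    exact mul_le_mul_of_nonneg_right hc (fderiv_fderiv_norm_toLp_nonneg hu w b)
  rw [fderiv_fderiv_bellmanFunction hη.contDiff hu]
  linarith [hη.fderiv_fderiv_cutoffGauge_le hκ hκ1 hu w b (a := a)]

lemma IsCutoff.fderiv_fderiv_bellmanFunction_nonpos (hη : IsCutoff η c₀ M) (hc : 0 ≤ c)
    (hu : 0 < u) (hw : 1 / 2 < ‖u⁻¹ • w - c₀‖) (b : W) :
    fderiv ℝ (fderiv ℝ (bellmanFunction η κ c)) (u, w) (a, b) (a, b) ≤ 0 := by
  have hη0 : η =ᶠ[𝓝 (u⁻¹ • w)] fun _ ↦ 0 := by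
    have hcont : Continuous fun x : W ↦ ‖x - c₀‖ := by fun_prop
    filter_upwards [hcont.continuousAt.eventually (lt_mem_nhds hw)] with x hx
    exact hη.eq_zero x hx.le
  have hdη : fderiv ℝ (fderiv ℝ η) (u⁻¹ • w) = 0 := by
    rw [(hη0.fderiv (𝕜 := ℝ)).fderiv_eq]
    simp
  rw [fderiv_fderiv_bellmanFunction hη.contDiff hu]
  unfold cutoffGauge
  rw [fderiv_fderiv_perspective_apply_self (contDiffAt_bellmanGauge hu) hη.contDiff hu.ne',
    hη0.eq_of_nhds, hη0.fderiv_eq, hdη]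
  simpa using mul_nonneg hc (fderiv_fderiv_norm_toLp_nonneg hu w b)

end BellmanFunction

section Frames

variable {E : Type*} [NormedAddCommGroup E] [InnerProductSpace ℝ E] [FiniteDimensional ℝ E]

/-- The space of `dim E`-tuples of vectors of `E`, with its Euclidean norm. -/
abbrev Frame (E : Type*) [NormedAddCommGroup E] [InnerProductSpace ℝ E] : Type _ :=
  PiLp 2 fun _ : Fin (finrank ℝ E) ↦ E

variable (E) in
/-- The standard orthonormal basis of `E`, as a frame. -/
noncomputable def stdFrame : Frame E := WithLp.toLp 2 (stdOrthonormalBasis ℝ E)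

lemma norm_sq_le_four_mul_sum_inner_sq {ζ : Frame E} (hζ : ‖ζ - stdFrame E‖ ≤ 1 / 2) (x : E) :
    ‖x‖ ^ 2 ≤ 4 * ∑ i, ⟪ζ i, x⟫ ^ 2 := by
  set b := stdOrthonormalBasis ℝ E
  have hdiff : ∑ i, ⟪ζ i - b i, x⟫ ^ 2 ≤ 1 / 4 * ‖x‖ ^ 2 := by
    calc ∑ i, ⟪ζ i - b i, x⟫ ^ 2
        ≤ ∑ i, ‖ζ i - b i‖ ^ 2 * ‖x‖ ^ 2 := by
          gcongr with i
          rw [← mul_pow]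
          exact sq_le_sq.2 ((abs_real_inner_le_norm _ _).trans (le_abs_self _))
      _ = ‖ζ - stdFrame E‖ ^ 2 * ‖x‖ ^ 2 := by
          rw [← Finset.sum_mul, PiLp.norm_sq_eq_of_L2]
          rfl
      _ ≤ (1 / 2) ^ 2 * ‖x‖ ^ 2 := by gcongr
      _ = 1 / 4 * ‖x‖ ^ 2 := by norm_num
  have hsplit : ‖x‖ ^ 2 ≤ ∑ i, (2 * ⟪ζ i, x⟫ ^ 2 + 2 * ⟪ζ i - b i, x⟫ ^ 2) := by
    rw [← b.sum_sq_inner_right x]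
    gcongr with i
    rw [inner_sub_left]
    nlinarith [sq_nonneg (2 * ⟪ζ i, x⟫ - ⟪b i, x⟫)]
  rw [Finset.sum_add_distrib, ← Finset.mul_sum, ← Finset.mul_sum] at hsplit
  linarith

lemma sum_sq_sum_inner_le (ω : Fin (finrank ℝ E) → Frame E) :
    ∑ i, (∑ j, ⟪ω j i, stdOrthonormalBasis ℝ E j⟫) ^ 2 ≤ finrank ℝ E * ∑ j, ‖ω j‖ ^ 2 := by
  simp_rw [PiLp.norm_sq_eq_of_L2]
  rw [Finset.sum_comm, Finset.mul_sum]
  gcongr with i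
  calc (∑ j, ⟪ω j i, stdOrthonormalBasis ℝ E j⟫) ^ 2
      ≤ finrank ℝ E * ∑ j, ⟪ω j i, stdOrthonormalBasis ℝ E j⟫ ^ 2 := by
        simpa using sq_sum_le_card_mul_sum_sq (s := Finset.univ)
          (f := fun j ↦ ⟪ω j i, stdOrthonormalBasis ℝ E j⟫)
    _ ≤ finrank ℝ E * ∑ j, ‖ω j i‖ ^ 2 := by
        gcongr _ * ∑ j, ?_ with j
        simpa using sq_le_sq.2 ((abs_real_inner_le_norm (ω j i) (stdOrthonormalBasis ℝ E j)).trans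
          (le_abs_self _))

lemma sum_sq_le_of_abs_sum_inner_le {ζ : Frame E} (hζ : ‖ζ - stdFrame E‖ ≤ 1 / 2)
    {l : Fin (finrank ℝ E) → ℝ} {ω : Fin (finrank ℝ E) → Frame E} {K : ℝ}
    (hK : ∀ i, |∑ j, ⟪ω j i + l j • ζ i, stdOrthonormalBasis ℝ E j⟫| ≤ K) :
    ∑ j, l j ^ 2 ≤ 8 * finrank ℝ E * (K ^ 2 + ∑ j, ‖ω j‖ ^ 2) := by
  set b := stdOrthonormalBasis ℝ E
  set x := ∑ j, l j • b j with hx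
  have hinner (i) : ⟪ζ i, x⟫ =
      ∑ j, ⟪ω j i + l j • ζ i, b j⟫ - ∑ j, ⟪ω j i, b j⟫ := by
    rw [← Finset.sum_sub_distrib]
    simp [hx, inner_sum, inner_add_left, real_inner_smul_left, real_inner_smul_right]
  calc ∑ j, l j ^ 2 = ‖x‖ ^ 2 := by
        rw [← b.sum_sq_inner_right x]
        simp [hx, b.orthonormal.inner_right_fintype]
    _ ≤ 4 * ∑ i, ⟪ζ i, x⟫ ^ 2 := norm_sq_le_four_mul_sum_inner_sq hζ x
    _ ≤ 4 * ∑ i, (2 * K ^ 2 + 2 * (∑ j, ⟪ω j i, b j⟫) ^ 2) := by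
        gcongr with i
        rw [hinner]
        nlinarith [sq_le_sq' (abs_le.1 (hK i)).1 (abs_le.1 (hK i)).2,
          sq_nonneg (∑ j, ⟪ω j i + l j • ζ i, b j⟫ + ∑ j, ⟪ω j i, b j⟫)]
    _ = 8 * (finrank ℝ E * K ^ 2 + ∑ i, (∑ j, ⟪ω j i, b j⟫) ^ 2) := by
        simp only [Finset.sum_add_distrib, ← Finset.mul_sum, Finset.sum_const, Finset.card_univ,
          Fintype.card_fin, nsmul_eq_mul]
        ring
    _ ≤ 8 * (finrank ℝ E * K ^ 2 + finrank ℝ E * ∑ j, ‖ω j‖ ^ 2) := by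
        gcongr
        exact sum_sq_sum_inner_le ω
    _ = 8 * finrank ℝ E * (K ^ 2 + ∑ j, ‖ω j‖ ^ 2) := by ring

/-- A coefficient of the norm for which `bellmanFunction` is nearly concave along the increments
occurring in a heat flow of frames, given a cutoff with derivatives bounded by `M`. -/
noncomputable def bellmanCoefficient (E : Type*) [NormedAddCommGroup E] [InnerProductSpace ℝ E]
    [FiniteDimensional ℝ E] (M : ℝ) : ℝ :=
  (‖stdFrame E‖ + 3 / 2) ^ 3 * (24 * finrank ℝ E + M ^ 2 + M)

lemma bellmanCoefficient_nonneg {M : ℝ} (hM : 0 ≤ M) : 0 ≤ bellmanCoefficient E M := by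
  unfold bellmanCoefficient
  positivity

lemma IsCutoff.sum_fderiv_fderiv_bellmanFunction_le {η : Frame E → ℝ} {M κ K u : ℝ}
    (hη : IsCutoff η (stdFrame E) M) (hκ : 0 ≤ κ) (hκ1 : κ ≤ 1) (hu : 0 < u) (w : Frame E)
    {ξ : Fin (finrank ℝ E) → ℝ × Frame E}
    (hξ : ∀ i, |∑ j, ⟪(ξ j).2 i, stdOrthonormalBasis ℝ E j⟫| ≤ K * u) :
    ∑ j, fderiv ℝ (fderiv ℝ (bellmanFunction η κ (bellmanCoefficient E M))) (u, w) (ξ j) (ξ j) ≤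
      24 * finrank ℝ E * K ^ 2 * κ * u := by
  obtain hw | hw := lt_or_ge (1 / 2) ‖u⁻¹ • w - stdFrame E‖
  · exact (Finset.sum_nonpos fun j _ ↦ hη.fderiv_fderiv_bellmanFunction_nonpos
      (bellmanCoefficient_nonneg hη.bound_nonneg) hu hw (ξ j).2 (a := (ξ j).1)).trans
      (by positivity)
  set l := fun j ↦ (ξ j).1 / u
  set ω := fun j ↦ u⁻¹ • ((ξ j).2 - (ξ j).1 • u⁻¹ • w)
  have hincr (i j) : ω j i + l j • (u⁻¹ • w) i = u⁻¹ • (ξ j).2 i := by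
    simp only [ω, l, PiLp.smul_apply, PiLp.sub_apply]
    match_scalars <;> field_simp
    ring
  have hl : ∑ j, l j ^ 2 ≤ 8 * finrank ℝ E * (K ^ 2 + ∑ j, ‖ω j‖ ^ 2) := by
    refine sum_sq_le_of_abs_sum_inner_le hw fun i ↦ ?_
    simp_rw [hincr, real_inner_smul_left]
    rw [← Finset.mul_sum, abs_mul, abs_of_pos (inv_pos.2 hu), inv_mul_le_iff₀ hu, mul_comm u]
    exact hξ i
  have hκω : κ * ∑ j, ‖ω j‖ ^ 2 ≤ 1 * ∑ j, ‖ω j‖ ^ 2 := by gcongr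
  calc ∑ j, fderiv ℝ (fderiv ℝ (bellmanFunction η κ (bellmanCoefficient E M))) (u, w) (ξ j) (ξ j)
      ≤ ∑ j, u * (3 * κ * l j ^ 2 - 24 * finrank ℝ E * ‖ω j‖ ^ 2) := by
        gcongr with j
        exact hη.fderiv_fderiv_bellmanFunction_le hκ hκ1 (by positivity) le_rfl hu hw (ξ j).2
    _ = u * (3 * κ * ∑ j, l j ^ 2 - 24 * finrank ℝ E * ∑ j, ‖ω j‖ ^ 2) := by
        rw [← Finset.mul_sum, Finset.sum_sub_distrib, Finset.mul_sum, Finset.mul_sum]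
    _ ≤ u * (3 * κ * (8 * finrank ℝ E * (K ^ 2 + ∑ j, ‖ω j‖ ^ 2)) -
          24 * finrank ℝ E * (κ * ∑ j, ‖ω j‖ ^ 2)) := by
        gcongr
        linarith
    _ = 24 * finrank ℝ E * K ^ 2 * κ * u := by ring

end Frames

section HeatBounds

variable {E F : Type*} [NormedAddCommGroup E] [InnerProductSpace ℝ E] [NormedAddCommGroup F]
  [NormedSpace ℝ F] {t : ℝ}

lemma heatKernel_le (ht : 0 < t) (x : E) :
    heatKernel (t, x) ≤ (4 * Real.pi * t) ^ (-(finrank ℝ E : ℝ) / 2) := by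
  refine mul_le_of_le_one_right (by positivity) (Real.exp_le_one_iff.2 ?_)
  rw [neg_div, Left.neg_nonpos_iff]
  positivity

lemma heatKernel_mul_norm_sq_le (ht : 0 < t) (x : E) :
    heatKernel (t, x) * ‖x‖ ^ 2 ≤
      8 * t * 2 ^ ((finrank ℝ E : ℝ) / 2) * heatKernel (2 * t, x) := by
  set s := ‖x‖ ^ 2 / (8 * t) with hs
  have hexp : Real.exp (-‖x‖ ^ 2 / (4 * t)) =
      Real.exp (-‖x‖ ^ 2 / (4 * (2 * t))) * Real.exp (-s) := by
    rw [← Real.exp_add, hs]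
    congr 1
    field_simp
    ring
  have hpow : (4 * Real.pi * t) ^ (-(finrank ℝ E : ℝ) / 2) =
      2 ^ ((finrank ℝ E : ℝ) / 2) * (4 * Real.pi * (2 * t)) ^ (-(finrank ℝ E : ℝ) / 2) := by
    rw [show 4 * Real.pi * (2 * t) = 2 * (4 * Real.pi * t) by ring,
      Real.mul_rpow zero_le_two (by positivity), ← mul_assoc, ← Real.rpow_add two_pos]
    simp [neg_div]
  have hs1 : s * Real.exp (-s) ≤ 1 := by
    rw [Real.exp_neg, ← div_eq_mul_inv, div_le_one (Real.exp_pos _)]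
    linarith [Real.add_one_le_exp s]
  calc heatKernel (t, x) * ‖x‖ ^ 2
      = 8 * t * 2 ^ ((finrank ℝ E : ℝ) / 2) * heatKernel (2 * t, x) * (s * Real.exp (-s)) := by
        simp only [heatKernel]
        rw [hexp, hpow, hs]
        field_simp
    _ ≤ 8 * t * 2 ^ ((finrank ℝ E : ℝ) / 2) * heatKernel (2 * t, x) := by
        have := heatKernel_pos (z := (2 * t, x)) (by simpa [upperHalfSpace])
        exact mul_le_of_le_one_right (by positivity) hs1

lemma norm_heatExtension_le [MeasurableSpace E] {μ : Measure E} {f : E → F} (ht : 0 < t)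
    (x : E) : ‖heatExtension μ f (t, x)‖ ≤ heatExtension μ (fun y ↦ ‖f y‖) (t, x) := by
  refine (norm_integral_le_integral_norm _).trans_eq ?_
  simp only [norm_smul, heatExtension, spatialConv, smul_eq_mul, Real.norm_eq_abs,
    abs_of_pos (heatKernel_pos (sub_mem_upperHalfSpace (z := (t, x)) ht _))]

/-- The density at time `t` of the measure `μ` evolved by the heat flow. -/
noncomputable def heatDensity [MeasurableSpace E] (μ : Measure E) : ℝ × E → ℝ :=
  heatExtension μ fun _ ↦ (1 : ℝ)

lemma heatDensity_le [MeasurableSpace E] (μ : Measure E) [IsFiniteMeasure μ] (ht : 0 < t)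
    (x : E) :
    heatDensity μ (t, x) ≤ (4 * Real.pi * t) ^ (-(finrank ℝ E : ℝ) / 2) * μ.real Set.univ := by
  refine (le_abs_self _).trans (norm_integral_le_of_norm_le_const
    (f := fun y ↦ heatKernel ((t, x) - (0, y)) • (1 : ℝ)) (.of_forall fun y ↦ ?_))
  have hpos := heatKernel_pos (sub_mem_upperHalfSpace (z := (t, x)) ht y)
  rw [norm_smul, norm_one, mul_one, Real.norm_of_nonneg hpos.le]
  simpa using heatKernel_le ht (x - y)

end HeatBounds

section HeatFlowEstimates

variable {E F : Type*} [NormedAddCommGroup E] [InnerProductSpace ℝ E] [FiniteDimensional ℝ E]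
  [MeasurableSpace E] [BorelSpace E] [NormedAddCommGroup F] [NormedSpace ℝ F] {μ : Measure E}
  {t : ℝ} {z : ℝ × E}

section

variable [CompleteSpace F] {G : Type*} [NormedAddCommGroup G] [NormedSpace ℝ G] [CompleteSpace G]
  {R : ℝ} (hR : ∀ᵐ y ∂μ, ‖y‖ ≤ R) {f : E → F} (hf : Integrable f μ)
include hR hf

lemma map_heatExtension (L : F →L[ℝ] G) (hz : z ∈ upperHalfSpace E) :
    L (heatExtension μ f z) = heatExtension μ (fun y ↦ L (f y)) z := by
  simp only [heatExtension, spatialConv]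
  rw [← L.integral_comp_comm
    (integrable_spatialConv hR hf (contDiffOn_heatKernel (N := 0)).continuousOn hz)]
  simp only [map_smul]

lemma map_fderiv_heatExtension (L : F →L[ℝ] G) (hz : z ∈ upperHalfSpace E) (v : ℝ × E) :
    L (fderiv ℝ (heatExtension μ f) z v) = fderiv ℝ (heatExtension μ fun y ↦ L (f y)) z v := by
  rw [fderiv_heatExtension_apply hR hf hz, fderiv_heatExtension_apply hR (L.integrable_comp hf) hz,
    ← L.integral_comp_comm (integrable_spatialConv hR hf
      (contDiffOn_fderiv_heatKernel_apply v).continuousOn hz)]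
  simp only [map_smul]

end

lemma integral_heatKernel (ht : 0 < t) : ∫ x : E, heatKernel (t, x) = 1 := by
  have hexp (x : E) : heatKernel (t, x) =
      (4 * Real.pi * t) ^ (-(finrank ℝ E : ℝ) / 2) * Real.exp (-(1 / (4 * t)) * ‖x‖ ^ 2) := by
    simp only [heatKernel]
    congr 2
    ring
  have hbase : Real.pi / (1 / (4 * t)) = 4 * Real.pi * t := by field_simp
  simp_rw [hexp]
  rw [integral_const_mul, GaussianFourier.integral_rexp_neg_mul_sq_norm (by positivity), hbase,
    ← Real.rpow_add (by positivity), neg_div, neg_add_cancel, Real.rpow_zero]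

lemma integrable_heatKernel_sub (ht : 0 < t) (y : E) :
    Integrable fun x ↦ heatKernel ((t, x) - (0, y)) := by
  simpa using (integrable_of_integral_eq_one (integral_heatKernel ht)).comp_sub_right y

lemma integral_heatKernel_sub (ht : 0 < t) (y : E) :
    ∫ x, heatKernel ((t, x) - (0, y)) = 1 := by
  simpa [integral_heatKernel ht] using
    integral_sub_right_eq_self (fun x ↦ heatKernel (t, x)) y (μ := volume)

section

variable {f : E → F} (hf : Integrable f μ) (ht : 0 < t)
include hf ht

lemma integrable_prod_heatKernel_smul :
    Integrable (fun q : E × E ↦ heatKernel ((t, q.2) - (0, q.1)) • f q.1) (μ.prod volume) := by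
  have hcont : Continuous fun q : E × E ↦ heatKernel ((t, q.2) - (0, q.1)) :=
    (contDiffOn_heatKernel (N := 0)).continuousOn.comp_continuous (by fun_prop)
      fun q ↦ sub_mem_upperHalfSpace (z := (t, q.2)) ht q.1
  have hpos (x y : E) : ‖heatKernel ((t, x) - (0, y))‖ = heatKernel ((t, x) - (0, y)) :=
    Real.norm_of_nonneg (heatKernel_pos (sub_mem_upperHalfSpace (z := (t, x)) ht y)).le
  have hmeas : AEStronglyMeasurable
      (fun q : E × E ↦ heatKernel ((t, q.2) - (0, q.1)) • f q.1) (μ.prod volume) :=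
    hcont.aestronglyMeasurable.smul hf.aestronglyMeasurable.comp_fst
  rw [integrable_prod_iff hmeas]
  refine ⟨.of_forall fun y ↦ (integrable_heatKernel_sub ht y).smul_const (f y), ?_⟩
  simpa only [norm_smul, hpos, integral_mul_const, integral_heatKernel_sub ht, one_mul] using
    hf.norm

variable [SFinite μ]

lemma integrable_heatExtension : Integrable fun x ↦ heatExtension μ f (t, x) :=
  (integrable_prod_heatKernel_smul hf ht).integral_prod_right

lemma integral_heatExtension [CompleteSpace F] :
    ∫ x, heatExtension μ f (t, x) = ∫ y, f y ∂μ := by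
  calc ∫ x, heatExtension μ f (t, x)
      = ∫ y, (∫ x, heatKernel ((t, x) - (0, y)) • f y) ∂μ :=
        (integral_integral_swap (f := fun y x ↦ heatKernel ((t, x) - (0, y)) • f y)
          (integrable_prod_heatKernel_smul hf ht)).symm
    _ = ∫ y, f y ∂μ := by
        simp_rw [integral_smul_const, integral_heatKernel_sub ht, one_smul]

lemma integral_norm_heatExtension_le :
    ∫ x, ‖heatExtension μ f (t, x)‖ ≤ ∫ y, ‖f y‖ ∂μ := by
  rw [← integral_heatExtension hf.norm ht]
  exact integral_mono (integrable_heatExtension hf ht).norm (integrable_heatExtension hf.norm ht)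
    (norm_heatExtension_le ht)

end

section

variable [IsFiniteMeasure μ]

lemma integrable_heatDensity (ht : 0 < t) : Integrable fun x ↦ heatDensity μ (t, x) :=
  integrable_heatExtension (integrable_const 1) ht

lemma integral_heatDensity (ht : 0 < t) : ∫ x, heatDensity μ (t, x) = μ.real Set.univ := by
  simp [heatDensity, integral_heatExtension (integrable_const (1 : ℝ)) ht]

end

section

variable [IsFiniteMeasure μ] {R : ℝ} (hR : ∀ᵐ y ∂μ, ‖y‖ ≤ R)
include hR

lemma integrable_heatKernel_smul_one (hz : z ∈ upperHalfSpace E) :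
    Integrable (fun y ↦ heatKernel (z - (0, y)) • (1 : ℝ)) μ :=
  integrable_spatialConv hR (integrable_const 1) (contDiffOn_heatKernel (N := 0)).continuousOn hz

lemma heatDensity_pos [NeZero μ] (hz : z ∈ upperHalfSpace E) : 0 < heatDensity μ z := by
  have hpos (y : E) : 0 < heatKernel (z - (0, y)) • (1 : ℝ) := by
    simpa using heatKernel_pos (sub_mem_upperHalfSpace hz y)
  refine (integral_pos_iff_support_of_nonneg (fun y ↦ (hpos y).le)
    (integrable_heatKernel_smul_one hR hz)).2 ?_
  rw [Function.support_eq_univ fun y ↦ (hpos y).ne']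
  exact NeZero.pos _

lemma abs_heatExtension_le_mul_heatDensity {a : E → ℝ} {K : ℝ} (ha : ∀ᵐ y ∂μ, |a y| ≤ K)
    (hz : z ∈ upperHalfSpace E) : |heatExtension μ a z| ≤ K * heatDensity μ z := by
  simp only [heatDensity, heatExtension, spatialConv]
  rw [← integral_const_mul]
  refine norm_integral_le_of_norm_le (f := fun y ↦ heatKernel (z - (0, y)) • a y)
    ((integrable_heatKernel_smul_one hR hz).const_mul K) ?_
  filter_upwards [ha] with y hy
  have hpos := heatKernel_pos (sub_mem_upperHalfSpace hz y)
  rw [norm_smul, Real.norm_of_nonneg hpos.le, smul_eq_mul, mul_one, mul_comm]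
  gcongr
  exact hy

lemma heatDensity_restrict_sub_le_indicator {K U : Set E} (hK : MeasurableSet K) {ρ : ℝ}
    (hρ : 0 < ρ) (hKU : ∀ y ∈ K, ∀ x, x ∉ U → ρ ≤ ‖x - y‖) (ht : 0 < t) (x : E) :
    heatDensity (μ.restrict K) (t, x) -
        8 * t * 2 ^ ((finrank ℝ E : ℝ) / 2) / ρ ^ 2 * heatDensity (μ.restrict K) (2 * t, x) ≤
      U.indicator (fun x ↦ heatDensity μ (t, x)) x := by
  have ht2 : 0 < 2 * t := by positivity
  have hpos {s : ℝ} (hs : 0 < s) (y : E) : 0 ≤ heatKernel ((s, x) - (0, y)) • (1 : ℝ) := by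
    simpa using (heatKernel_pos (sub_mem_upperHalfSpace (z := (s, x)) hs y)).le
  have hint {s : ℝ} (hs : 0 < s) := integrable_heatKernel_smul_one hR (z := (s, x)) hs
  by_cases hx : x ∈ U
  · have hmono : heatDensity (μ.restrict K) (t, x) ≤ heatDensity μ (t, x) :=
      setIntegral_le_integral (hint ht) (.of_forall (hpos ht))
    have hnonneg : 0 ≤ heatDensity (μ.restrict K) (2 * t, x) := integral_nonneg (hpos ht2)
    rw [Set.indicator_of_mem hx, sub_le_iff_le_add]
    exact hmono.trans (le_add_of_nonneg_right (by positivity))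
  · rw [Set.indicator_of_notMem hx, sub_nonpos]
    simp only [heatDensity, heatExtension, spatialConv]
    rw [← integral_const_mul]
    refine setIntegral_mono_on (hint ht).integrableOn ((hint ht2).integrableOn.const_mul _) hK
      fun y hy ↦ ?_
    simp only [smul_eq_mul, mul_one, Prod.mk_sub_mk, sub_zero]
    rw [div_mul_eq_mul_div, le_div_iff₀ (by positivity)]
    refine le_trans ?_ (heatKernel_mul_norm_sq_le ht (x - y))
    have := heatKernel_pos (z := (t, x - y)) ht
    gcongr
    exact hKU y hy x hx

end

end HeatFlowEstimates

section Subsolutions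

variable {E : Type*} [NormedAddCommGroup E] [InnerProductSpace ℝ E] [FiniteDimensional ℝ E]

lemma isHeatSubsolution_add_const_mul_time_mul {A U : ℝ × E → ℝ} {c : ℝ}
    (hA : ContDiffOn ℝ 2 A (upperHalfSpace E)) (hU : ContDiffOn ℝ 2 U (upperHalfSpace E))
    (hUt : ∀ z ∈ upperHalfSpace E, fderiv ℝ U z (1, 0) = spaceLaplacian U z)
    (hAt : ∀ z ∈ upperHalfSpace E, spaceLaplacian A z ≤ fderiv ℝ A z (1, 0) + c * U z) :
    IsHeatSubsolution fun z ↦ A z + c * (z.1 * U z) := by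
  have hQ : ContDiffOn ℝ 2 (fun z ↦ A z + c * (z.1 * U z)) (upperHalfSpace E) :=
    hA.add (contDiffOn_const.mul (contDiffOn_fst.mul hU))
  refine ⟨hQ, fun z hz ↦ ?_⟩
  have hdiff {f : ℝ × E → ℝ} (hf : ContDiffOn ℝ 2 f (upperHalfSpace E)) :
      HasFDerivAt f (fderiv ℝ f z) z :=
    ((hf.contDiffAt ((isOpen_upperHalfSpace E).mem_nhds hz)).differentiableAt
      two_ne_zero).hasFDerivAt
  have htime : fderiv ℝ (fun z ↦ A z + c * (z.1 * U z)) z (1, 0) =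
      fderiv ℝ A z (1, 0) + c * (z.1 * fderiv ℝ U z (1, 0) + U z) := by
    rw [((hdiff hA).fun_add ((hasFDerivAt_fst.fun_mul (hdiff hU)).const_mul c)).fderiv]
    simp [mul_add]
  have hspace : spaceLaplacian (fun z ↦ A z + c * (z.1 * U z)) z =
      spaceLaplacian A z + c * (z.1 * spaceLaplacian U z) := by
    obtain ⟨t, x⟩ := z
    rw [← laplacian_slice hQ hz, ← laplacian_slice hA hz, ← laplacian_slice hU hz]
    simp only [laplacian_eq_sum_fderiv_fderiv, ← mul_assoc, fderiv_fderiv_add_const_mul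
      (contDiff_slice hA hz).contDiffAt (contDiff_slice hU hz).contDiffAt,
      Finset.sum_add_distrib, Finset.mul_sum]
  rw [htime, hspace, hUt z hz]
  linarith [hAt z hz]

variable [MeasurableSpace E] [BorelSpace E] {μ : Measure E} {z : ℝ × E}

lemma spaceLaplacian_comp_heatExtension {F : Type*} [NormedAddCommGroup F] [NormedSpace ℝ F]
    {R : ℝ} (hR : ∀ᵐ y ∂μ, ‖y‖ ≤ R) {f : E → F} (hf : Integrable f μ) (hz : z ∈ upperHalfSpace E)
    {Φ : F → ℝ} (hΦ : ContDiffAt ℝ 2 Φ (heatExtension μ f z)) :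
    spaceLaplacian (fun z ↦ Φ (heatExtension μ f z)) z =
      fderiv ℝ (fun z ↦ Φ (heatExtension μ f z)) z (1, 0) +
        ∑ j, fderiv ℝ (fderiv ℝ Φ) (heatExtension μ f z)
          (fderiv ℝ (heatExtension μ f) z (0, stdOrthonormalBasis ℝ E j))
          (fderiv ℝ (heatExtension μ f) z (0, stdOrthonormalBasis ℝ E j)) := by
  have hu : ContDiffAt ℝ 2 (heatExtension μ f) z :=
    (contDiffOn_heatExtension hR hf 2).contDiffAt ((isOpen_upperHalfSpace E).mem_nhds hz)
  rw [fderiv_fun_comp z (hΦ.differentiableAt two_ne_zero) (hu.differentiableAt two_ne_zero)]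
  simp only [ContinuousLinearMap.comp_apply, fderiv_heatExtension_time hR hf hz, spaceLaplacian,
    map_sum, fderiv_fderiv_comp_apply_self hΦ hu, Finset.sum_add_distrib]
  rw [add_comm]

end Subsolutions

section FrameFlow

variable {E : Type*} [NormedAddCommGroup E] [InnerProductSpace ℝ E] [FiniteDimensional ℝ E]
  [MeasurableSpace E] [BorelSpace E] {μ : Measure E} {V : E → Frame E} {K : ℝ}

/-- Each of the vector fields constituting the field of frames `V` has a weak divergence with
respect to `μ`, bounded by `K`. -/
structure HasDivergenceBound (μ : Measure E) (V : E → Frame E) (K : ℝ) : Prop where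
  integrable : Integrable V μ
  exists_hasWeakDivergence : ∀ i, ∃ a : E → ℝ, (∀ᵐ y ∂μ, |a y| ≤ K) ∧
    HasWeakDivergence μ (fun y ↦ V y i) a

/-- The heat flow of the pair of measures `(μ, V μ)`. -/
noncomputable def heatPair (μ : Measure E) (V : E → Frame E) : ℝ × E → ℝ × Frame E :=
  heatExtension μ fun y ↦ (1, V y)

variable [IsFiniteMeasure μ] {R : ℝ} {t : ℝ} {z : ℝ × E}

section

variable (hR : ∀ᵐ y ∂μ, ‖y‖ ≤ R) (hV : Integrable V μ)
include hV

omit [FiniteDimensional ℝ E] [BorelSpace E] in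
lemma integrable_toLp_one_prodMk : Integrable (fun y ↦ WithLp.toLp 2 ((1 : ℝ), V y)) μ :=
  (WithLp.prodContinuousLinearEquiv 2 ℝ ℝ (Frame E)).symm.toContinuousLinearMap.integrable_comp
    ((integrable_const 1).prodMk hV)

include hR

lemma heatPair_eq (hz : z ∈ upperHalfSpace E) :
    heatPair μ V z = (heatDensity μ z, heatExtension μ V z) :=
  have hint : Integrable (fun y ↦ ((1 : ℝ), V y)) μ := (integrable_const 1).prodMk hV
  Prod.ext (map_heatExtension hR hint (.fst ℝ ℝ (Frame E)) hz)
    (map_heatExtension hR hint (.snd ℝ ℝ (Frame E)) hz)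

lemma contDiffOn_heatPair : ContDiffOn ℝ 2 (heatPair μ V) (upperHalfSpace E) :=
  contDiffOn_heatExtension hR ((integrable_const 1).prodMk hV) 2

lemma toLp_heatPair (hz : z ∈ upperHalfSpace E) :
    WithLp.toLp 2 (heatPair μ V z) = heatExtension μ (fun y ↦ WithLp.toLp 2 ((1 : ℝ), V y)) z :=
  map_heatExtension hR ((integrable_const 1).prodMk hV)
    (WithLp.prodContinuousLinearEquiv 2 ℝ ℝ (Frame E)).symm.toContinuousLinearMap hz

lemma integrable_norm_toLp_heatPair (ht : 0 < t) :
    Integrable fun x ↦ ‖WithLp.toLp 2 (heatPair μ V (t, x))‖ := by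
  simp_rw [toLp_heatPair hR hV (z := (t, _)) ht]
  exact (integrable_heatExtension (integrable_toLp_one_prodMk hV) ht).norm

lemma integral_norm_toLp_heatPair_le (ht : 0 < t) :
    ∫ x, ‖WithLp.toLp 2 (heatPair μ V (t, x))‖ ≤ ∫ y, ‖WithLp.toLp 2 ((1 : ℝ), V y)‖ ∂μ := by
  simp_rw [toLp_heatPair hR hV (z := (t, _)) ht]
  exact integral_norm_heatExtension_le (integrable_toLp_one_prodMk hV) ht

end

lemma HasDivergenceBound.abs_sum_inner_fderiv_heatPair_le (hV : HasDivergenceBound μ V K)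
    (hR : ∀ᵐ y ∂μ, ‖y‖ ≤ R) (hz : z ∈ upperHalfSpace E) (i : Fin (finrank ℝ E)) :
    |∑ j, ⟪(fderiv ℝ (heatPair μ V) z (0, stdOrthonormalBasis ℝ E j)).2 i,
      stdOrthonormalBasis ℝ E j⟫| ≤ K * heatDensity μ z := by
  obtain ⟨a, ha, hdiv⟩ := hV.exists_hasWeakDivergence i
  let L : ℝ × Frame E →L[ℝ] E := (PiLp.proj 2 (fun _ ↦ E) i).comp (.snd ℝ ℝ (Frame E))
  have hcomp (v : ℝ × E) : (fderiv ℝ (heatPair μ V) z v).2 i =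
      fderiv ℝ (heatExtension μ fun y ↦ V y i) z v :=
    map_fderiv_heatExtension hR ((integrable_const 1).prodMk hV.integrable) L hz v
  have hVi : Integrable (fun y ↦ V y i) μ :=
    (PiLp.proj (𝕜 := ℝ) 2 (fun _ ↦ E) i).integrable_comp hV.integrable
  simp_rw [hcomp]
  rw [sum_inner_fderiv_heatExtension hR hVi hdiv hz]
  exact abs_heatExtension_le_mul_heatDensity hR ha hz

variable [NeZero μ] {η : Frame E → ℝ} {M κ : ℝ}

section

variable (hη : ContDiff ℝ 2 η) (hR : ∀ᵐ y ∂μ, ‖y‖ ≤ R) (hV : Integrable V μ)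
include hη hR hV

lemma contDiffOn_cutoffGauge_heatPair :
    ContDiffOn ℝ 2 (fun z ↦ cutoffGauge η κ (heatPair μ V z)) (upperHalfSpace E) := fun z hz ↦ by
  have hΦ : ContDiffAt ℝ 2 (cutoffGauge η κ) (heatPair μ V z) := by
    rw [heatPair_eq hR hV hz]
    exact contDiffAt_cutoffGauge hη (heatDensity_pos hR hz) _
  exact hΦ.comp_contDiffWithinAt z (contDiffOn_heatPair hR hV z hz)

lemma contDiffAt_bellmanFunction_heatPair {c : ℝ} (hz : z ∈ upperHalfSpace E) :
    ContDiffAt ℝ 2 (bellmanFunction η κ c) (heatPair μ V z) := by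
  rw [heatPair_eq hR hV hz]
  exact contDiffAt_bellmanFunction hη (heatDensity_pos hR hz) _

end

variable (hη : IsCutoff η (stdFrame E) M) (hR : ∀ᵐ y ∂μ, ‖y‖ ≤ R) (hκ : 0 ≤ κ)
include hη hR hκ

lemma IsCutoff.isHeatSubsolution_heatPair (hκ1 : κ ≤ 1) (hV : HasDivergenceBound μ V K) :
    IsHeatSubsolution fun z ↦
      bellmanFunction η κ (bellmanCoefficient E M) (heatPair μ V z) +
        24 * finrank ℝ E * K ^ 2 * κ * (z.1 * heatDensity μ z) := by
  set Φ := bellmanFunction η κ (bellmanCoefficient E M)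
  have hΦ {z} (hz : z ∈ upperHalfSpace E) : ContDiffAt ℝ 2 Φ (heatPair μ V z) :=
    contDiffAt_bellmanFunction_heatPair hη.contDiff hR hV.integrable hz
  refine isHeatSubsolution_add_const_mul_time_mul
    (fun z hz ↦ (hΦ hz).comp_contDiffWithinAt z (contDiffOn_heatPair hR hV.integrable z hz))
    (contDiffOn_heatExtension hR (integrable_const 1) 2)
    (fun z hz ↦ fderiv_heatExtension_time hR (integrable_const 1) hz) fun z hz ↦ ?_
  have hpair := heatPair_eq hR hV.integrable hz
  have hle := hη.sum_fderiv_fderiv_bellmanFunction_le hκ hκ1 (heatDensity_pos hR hz)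
    (heatExtension μ V z) (hV.abs_sum_inner_fderiv_heatPair_le hR hz)
  rw [← hpair] at hle
  exact (spaceLaplacian_comp_heatExtension hR ((integrable_const 1).prodMk hV.integrable) hz
    (hΦ hz)).trans_le (add_le_add_right hle _)

section

variable (hV : Integrable V μ) (ht : 0 < t)
include hV ht

lemma IsCutoff.cutoffGauge_heatPair_nonneg (x : E) :
    0 ≤ cutoffGauge η κ (heatPair μ V (t, x)) := by
  rw [heatPair_eq hR hV (z := (t, x)) ht]
  exact hη.cutoffGauge_nonneg hκ (heatDensity_pos hR (z := (t, x)) ht).le _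

lemma IsCutoff.cutoffGauge_heatPair_le (x : E) :
    cutoffGauge η κ (heatPair μ V (t, x)) ≤ bellmanGauge κ (heatDensity μ (t, x)) := by
  rw [heatPair_eq hR hV (z := (t, x)) ht]
  exact hη.cutoffGauge_le hκ (heatDensity_pos hR (z := (t, x)) ht).le _

lemma IsCutoff.cutoffGauge_heatPair_le_heatDensity (x : E) :
    cutoffGauge η κ (heatPair μ V (t, x)) ≤ heatDensity μ (t, x) :=
  (hη.cutoffGauge_heatPair_le hR hκ hV ht x).trans
    (bellmanGauge_le (heatDensity_pos hR (z := (t, x)) ht).le)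

lemma IsCutoff.integrable_cutoffGauge_heatPair :
    Integrable fun x ↦ cutoffGauge η κ (heatPair μ V (t, x)) := by
  refine (integrable_heatDensity (μ := μ) ht).mono' (contDiff_slice
    (contDiffOn_cutoffGauge_heatPair hη.contDiff hR hV) ht).continuous.aestronglyMeasurable
    (.of_forall fun x ↦ ?_)
  rw [Real.norm_of_nonneg (hη.cutoffGauge_heatPair_nonneg hR hκ hV ht x)]
  exact hη.cutoffGauge_heatPair_le_heatDensity hR hκ hV ht x

lemma IsCutoff.integral_cutoffGauge_heatPair_le {S : ℝ} (hS : ∀ x, heatDensity μ (t, x) ≤ S) :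
    ∫ x, cutoffGauge η κ (heatPair μ V (t, x)) ≤ (1 - (1 + S) ^ (-κ)) * μ.real Set.univ := by
  calc ∫ x, cutoffGauge η κ (heatPair μ V (t, x))
      ≤ ∫ x, (1 - (1 + S) ^ (-κ)) * heatDensity μ (t, x) := by
        refine integral_mono (hη.integrable_cutoffGauge_heatPair hR hκ hV ht)
          ((integrable_heatDensity (μ := μ) ht).const_mul _) fun x ↦ ?_
        have hpos : 0 < heatDensity μ (t, x) := heatDensity_pos hR ht
        refine (hη.cutoffGauge_heatPair_le hR hκ hV ht x).trans ?_
        rw [bellmanGauge, mul_comm]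
        gcongr ?_ * _
        exact sub_le_sub_left (Real.rpow_le_rpow_of_nonpos (by linarith) (by linarith [hS x])
          (by linarith)) _
    _ = (1 - (1 + S) ^ (-κ)) * μ.real Set.univ := by
        rw [integral_const_mul, integral_heatDensity ht]

variable {c : ℝ}

lemma IsCutoff.integrable_bellmanFunction_heatPair :
    Integrable fun x ↦ bellmanFunction η κ c (heatPair μ V (t, x)) :=
  (hη.integrable_cutoffGauge_heatPair hR hκ hV ht).sub
    ((integrable_norm_toLp_heatPair hR hV ht).const_mul c)

lemma IsCutoff.integral_bellmanFunction_heatPair :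
    ∫ x, bellmanFunction η κ c (heatPair μ V (t, x)) =
      (∫ x, cutoffGauge η κ (heatPair μ V (t, x))) -
        c * ∫ x, ‖WithLp.toLp 2 (heatPair μ V (t, x))‖ := by
  rw [← integral_const_mul, ← integral_sub (hη.integrable_cutoffGauge_heatPair hR hκ hV ht)
    ((integrable_norm_toLp_heatPair hR hV ht).const_mul c)]
  rfl

lemma IsCutoff.integral_abs_bellmanFunction_heatPair_le (hc : 0 ≤ c) :
    ∫ x, |bellmanFunction η κ c (heatPair μ V (t, x))| ≤
      μ.real Set.univ + c * ∫ y, ‖WithLp.toLp 2 ((1 : ℝ), V y)‖ ∂μ := by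
  have hJ := (integrable_norm_toLp_heatPair hR hV ht).const_mul c
  calc ∫ x, |bellmanFunction η κ c (heatPair μ V (t, x))|
      ≤ ∫ x, (heatDensity μ (t, x) + c * ‖WithLp.toLp 2 (heatPair μ V (t, x))‖) := by
        refine integral_mono (hη.integrable_bellmanFunction_heatPair hR hκ hV ht).abs
          ((integrable_heatDensity ht).add hJ) fun x ↦ (abs_sub _ _).trans ?_
        rw [abs_of_nonneg (hη.cutoffGauge_heatPair_nonneg hR hκ hV ht x),
          abs_of_nonneg (mul_nonneg hc (norm_nonneg _))]
        exact add_le_add_left (hη.cutoffGauge_heatPair_le_heatDensity hR hκ hV ht x) _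
    _ = μ.real Set.univ + c * ∫ x, ‖WithLp.toLp 2 (heatPair μ V (t, x))‖ := by
        rw [integral_add (integrable_heatDensity ht) hJ, integral_heatDensity ht,
          integral_const_mul]
    _ ≤ μ.real Set.univ + c * ∫ y, ‖WithLp.toLp 2 ((1 : ℝ), V y)‖ ∂μ := by
        gcongr
        exact integral_norm_toLp_heatPair_le hR hV ht

end

lemma IsCutoff.integral_abs_subsolution_heatPair_le {c c' : ℝ} (hV : Integrable V μ) (ht : 0 < t)
    (hc : 0 ≤ c) (hc' : 0 ≤ c') :
    ∫ x, |bellmanFunction η κ c (heatPair μ V (t, x)) + c' * (t * heatDensity μ (t, x))| ≤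
      μ.real Set.univ + c * (∫ y, ‖WithLp.toLp 2 ((1 : ℝ), V y)‖ ∂μ) +
        c' * (t * μ.real Set.univ) := by
  have hΦ := hη.integrable_bellmanFunction_heatPair hR hκ hV ht (c := c)
  have hU : Integrable fun x ↦ c' * (t * heatDensity μ (t, x)) :=
    ((integrable_heatDensity ht).const_mul t).const_mul c'
  calc ∫ x, |bellmanFunction η κ c (heatPair μ V (t, x)) + c' * (t * heatDensity μ (t, x))|
      ≤ ∫ x, (|bellmanFunction η κ c (heatPair μ V (t, x))| +
          c' * (t * heatDensity μ (t, x))) := by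
        refine integral_mono (hΦ.add hU).abs (hΦ.abs.add hU) fun x ↦
          (abs_add_le _ _).trans_eq ?_
        have := heatDensity_pos hR (z := (t, x)) ht
        rw [abs_of_nonneg (show 0 ≤ c' * (t * heatDensity μ (t, x)) by positivity)]
    _ = (∫ x, |bellmanFunction η κ c (heatPair μ V (t, x))|) + c' * (t * μ.real Set.univ) := by
        rw [integral_add hΦ.abs hU, integral_const_mul, integral_const_mul,
          integral_heatDensity ht]
    _ ≤ _ := by
        gcongr
        exact hη.integral_abs_bellmanFunction_heatPair_le hR hκ hV ht hc

lemma IsCutoff.integral_bellmanFunction_heatPair_mono (hκ1 : κ ≤ 1) (hV : HasDivergenceBound μ V K)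
    {δ T : ℝ} (hδ : 0 < δ) (hδT : δ ≤ T) :
    ∫ x, bellmanFunction η κ (bellmanCoefficient E M) (heatPair μ V (δ, x)) ≤
      (∫ x, bellmanFunction η κ (bellmanCoefficient E M) (heatPair μ V (T, x))) +
        24 * finrank ℝ E * K ^ 2 * κ * ((T - δ) * μ.real Set.univ) := by
  set Φ := bellmanFunction η κ (bellmanCoefficient E M)
  set c' := 24 * finrank ℝ E * K ^ 2 * κ
  have hc' : 0 ≤ c' := by positivity
  have hΦ {t} (ht : 0 < t) : Integrable fun x ↦ Φ (heatPair μ V (t, x)) :=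
    hη.integrable_bellmanFunction_heatPair hR hκ hV.integrable ht
  have hU {t} (ht : 0 < t) : Integrable fun x ↦ c' * (t * heatDensity μ (t, x)) :=
    ((integrable_heatDensity ht).const_mul t).const_mul c'
  have hint {t} (ht : 0 < t) :
      ∫ x, (Φ (heatPair μ V (t, x)) + c' * (t * heatDensity μ (t, x))) =
        (∫ x, Φ (heatPair μ V (t, x))) + c' * (t * μ.real Set.univ) := by
    rw [integral_add (hΦ ht) (hU ht), integral_const_mul, integral_const_mul,
      integral_heatDensity ht]
  have hmono := (hη.isHeatSubsolution_heatPair hR hκ hκ1 hV).integral_slice_le hδ hδT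
    (B := μ.real Set.univ + bellmanCoefficient E M * (∫ y, ‖WithLp.toLp 2 ((1 : ℝ), V y)‖ ∂μ) +
      c' * (T * μ.real Set.univ))
    (fun t ht ↦ (hΦ (hδ.trans_le ht.1)).add (hU (hδ.trans_le ht.1))) fun t ht ↦ ?_
  · rw [hint hδ, hint (hδ.trans_le hδT)] at hmono
    linarith
  · refine (hη.integral_abs_subsolution_heatPair_le hR hκ hV.integrable (hδ.trans_le ht.1)
      (bellmanCoefficient_nonneg hη.bound_nonneg) hc').trans ?_
    gcongr
    exact ht.2

end FrameFlow

section RealLimits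

lemma exists_mem_forall_le_add_of_bddAbove {ι : Type*} {f : ι → ℝ} {s : Set ι}
    (hs : s.Nonempty) (hf : BddAbove (f '' s)) {ε : ℝ} (hε : 0 < ε) :
    ∃ a ∈ s, ∀ b ∈ s, f b ≤ f a + ε := by
  obtain ⟨_, ⟨a, ha, rfl⟩, hlt⟩ := exists_lt_of_lt_csSup (hs.image f) (sub_lt_self _ hε)
  exact ⟨a, ha, fun b hb ↦ (le_csSup hf ⟨b, hb, rfl⟩).trans (sub_le_iff_le_add.1 hlt.le)⟩

lemma le_of_forall_one_sub_rpow_mul_le {a b : ℝ} {f : ℝ → ℝ} (hf : Tendsto f (𝓝[>] 0) (𝓝 b))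
    (h : ∀ κ ∈ Set.Ioc (0 : ℝ) 1, ∀ N : ℝ, 0 ≤ N → (1 - (1 + N) ^ (-κ)) * a ≤ f κ) : a ≤ b := by
  have hle (κ : ℝ) (hκ : κ ∈ Set.Ioc (0 : ℝ) 1) : a ≤ f κ := by
    have hlim : Tendsto (fun N : ℝ ↦ (1 - (1 + N) ^ (-κ)) * a) atTop (𝓝 ((1 - 0) * a)) :=
      (tendsto_const_nhds.sub ((tendsto_rpow_neg_atTop hκ.1).comp
        (tendsto_atTop_add_const_left _ 1 tendsto_id))).mul_const a
    rw [sub_zero, one_mul] at hlim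
    exact le_of_tendsto hlim ((eventually_ge_atTop 0).mono (h κ hκ))
  exact ge_of_tendsto hf (mem_of_superset (Ioc_mem_nhdsGT one_pos) hle)

end RealLimits

lemma exists_measure_lt_forall_le_norm_sub {E : Type*} [SeminormedAddCommGroup E]
    [MeasurableSpace E] [OpensMeasurableSpace E] {ν : Measure E} [ν.OuterRegular] {S : Set E}
    (hS : IsCompact S) {r : ℝ≥0∞} (hr : ν S < r) :
    ∃ U, MeasurableSet U ∧ ν U < r ∧ ∃ ρ > 0, ∀ y ∈ S, ∀ x, x ∉ U → ρ ≤ ‖x - y‖ := by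
  obtain ⟨U, hSU, hUo, hUr⟩ := S.exists_isOpen_lt_of_lt r hr
  obtain ⟨ρ, hρ, hthick⟩ := hS.exists_thickening_subset_open hUo hSU
  refine ⟨U, hUo.measurableSet, hUr, ρ, hρ, fun y hy x hx ↦ le_of_not_gt fun hlt ↦ hx (hthick ?_)⟩
  exact mem_thickening_iff.2 ⟨y, hy, (dist_eq_norm x y).trans_lt hlt⟩

section NullSets

variable {E : Type*} [NormedAddCommGroup E] [InnerProductSpace ℝ E] [FiniteDimensional ℝ E]
  [MeasurableSpace E] [BorelSpace E] {μ : Measure E} [IsFiniteMeasure μ]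
  {V : E → Frame E} {K R : ℝ} (hR : ∀ᵐ y ∂μ, ‖y‖ ≤ R)
include hR

section

variable [NeZero μ] {η : Frame E → ℝ} {M κ : ℝ} (hη : IsCutoff η (stdFrame E) M)
include hη

section

variable (hκ : 0 ≤ κ) (hV : Integrable V μ) {N : ℝ} (hN : 0 ≤ N) {S : Set E}
include hκ hV hN

lemma IsCutoff.le_cutoffGauge_heatPair (hS : MeasurableSet S) {U : Set E} {ρ t : ℝ} (hρ : 0 < ρ)
    (hSU : ∀ y ∈ S, ∀ x, x ∉ U → ρ ≤ ‖x - y‖) (ht : 0 < t) (x : E) :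
    (1 - (1 + N) ^ (-κ)) * (heatDensity (μ.restrict S) (t, x) -
        8 * t * 2 ^ ((finrank ℝ E : ℝ) / 2) / ρ ^ 2 * heatDensity (μ.restrict S) (2 * t, x) -
        U.indicator (fun _ ↦ N) x - 4 * ‖heatExtension μ (fun y ↦ V y - stdFrame E) (t, x)‖) ≤
      cutoffGauge η κ (heatPair μ V (t, x)) := by
  have hfactor : 0 ≤ 1 - (1 + N) ^ (-κ) := sub_nonneg.2 (one_add_rpow_neg_le_one hκ hN)
  have hdensity := heatDensity_restrict_sub_le_indicator hR hS hρ hSU ht x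
  by_cases hx : x ∈ U
  · rw [Set.indicator_of_mem hx] at hdensity ⊢
    have hdeviation : heatExtension μ V (t, x) - heatDensity μ (t, x) • stdFrame E =
        heatExtension μ (fun y ↦ V y - stdFrame E) (t, x) := by
      have hlin := map_heatExtension hR ((integrable_const (1 : ℝ)).prodMk hV)
        (.snd ℝ ℝ (Frame E) - (ContinuousLinearMap.fst ℝ ℝ (Frame E)).smulRight (stdFrame E))
        (z := (t, x)) ht
      rw [show heatExtension μ (fun y ↦ ((1 : ℝ), V y)) (t, x) = _ from
        heatPair_eq hR hV (z := (t, x)) ht] at hlin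
      simpa using hlin
    rw [heatPair_eq hR hV (z := (t, x)) ht, ← hdeviation]
    refine le_trans ?_ (hη.le_cutoffGauge hκ hN (heatDensity_pos hR (z := (t, x)) ht) _)
    gcongr
  · rw [Set.indicator_of_notMem hx] at hdensity ⊢
    refine (mul_nonpos_of_nonneg_of_nonpos hfactor ?_).trans
      (hη.cutoffGauge_heatPair_nonneg hR hκ hV ht x)
    linarith [norm_nonneg (heatExtension μ (fun y ↦ V y - stdFrame E) (t, x))]

lemma IsCutoff.le_integral_cutoffGauge_heatPair (hS : MeasurableSet S) {U : Set E}
    (hU : MeasurableSet U) (hUtop : volume U ≠ ∞) {ρ t : ℝ} (hρ : 0 < ρ)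
    (hSU : ∀ y ∈ S, ∀ x, x ∉ U → ρ ≤ ‖x - y‖) (ht : 0 < t) :
    (1 - (1 + N) ^ (-κ)) * (μ.real S -
        8 * t * 2 ^ ((finrank ℝ E : ℝ) / 2) / ρ ^ 2 * μ.real S -
        volume.real U * N - 4 * ∫ y, ‖V y - stdFrame E‖ ∂μ) ≤
      ∫ x, cutoffGauge η κ (heatPair μ V (t, x)) := by
  set θ := 8 * t * 2 ^ ((finrank ℝ E : ℝ) / 2) / ρ ^ 2
  have hdensity {s : ℝ} (hs : 0 < s) := integrable_heatDensity (μ := μ.restrict S) hs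
  have hmass {s : ℝ} (hs : 0 < s) : ∫ x, heatDensity (μ.restrict S) (s, x) = μ.real S := by
    rw [integral_heatDensity hs, measureReal_restrict_apply_univ]
  have ht2 : 0 < 2 * t := by positivity
  have hN_int : Integrable (U.indicator fun _ : E ↦ N) :=
    (integrable_indicator_iff hU).2 (integrableOn_const hUtop)
  have hVsub : Integrable (fun y ↦ V y - stdFrame E) μ := hV.sub (integrable_const _)
  have hdev := (integrable_heatExtension hVsub ht).norm
  have hint₁ := (hdensity ht).sub ((hdensity ht2).const_mul θ)
  have hint₂ := hint₁.sub hN_int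
  have hfactor : 0 ≤ 1 - (1 + N) ^ (-κ) := sub_nonneg.2 (one_add_rpow_neg_le_one hκ hN)
  refine le_trans ?_ (integral_mono ((hint₂.sub (hdev.const_mul 4)).const_mul _)
    (hη.integrable_cutoffGauge_heatPair hR hκ hV ht)
    (hη.le_cutoffGauge_heatPair hR hκ hV hN hS hρ hSU ht))
  rw [integral_const_mul]
  gcongr
  rw [integral_sub' hint₂ (hdev.const_mul 4), integral_sub' hint₁ hN_int,
    integral_sub' (hdensity ht) ((hdensity ht2).const_mul θ), integral_const_mul,
    integral_const_mul, hmass ht, hmass ht2, integral_indicator_const _ hU, smul_eq_mul]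
  gcongr
  exact integral_norm_heatExtension_le hVsub ht

lemma IsCutoff.exists_le_integral_cutoffGauge_heatPair (hS : IsCompact S) (hS₀ : volume S = 0)
    {ε T : ℝ} (hε : 0 < ε) (hT : 0 < T) :
    ∃ δ ∈ Set.Ioc 0 T,
      (1 - (1 + N) ^ (-κ)) * (μ.real S - 4 * (∫ y, ‖V y - stdFrame E‖ ∂μ) - ε) ≤
        ∫ x, cutoffGauge η κ (heatPair μ V (δ, x)) := by
  obtain ⟨U, hU, hUlt, ρ, hρ, hSU⟩ := exists_measure_lt_forall_le_norm_sub hS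
    (r := .ofReal (ε / (2 * (N + 1)))) (by rw [hS₀, ENNReal.ofReal_pos]; positivity)
  have hU_le : volume.real U * N ≤ ε / 2 := by
    calc volume.real U * N ≤ ε / (2 * (N + 1)) * (N + 1) := by
          gcongr
          · exact ENNReal.toReal_le_of_le_ofReal (by positivity) hUlt.le
          · linarith
      _ = ε / 2 := by field_simp
  set θ : ℝ → ℝ := fun t ↦ 8 * t * 2 ^ ((finrank ℝ E : ℝ) / 2) / ρ ^ 2 * μ.real S
  have hθ : Tendsto θ (𝓝[>] 0) (𝓝 0) := by
    have hcont : Continuous θ := by fun_prop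
    exact (by simpa [θ] using hcont.tendsto 0 : Tendsto θ (𝓝 0) (𝓝 0)).mono_left
      nhdsWithin_le_nhds
  obtain ⟨δ, hδ, hδT⟩ :=
    ((hθ.eventually_le_const (half_pos hε)).and (Ioc_mem_nhdsGT hT)).exists
  refine ⟨δ, hδT, le_trans ?_ (hη.le_integral_cutoffGauge_heatPair hR hκ hV hN hS.measurableSet hU
    (hUlt.trans ENNReal.ofReal_lt_top).ne hρ hSU hδT.1)⟩
  have hfactor : 0 ≤ 1 - (1 + N) ^ (-κ) := sub_nonneg.2 (one_add_rpow_neg_le_one hκ hN)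
  gcongr ?_ * ?_
  linarith

end

lemma IsCutoff.integral_cutoffGauge_heatPair_le_add (hκ : 0 ≤ κ) (hκ1 : κ ≤ 1)
    (hV : HasDivergenceBound μ V K) {δ T : ℝ} (hδ : 0 < δ) (hδT : δ ≤ T) :
    ∫ x, cutoffGauge η κ (heatPair μ V (δ, x)) ≤
      (1 - (1 + (4 * Real.pi * T) ^ (-(finrank ℝ E : ℝ) / 2) * μ.real Set.univ) ^ (-κ)) *
          μ.real Set.univ +
        bellmanCoefficient E M * ((∫ x, ‖WithLp.toLp 2 (heatPair μ V (δ, x))‖) -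
          ∫ x, ‖WithLp.toLp 2 (heatPair μ V (T, x))‖) +
        24 * finrank ℝ E * K ^ 2 * κ * ((T - δ) * μ.real Set.univ) := by
  have hT := hδ.trans_le hδT
  have hmono := hη.integral_bellmanFunction_heatPair_mono hR hκ hκ1 hV hδ hδT
  rw [hη.integral_bellmanFunction_heatPair hR hκ hV.integrable hδ,
    hη.integral_bellmanFunction_heatPair hR hκ hV.integrable hT] at hmono
  have hfinal := hη.integral_cutoffGauge_heatPair_le hR hκ hV.integrable hT (heatDensity_le μ hT)
  linarith

end

lemma HasDivergenceBound.measureReal_le_of_isCompact (hV : HasDivergenceBound μ V K) {S : Set E}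
    (hS : IsCompact S) (hS₀ : volume S = 0) :
    μ.real S ≤ 4 * ∫ y, ‖V y - stdFrame E‖ ∂μ := by
  obtain rfl | _ := eq_zero_or_neZero μ
  · simp
  obtain ⟨η, M, hη⟩ := exists_isCutoff (stdFrame E)
  set c := bellmanCoefficient E M
  have hc : 0 ≤ c := bellmanCoefficient_nonneg hη.bound_nonneg
  set J : ℝ → ℝ := fun t ↦ ∫ x, ‖WithLp.toLp 2 (heatPair μ V (t, x))‖
  have hJ : BddAbove (J '' Set.Ioc 0 1) := ⟨_, Set.forall_mem_image.2 fun t ht ↦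
    integral_norm_toLp_heatPair_le hR hV.integrable ht.1⟩
  have hle (ε : ℝ) (hε : 0 < ε) :
      μ.real S - 4 * (∫ y, ‖V y - stdFrame E‖ ∂μ) - ε ≤ c * ε := by
    obtain ⟨T, hT, hJT⟩ := exists_mem_forall_le_add_of_bddAbove
      (Set.nonempty_Ioc.2 one_pos) hJ hε
    set D := (4 * Real.pi * T) ^ (-(finrank ℝ E : ℝ) / 2) * μ.real Set.univ
    have hlim : Tendsto (fun κ : ℝ ↦ (1 - (1 + D) ^ (-κ)) * μ.real Set.univ + c * ε +
        24 * finrank ℝ E * K ^ 2 * κ * (1 * μ.real Set.univ)) (𝓝[>] 0) (𝓝 (c * ε)) := by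
      have hcont : Continuous fun κ : ℝ ↦ (1 - (1 + D) ^ (-κ)) * μ.real Set.univ + c * ε +
          24 * finrank ℝ E * K ^ 2 * κ * (1 * μ.real Set.univ) := by
        have : 1 + D ≠ 0 := by have := hT.1; positivity
        fun_prop (disch := assumption)
      simpa using (hcont.tendsto 0).mono_left nhdsWithin_le_nhds
    refine le_of_forall_one_sub_rpow_mul_le hlim fun κ hκ N hN ↦ ?_
    obtain ⟨δ, hδ, hlower⟩ := hη.exists_le_integral_cutoffGauge_heatPair hR hκ.1.le hV.integrable
      hN hS hS₀ hε hT.1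
    refine (hlower.trans
      (hη.integral_cutoffGauge_heatPair_le_add hR hκ.1.le hκ.2 hV hδ.1 hδ.2)).trans ?_
    gcongr
    · exact sub_le_iff_le_add'.2 (hJT δ ⟨hδ.1, hδ.2.trans hT.2⟩)
    · have := hκ.1.le
      positivity
    · linarith [hδ.1, hT.2]
  refine le_of_forall_pos_le_add fun ε hε ↦ ?_
  have hε' := hle (ε / (1 + c)) (by positivity)
  have : ε / (1 + c) + c * (ε / (1 + c)) = ε := by field_simp
  linarith

lemma HasDivergenceBound.measure_le_of_volume_eq_zero (hV : HasDivergenceBound μ V K) {S : Set E}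
    (hS : MeasurableSet S) (hS₀ : volume S = 0) :
    μ S ≤ ENNReal.ofReal (4 * ∫ y, ‖V y - stdFrame E‖ ∂μ) := by
  rw [hS.measure_eq_iSup_isCompact_of_ne_top (measure_ne_top μ S)]
  refine iSup₂_le fun L hLS ↦ iSup_le fun hL ↦ ?_
  rw [← ofReal_measureReal]
  exact ENNReal.ofReal_le_ofReal
    (hV.measureReal_le_of_isCompact hR hL (measure_mono_null hLS hS₀))

end NullSets

lemma isUnifLocDoublingMeasure_of_ball {M : Type*} [PseudoMetricSpace M] [MeasurableSpace M]
    {m : Measure M} {C : ℝ≥0} (h : ∀ x r, 0 < r → m (ball x (2 * r)) ≤ C * m (ball x r)) :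
    IsUnifLocDoublingMeasure m where
  exists_measure_closedBall_le_mul'' := by
    refine ⟨C ^ 2, ?_⟩
    filter_upwards [self_mem_nhdsWithin] with ε hε x
    have hε : 0 < ε := hε
    calc m (closedBall x (2 * ε)) ≤ m (ball x (2 * (2 * ε))) :=
          measure_mono (closedBall_subset_ball (by linarith))
      _ ≤ C * (C * m (ball x ε)) :=
          (h x (2 * ε) (by positivity)).trans (by gcongr; exact h x ε hε)
      _ ≤ ↑(C ^ 2) * m (closedBall x ε) := by
          rw [← mul_assoc, ← sq, ENNReal.coe_pow]
          gcongr
          exact ball_subset_closedBall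

section AbsolutelyContinuous

variable {E : Type*} [NormedAddCommGroup E] [InnerProductSpace ℝ E]

lemma norm_frame_le_sum (ζ : Frame E) : ‖ζ‖ ≤ ∑ i, ‖ζ i‖ := by
  rw [PiLp.norm_eq_of_L2]
  exact Real.sqrt_le_iff.2
    ⟨by positivity, Finset.sum_sq_le_sq_sum_of_nonneg fun i _ ↦ norm_nonneg _⟩

variable [MeasurableSpace E]

lemma hasDivergenceBound_toLp {μ : Measure E} {X : Fin (finrank ℝ E) → Lp E 1 μ}
    {a : Fin (finrank ℝ E) → Lp ℝ ∞ μ}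
    (h : ∀ i, HasWeakDivergence μ (X i) (a i)) :
    HasDivergenceBound μ (fun y ↦ WithLp.toLp 2 fun i ↦ X i y) (∑ i, ‖a i‖) where
  integrable :=
    (PiLp.continuousLinearEquiv 2 ℝ fun _ ↦ E).symm.toContinuousLinearMap.integrable_comp
      (Integrable.of_eval fun i ↦ L1.integrable_coeFn (X i))
  exists_hasWeakDivergence i := by
    refine ⟨a i, ?_, h i⟩
    filter_upwards [ae_norm_le_norm_lpTop (a i)] with y hy
    exact hy.trans (Finset.single_le_sum (f := fun i ↦ ‖a i‖) (fun _ _ ↦ norm_nonneg _)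
      (Finset.mem_univ i))

variable [FiniteDimensional ℝ E] [BorelSpace E] {m : Measure E} [IsFiniteMeasureOnCompacts m]
  [m.IsOpenPosMeasure] [IsUnifLocDoublingMeasure m] {p C Λ : ℝ}

lemma SatisfiesPoincare.exists_hasDivergenceBound (hm : SatisfiesPoincare m p C Λ) (hp : 1 ≤ p)
    (hC : 0 ≤ C) (hΛ : 1 ≤ Λ) (z : E) (R : ℝ) {ε : ℝ} (hε : 0 < ε) :
    ∃ V K, HasDivergenceBound (m.restrict (ball z R)) V K ∧
      ∫ y in ball z R, ‖V y - stdFrame E‖ ∂m ≤ ε := by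
  set μ := m.restrict (ball z R)
  have hfinite : IsFiniteMeasure μ := isFiniteMeasure_restrict.2 measure_ball_lt_top.ne
  set d := finrank ℝ E
  have happrox (i : Fin d) := (hm.dense_setOf_hasWeakDivergence hp hC hΛ z R).exists_dist_lt
    (Lp.const 1 μ (stdOrthonormalBasis ℝ E i)) (show 0 < ε / (d + 1) by positivity)
  choose X hX hdist using happrox
  choose a ha using hX
  refine ⟨_, _, hasDivergenceBound_toLp ha, ?_⟩
  have hint (i : Fin d) : Integrable (fun y ↦ ‖X i y - stdOrthonormalBasis ℝ E i‖) μ :=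
    ((L1.integrable_coeFn (X i)).sub (integrable_const _)).norm
  have hdist_eq (i : Fin d) : ∫ y, ‖X i y - stdOrthonormalBasis ℝ E i‖ ∂μ =
      dist (Lp.const 1 μ (stdOrthonormalBasis ℝ E i)) (X i) := by
    rw [dist_comm, L1.dist_eq_integral_dist]
    refine integral_congr_ae ?_
    filter_upwards [Lp.coeFn_const (p := 1) (μ := μ) (stdOrthonormalBasis ℝ E i)] with y hy
    rw [hy, dist_eq_norm, Function.const_apply]
  calc ∫ y, ‖WithLp.toLp 2 (fun i ↦ X i y) - stdFrame E‖ ∂μ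
      ≤ ∫ y, ∑ i, ‖X i y - stdOrthonormalBasis ℝ E i‖ ∂μ :=
        integral_mono_of_nonneg (.of_forall fun y ↦ norm_nonneg _)
          (integrable_finsetSum _ fun i _ ↦ hint i) (.of_forall fun y ↦ norm_frame_le_sum _)
    _ = ∑ i, dist (Lp.const 1 μ (stdOrthonormalBasis ℝ E i)) (X i) := by
        rw [integral_finsetSum _ fun i _ ↦ hint i]
        exact Finset.sum_congr rfl fun i _ ↦ hdist_eq i
    _ ≤ ∑ _i : Fin d, ε / (d + 1) := Finset.sum_le_sum fun i _ ↦ (hdist i).le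
    _ ≤ ε := by
        rw [Finset.sum_const, Finset.card_univ, Fintype.card_fin, nsmul_eq_mul, mul_div_assoc',
          div_le_iff₀ (by positivity)]
        linarith

lemma SatisfiesPoincare.restrict_ball_apply_eq_zero (hm : SatisfiesPoincare m p C Λ) (hp : 1 ≤ p)
    (hC : 0 ≤ C) (hΛ : 1 ≤ Λ) (R : ℝ) {S : Set E} (hS : MeasurableSet S) (hS₀ : volume S = 0) :
    m.restrict (ball 0 R) S = 0 := by
  have hfinite : IsFiniteMeasure (m.restrict (ball 0 R)) :=
    isFiniteMeasure_restrict.2 measure_ball_lt_top.ne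
  have hR : ∀ᵐ y ∂m.restrict (ball 0 R), ‖y‖ ≤ R := by
    filter_upwards [ae_restrict_mem measurableSet_ball] with y hy
    exact (mem_ball_zero_iff.1 hy).le
  refine le_antisymm (ENNReal.le_of_forall_pos_le_add fun ε hε _ ↦ ?_) zero_le
  obtain ⟨V, K, hV, hVε⟩ := hm.exists_hasDivergenceBound hp hC hΛ 0 R
    (show 0 < (ε : ℝ) / 4 by positivity)
  refine (hV.measure_le_of_volume_eq_zero hR hS hS₀).trans ?_
  rw [zero_add, ENNReal.ofReal_le_iff_le_toReal ENNReal.coe_ne_top, ENNReal.coe_toReal]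
  linarith

theorem stmt18_general (hm : SatisfiesPoincare m p C Λ) (hp : 1 ≤ p) (hC : 0 ≤ C) (hΛ : 1 ≤ Λ) :
    m ≪ volume := by
  refine .mk fun S hS hS₀ ↦ ?_
  have hcover : S = ⋃ R : ℕ, S ∩ ball 0 R := by
    rw [← Set.inter_iUnion, iUnion_ball_nat, Set.inter_univ]
  rw [hcover, measure_iUnion_null_iff]
  intro R
  rw [← Measure.restrict_apply hS]
  exact hm.restrict_ball_apply_eq_zero hp hC hΛ R hS hS₀

end AbsolutelyContinuous

/-- If a Radon measure `m` on `ℝⁿ` with full support is doubling and satisfies a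
`(1,p)`-Poincaré inequality (for Lipschitz functions and their local Lipschitz constants),
then `m` is absolutely continuous with respect to the Lebesgue measure. -/
theorem stmt18 (n : ℕ) (p : ℝ) (hp : 1 < p)
    (m : Measure (EuclideanSpace ℝ (Fin n)))
    [IsFiniteMeasureOnCompacts m] [m.Regular] [m.IsOpenPosMeasure]
    (CD : ℝ) (hCD : 0 < CD)
    (hdoubling : ∀ (x : EuclideanSpace ℝ (Fin n)) (r : ℝ), 0 < r →
      m (Metric.ball x (2 * r)) ≤ ENNReal.ofReal CD * m (Metric.ball x r))
    (C Λ : ℝ) (hC : 0 < C) (hΛ : 1 ≤ Λ)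
    (hpoincare : ∀ f : EuclideanSpace ℝ (Fin n) → ℝ, (∃ K : ℝ≥0, LipschitzWith K f) →
      ∀ (x : EuclideanSpace ℝ (Fin n)) (r : ℝ), 0 < r →
        ⨍ y in Metric.ball x r, |f y - ⨍ z in Metric.ball x r, f z ∂m| ∂m ≤
          C * r * (⨍ y in Metric.ball x (Λ * r), lip f y ^ p ∂m) ^ (1 / p)) :
    m ≪ (volume : Measure (EuclideanSpace ℝ (Fin n))) := by
  have := isUnifLocDoublingMeasure_of_ball (C := CD.toNNReal) hdoubling
  exact stmt18_general hpoincare hp.le hC.le hΛ
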